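/- arXiv:2401.10086 — 2 statements merged into one kernel-verified Lean document; each statement's English description precedes it below -/
import Mathlib

section
/- Let n ≥ m > r ≥ 3 be integers. For every ε > 0 there exists a constant C = C(m, n, r, ε) such that for all real H ≥ 2 the number of m×n matrices with all entries in E(H) and of rank exactly r is at most C·H^{(n−r)(r+1)/2+mr+ε} if 2m ≥ n + r, and at most C·H^{nr+m−r} if 2m < n + r. -/
/-- The set of Egyptian (unit) fractions `1/a` with `a` a nonzero integer, `|a| ≤ H`. -/
def Egyptian (H : ℝ) : Set ℚ := {x : ℚ | ∃ a : ℤ, a ≠ 0 ∧ (|a| : ℝ) ≤ H ∧ x = 1 / (a : ℚ)}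

/-!
A prime that divides the product of the denominators in a linear relation `∑ a i / x i = 0`, but
not `∏ a i`, divides that product at least twice. Hence `∏ x i = b ^ 2 * v` with `v ∣ b * ∏ a i`,
and by the divisor bound `b` determines the `x i` up to `H ^ ε` possibilities: a relation between
`k` unit fractions, with coefficients of polynomial height, has `O(H ^ (k / 2 + ε))` solutions.

A matrix `A` of rank `r` is recovered from `r` of its columns and `r` of its rows that meet in an
invertible minor. Let `s` be the largest number of nonzero coefficients needed to express a row of
the column block through the `r` rows of the minor. A small `s` leaves few possibilities for the
column block, `H ^ s` for each further row. A large `s` forces the entries of every further column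
to satisfy a relation between `s + 1` unit fractions, whose coefficients are of polynomial height by
Cramer's rule. The resulting exponent is linear in `s` for `s ≥ 2`, so that its maximum is attained
at an extreme value of `s`.
-/

open Matrix

/-! ### Cardinalities of fibres and of sets of functions -/

section Counting

variable {ι δ : Type*} [Fintype ι]

theorem ncard_le_mul_ncard {α β : Type*} {T : Set α} {U : Set β} {φ : α → β} {p : ℕ}
    (hT : T.Finite) (hU : U.Finite) (hφ : ∀ a ∈ T, φ a ∈ U)
    (hp : ∀ a ∈ T, {a' ∈ T | φ a' = φ a}.ncard ≤ p) : T.ncard ≤ p * U.ncard := by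
  classical
  lift T to Finset α using hT
  lift U to Finset β using hU
  rw [Set.ncard_coe_finset, Set.ncard_coe_finset]
  refine Finset.card_le_mul_card_image_of_maps_to hφ p fun b _ => ?_
  obtain hempty | ⟨a, ha⟩ := (T.filter (φ · = b)).eq_empty_or_nonempty
  · rw [hempty, Finset.card_empty]
    exact Nat.zero_le p
  · obtain ⟨haT, rfl⟩ := Finset.mem_filter.1 ha
    rw [← Set.ncard_coe_finset, Finset.coe_filter]
    exact hp a haT

theorem ncard_setOf_forall_mem (S : Set δ) :
    {F : ι → δ | ∀ i, F i ∈ S}.ncard = S.ncard ^ Fintype.card ι := by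
  have : {F : ι → δ | ∀ i, F i ∈ S} = Set.univ.pi fun _ => S := by
    ext F
    simp only [Set.mem_ofPred_eq, Set.mem_univ_pi]
  rw [this, Set.ncard, Set.encard_pi_eq_prod_encard, Finset.prod_const, Finset.card_univ,
    Set.ncard]
  exact map_pow ENat.toNatHom _ _

theorem ncard_setOf_comp_eq_le {κ : Type*} [Fintype κ] {f : κ → ι} (hf : Function.Injective f)
    {S : Set δ} (hS : S.Finite) (x : κ → δ) :
    {F : ι → δ | F ∘ f = x ∧ ∀ i, F i ∈ S}.ncard ≤
      S.ncard ^ (Fintype.card ι - Fintype.card κ) := by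
  classical
  let restrict (F : ι → δ) : ↥(Set.range f)ᶜ → δ := fun i => F i
  have injOn : Set.InjOn restrict {F : ι → δ | F ∘ f = x ∧ ∀ i, F i ∈ S} := by
    rintro F ⟨hFx, -⟩ G ⟨hGx, -⟩ h
    funext i
    by_cases hi : i ∈ Set.range f
    · obtain ⟨j, rfl⟩ := hi
      exact congrFun (hFx.trans hGx.symm) j
    · exact congrFun h ⟨i, hi⟩
  refine (Set.ncard_le_ncard_of_injOn restrict (t := {u | ∀ i, u i ∈ S}) (fun F hF i => hF.2 i)
    injOn (Set.Finite.pi' fun _ => hS)).trans_eq ?_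
  rw [ncard_setOf_forall_mem, Fintype.card_compl_set, Set.card_range_of_injective hf]

end Counting

/-! ### The divisor bound -/

theorem natCast_add_one_le_mul_two_rpow {ε : ℝ} (hε : 0 < ε) (e : ℕ) :
    (e : ℝ) + 1 ≤ (1 + 1 / (ε * Real.log 2)) * 2 ^ (ε * e) := by
  have one_le : (1 : ℝ) ≤ 2 ^ (ε * e) := Real.one_le_rpow one_le_two (by positivity)
  have mul_le : ε * Real.log 2 * e ≤ 2 ^ (ε * e) := by
    rw [Real.rpow_def_of_pos two_pos]
    linarith [Real.add_one_le_exp (Real.log 2 * (ε * e))]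
  calc (e : ℝ) + 1 = ε * Real.log 2 * e / (ε * Real.log 2) + 1 := by field_simp
    _ ≤ 2 ^ (ε * e) / (ε * Real.log 2) + 2 ^ (ε * e) := by gcongr
    _ = (1 + 1 / (ε * Real.log 2)) * 2 ^ (ε * e) := by ring

theorem natCast_add_one_le_rpow {ε x : ℝ} (hε : 0 < ε) (hx : 2 ^ (1 / ε) ≤ x) (e : ℕ) :
    (e : ℝ) + 1 ≤ x ^ (ε * e) := by
  have hx₀ : 0 ≤ x := le_trans (by positivity) hx
  have two_le : 2 ≤ x ^ ε := calc
    (2 : ℝ) = (2 ^ (1 / ε)) ^ ε := by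
      rw [← Real.rpow_mul zero_le_two, one_div_mul_cancel hε.ne', Real.rpow_one]
    _ ≤ x ^ ε := by gcongr
  calc (e : ℝ) + 1 ≤ 2 ^ e := by exact_mod_cast Nat.lt_two_pow_self
    _ ≤ (x ^ ε) ^ e := by gcongr
    _ = x ^ (ε * e) := by rw [Real.rpow_mul hx₀, Real.rpow_natCast]

theorem natCast_rpow_eq_prod_primeFactors {n : ℕ} (hn : n ≠ 0) (ε : ℝ) :
    (n : ℝ) ^ ε = ∏ p ∈ n.primeFactors, (p : ℝ) ^ (ε * n.factorization p) := by
  conv_lhs => rw [← Nat.prod_factorization_pow_eq_self hn]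
  rw [Finsupp.prod, Nat.support_factorization, Nat.cast_prod, ← Real.finsetProd_rpow]
  · refine Finset.prod_congr rfl fun p _ => ?_
    rw [Nat.cast_pow, ← Real.rpow_natCast, ← Real.rpow_mul (by positivity), mul_comm]
  · intros; positivity

theorem exists_card_divisors_le_mul_rpow {ε : ℝ} (hε : 0 < ε) :
    ∃ C : ℝ, 0 ≤ C ∧ ∀ n : ℕ, (n.divisors.card : ℝ) ≤ C * (n : ℝ) ^ ε := by
  set D : ℝ := 1 + 1 / (ε * Real.log 2)
  have hD : 1 ≤ D := le_add_of_nonneg_right (by positivity)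
  set B : ℕ := ⌈(2 : ℝ) ^ (1 / ε)⌉₊
  -- Only the primes below `2 ^ (1 / ε)` contribute a factor larger than one.
  have prime_factor (n p : ℕ) (hp : p ∈ n.primeFactors) : (n.factorization p : ℝ) + 1 ≤
      (if p < B then D else 1) * (p : ℝ) ^ (ε * n.factorization p) := by
    split_ifs with hpB
    · have two_le : (2 : ℝ) ≤ p := by exact_mod_cast (Nat.prime_of_mem_primeFactors hp).two_le
      refine (natCast_add_one_le_mul_two_rpow hε _).trans ?_
      gcongr
    · rw [one_mul]
      exact natCast_add_one_le_rpow hε (Nat.ceil_le.1 (not_lt.1 hpB)) _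
  have prod_le (n : ℕ) : ∏ p ∈ n.primeFactors, (if p < B then D else 1) ≤ D ^ B := by
    rw [Finset.prod_ite, Finset.prod_const, Finset.prod_const_one, mul_one]
    refine pow_le_pow_right₀ hD ((Finset.card_le_card fun p hp => ?_).trans
      (Finset.card_range B).le)
    exact Finset.mem_range.2 (Finset.mem_filter.1 hp).2
  refine ⟨D ^ B, by positivity, fun n => ?_⟩
  obtain rfl | hn := eq_or_ne n 0
  · simp only [Nat.divisors_zero, Finset.card_empty, Nat.cast_zero]
    positivity
  calc (n.divisors.card : ℝ) = ∏ p ∈ n.primeFactors, ((n.factorization p : ℝ) + 1) := by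
        rw [Nat.card_divisors hn]; push_cast; rfl
    _ ≤ ∏ p ∈ n.primeFactors, (if p < B then D else 1) * (p : ℝ) ^ (ε * n.factorization p) :=
        Finset.prod_le_prod (fun _ _ => by positivity) (prime_factor n)
    _ = (∏ p ∈ n.primeFactors, if p < B then D else 1) * (n : ℝ) ^ ε := by
        rw [Finset.prod_mul_distrib, ← natCast_rpow_eq_prod_primeFactors hn]
    _ ≤ D ^ B * (n : ℝ) ^ ε := by gcongr; exact prod_le n

/-! ### Linear relations between unit fractions -/

section Relations

variable {ι : Type*} [Fintype ι]

theorem dvd_prod_or_sq_dvd_prod [DecidableEq ι] {R : Type*} [CommRing R] {p : R} (hp : Prime p)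
    {a x : ι → R} (hrel : ∑ i, a i * ∏ l ∈ Finset.univ.erase i, x l = 0) (hpx : p ∣ ∏ i, x i) :
    p ∣ ∏ i, a i ∨ p ^ 2 ∣ ∏ i, x i := by
  obtain ⟨j, -, hj⟩ := (hp.dvd_finsetProd_iff _).1 hpx
  have dvd_others : p ∣ ∑ i ∈ Finset.univ.erase j, a i * ∏ l ∈ Finset.univ.erase i, x l :=
    Finset.dvd_sum fun i hi => Dvd.dvd.mul_left (hj.trans (Finset.dvd_prod_of_mem x
      (Finset.mem_erase.2 ⟨(Finset.ne_of_mem_erase hi).symm, Finset.mem_univ j⟩))) _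
  rw [← Finset.add_sum_erase _ _ (Finset.mem_univ j)] at hrel
  have dvd_term : p ∣ a j * ∏ l ∈ Finset.univ.erase j, x l :=
    (dvd_add_left dvd_others).1 (hrel ▸ dvd_zero p)
  refine (hp.dvd_or_dvd dvd_term).imp
    (fun h => h.trans (Finset.dvd_prod_of_mem a (Finset.mem_univ j))) fun h => ?_
  rw [← Finset.mul_prod_erase _ _ (Finset.mem_univ j), sq]
  exact mul_dvd_mul hj h

theorem sum_mul_prod_erase_eq_prod_mul_sum_div [DecidableEq ι] {K : Type*} [Field K] (a : ι → K)
    {x : ι → K} (hx : ∀ i, x i ≠ 0) :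
    ∑ i, a i * ∏ l ∈ Finset.univ.erase i, x l = (∏ i, x i) * ∑ i, a i / x i := by
  rw [Finset.mul_sum]
  refine Finset.sum_congr rfl fun i hi => ?_
  have := hx i
  rw [← Finset.mul_prod_erase _ _ hi]
  field_simp

theorem exists_sq_mul_eq_and_dvd_mul {P A : ℕ}
    (h : ∀ p : ℕ, p.Prime → p ∣ P → p ∣ A ∨ p ^ 2 ∣ P) :
    ∃ b v : ℕ, b ^ 2 * v = P ∧ v ∣ b * A := by
  obtain ⟨v, b, hbv, hv⟩ := Nat.sq_mul_squarefree P
  refine ⟨b, v, hbv, ?_⟩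
  rw [← Nat.prod_primeFactors_of_squarefree hv]
  refine Finset.prod_primes_dvd _ (fun p hp => (Nat.prime_of_mem_primeFactors hp).prime)
    fun p hp => ?_
  have hpp := Nat.prime_of_mem_primeFactors hp
  by_contra hpbA
  obtain ⟨hpb, hpA⟩ := not_or.1 (mt hpp.dvd_mul.2 hpbA)
  have sq_dvd : p ^ 2 ∣ b ^ 2 * v :=
    hbv ▸ (h p hpp (hbv ▸ (Nat.dvd_of_mem_primeFactors hp).mul_left _)).resolve_left hpA
  have coprime : Nat.Coprime (p ^ 2) (b ^ 2) := .pow _ _ ((hpp.coprime_iff_not_dvd).2 hpb)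
  exact hpp.not_isUnit (hv p (sq p ▸ coprime.dvd_of_dvd_mul_left sq_dvd))

theorem exists_sq_mul_eq_prod_natAbs {a x : ι → ℤ} (hx : ∀ i, x i ≠ 0)
    (hrel : ∑ i, (a i : ℚ) / x i = 0) :
    ∃ b v : ℕ, b ^ 2 * v = ∏ i, (x i).natAbs ∧ v ∣ b * ∏ i, (a i).natAbs := by
  classical
  have cleared : ∑ i, a i * ∏ l ∈ Finset.univ.erase i, x l = 0 := by
    have := sum_mul_prod_erase_eq_prod_mul_sum_div (fun i => (a i : ℚ))
      (fun i => Int.cast_ne_zero.2 (hx i))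
    rw [hrel, mul_zero] at this
    exact_mod_cast this
  have prod_natAbs (z : ι → ℤ) : ∏ i, (z i).natAbs = (∏ i, z i).natAbs :=
    (map_prod Int.natAbsHom z _).symm
  refine exists_sq_mul_eq_and_dvd_mul fun p hp hpx => ?_
  simp only [prod_natAbs, ← Int.natCast_dvd, Nat.cast_pow] at hpx ⊢
  exact dvd_prod_or_sq_dvd_prod (Nat.prime_iff_prime_int.1 hp) cleared hpx

theorem setOf_natAbs_mem_eq (S : Finset ℕ) :
    {x : ℤ | x.natAbs ∈ S} = (fun a : ℕ => (a : ℤ)) '' S ∪ (fun a : ℕ => -(a : ℤ)) '' S := by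
  ext x
  constructor
  · intro hx
    exact (Int.natAbs_eq x).imp (fun h => ⟨_, hx, h.symm⟩) fun h => ⟨_, hx, h.symm⟩
  · rintro (⟨a, ha, rfl⟩ | ⟨a, ha, rfl⟩) <;> simpa using ha

theorem finite_setOf_natAbs_mem (S : Finset ℕ) : {x : ℤ | x.natAbs ∈ S}.Finite := by
  rw [setOf_natAbs_mem_eq]
  exact (S.finite_toSet.image _).union (S.finite_toSet.image _)

theorem ncard_setOf_natAbs_mem_le (S : Finset ℕ) : {x : ℤ | x.natAbs ∈ S}.ncard ≤ 2 * S.card := by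
  rw [setOf_natAbs_mem_eq, two_mul, ← Set.ncard_coe_finset]
  exact (Set.ncard_union_le _ _).trans
    (add_le_add (Set.ncard_image_le S.finite_toSet) (Set.ncard_image_le S.finite_toSet))

theorem finite_setOf_forall_natAbs_mem {κ : Type*} [Finite κ] (S : Finset ℕ) :
    {x : κ → ℤ | ∀ i, (x i).natAbs ∈ S}.Finite := by
  simpa only [Set.mem_ofPred_eq] using Set.Finite.pi' fun _ : κ => finite_setOf_natAbs_mem S

theorem ncard_setOf_forall_natAbs_mem_le (S : Finset ℕ) :
    {x : ι → ℤ | ∀ i, (x i).natAbs ∈ S}.ncard ≤ (2 * S.card) ^ Fintype.card ι := by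
  have := ncard_setOf_forall_mem (ι := ι) {z : ℤ | z.natAbs ∈ S}
  simp only [Set.mem_ofPred_eq] at this
  exact this.trans_le (Nat.pow_le_pow_left (ncard_setOf_natAbs_mem_le S) _)

theorem ncard_int_relations_le (a : ι → ℤ) (ha : ∀ i, a i ≠ 0) (N : ℕ) :
    {x : ι → ℤ | (∀ i, (x i).natAbs ∈ Finset.Icc 1 N) ∧ ∑ i, (a i : ℚ) / x i = 0}.ncard ≤
      ∑ b ∈ Finset.Icc 1 (N ^ Fintype.card ι).sqrt, ∑ v ∈ (b * ∏ i, (a i).natAbs).divisors,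
        (2 * (b ^ 2 * v).divisors.card) ^ Fintype.card ι := by
  have cover : {x : ι → ℤ | (∀ i, (x i).natAbs ∈ Finset.Icc 1 N) ∧ ∑ i, (a i : ℚ) / x i = 0} ⊆
      ⋃ b ∈ Finset.Icc 1 (N ^ Fintype.card ι).sqrt, ⋃ v ∈ (b * ∏ i, (a i).natAbs).divisors,
        {x | ∀ i, (x i).natAbs ∈ (b ^ 2 * v).divisors} := by
    rintro x ⟨hxN, hrel⟩
    simp only [Finset.mem_Icc] at hxN
    obtain ⟨b, v, hbv, hdvd⟩ := exists_sq_mul_eq_prod_natAbs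
      (fun i => Int.natAbs_pos.1 (hxN i).1) hrel
    have prod_ne : b ^ 2 * v ≠ 0 :=
      hbv ▸ Finset.prod_ne_zero_iff.2 fun i _ => Nat.one_le_iff_ne_zero.1 (hxN i).1
    obtain ⟨hb, hv⟩ := mul_ne_zero_iff.1 prod_ne
    have hb₀ : b ≠ 0 := pow_ne_zero_iff two_ne_zero |>.1 hb
    have prod_le : b ^ 2 * v ≤ N ^ Fintype.card ι :=
      hbv ▸ Finset.prod_le_pow_card _ _ _ fun i _ => (hxN i).2
    simp only [Set.mem_iUnion, Finset.mem_Icc, Nat.mem_divisors, Set.mem_ofPred_eq, exists_prop]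
    refine ⟨b, ⟨Nat.one_le_iff_ne_zero.2 hb₀, Nat.le_sqrt'.2 ?_⟩, v, ⟨hdvd, ?_⟩,
      fun i => ⟨?_, prod_ne⟩⟩
    · exact (Nat.le_mul_of_pos_right _ (Nat.pos_of_ne_zero hv)).trans prod_le
    · exact mul_ne_zero hb₀ (Finset.prod_ne_zero_iff.2 fun i _ => Int.natAbs_ne_zero.2 (ha i))
    · exact hbv ▸ Finset.dvd_prod_of_mem _ (Finset.mem_univ i)
  refine (Set.ncard_le_ncard cover ?_).trans ?_
  · exact Set.Finite.biUnion (Finset.finite_toSet _) fun b _ =>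
      Set.Finite.biUnion (Finset.finite_toSet _) fun v _ => finite_setOf_forall_natAbs_mem _
  refine (Finset.set_ncard_biUnion_le _ _).trans (Finset.sum_le_sum fun b _ => ?_)
  refine (Finset.set_ncard_biUnion_le _ _).trans (Finset.sum_le_sum fun v _ => ?_)
  exact ncard_setOf_forall_natAbs_mem_le _

theorem exists_sum_divisors_le (k : ℕ) {ε : ℝ} (hε : 0 < ε) :
    ∃ C : ℝ, 0 ≤ C ∧ ∀ N A : ℕ, (∑ b ∈ Finset.Icc 1 N.sqrt, ∑ v ∈ (b * A).divisors,
      (2 * (b ^ 2 * v).divisors.card) ^ k : ℝ) ≤ C * √N * ((N : ℝ) ^ 2 * A) ^ ε := by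
  obtain ⟨C, hC, divisors_le⟩ := exists_card_divisors_le_mul_rpow (ε := ε / (k + 1)) (by positivity)
  refine ⟨C * (2 * C) ^ k, by positivity, fun N A => ?_⟩
  set T : ℝ := ((N : ℝ) ^ 2 * A) ^ (ε / (k + 1)) with hT
  have card_le {d : ℕ} (hd : d ≤ N ^ 2 * A) : (d.divisors.card : ℝ) ≤ C * T := by
    have : (d : ℝ) ≤ (N : ℝ) ^ 2 * A := by exact_mod_cast hd
    exact (divisors_le d).trans (by rw [hT]; gcongr)
  have summand_le {b v : ℕ} (hb : b ∈ Finset.Icc 1 N.sqrt) (hv : v ∈ (b * A).divisors) :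
      (2 * (b ^ 2 * v).divisors.card : ℝ) ^ k ≤ (2 * (C * T)) ^ k := by
    obtain ⟨-, hb⟩ := Finset.mem_Icc.1 hb
    have hbN : b ^ 2 ≤ N := Nat.le_sqrt'.1 hb
    have hvA : v ≤ b * A := Nat.divisor_le hv
    gcongr
    refine card_le ?_
    calc b ^ 2 * v ≤ b ^ 2 * (b * A) := by gcongr
      _ ≤ N * (N * A) := by gcongr; exact hb.trans (Nat.sqrt_le_self N)
      _ = N ^ 2 * A := by ring
  have inner_le {b : ℕ} (hb : b ∈ Finset.Icc 1 N.sqrt) : (∑ v ∈ (b * A).divisors,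
      (2 * (b ^ 2 * v).divisors.card : ℝ) ^ k) ≤ C * T * (2 * (C * T)) ^ k := by
    have hbN : b ≤ N := (Finset.mem_Icc.1 hb).2.trans (Nat.sqrt_le_self N)
    refine (Finset.sum_le_card_nsmul _ _ _ fun v hv => summand_le hb hv).trans ?_
    rw [nsmul_eq_mul]
    gcongr
    refine card_le (Nat.mul_le_mul_right A (hbN.trans (Nat.le_self_pow two_ne_zero N)))
  have T_pow : T ^ (k + 1) = ((N : ℝ) ^ 2 * A) ^ ε := by
    rw [hT, ← Real.rpow_mul_natCast (by positivity)]
    congr 1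
    push_cast
    field_simp
  calc (∑ b ∈ Finset.Icc 1 N.sqrt, ∑ v ∈ (b * A).divisors,
        (2 * (b ^ 2 * v).divisors.card : ℝ) ^ k)
      ≤ (Finset.Icc 1 N.sqrt).card • (C * T * (2 * (C * T)) ^ k) :=
        Finset.sum_le_card_nsmul _ _ _ fun b => inner_le
    _ = N.sqrt * (C * T * (2 * (C * T)) ^ k) := by
        rw [nsmul_eq_mul, Nat.card_Icc, Nat.add_sub_cancel]
    _ ≤ √N * (C * T * (2 * (C * T)) ^ k) := by
        gcongr
        exact Real.nat_sqrt_le_real_sqrt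
    _ = C * (2 * C) ^ k * √N * ((N : ℝ) ^ 2 * A) ^ ε := by rw [← T_pow]; ring

theorem egyptian_eq_image (H : ℝ) :
    Egyptian H = (fun a : ℤ => 1 / (a : ℚ)) '' {a : ℤ | a.natAbs ∈ Finset.Icc 1 ⌊H⌋₊} := by
  ext x
  have bound_iff {a : ℤ} (ha : a ≠ 0) : (|a| : ℝ) ≤ H ↔ a.natAbs ≤ ⌊H⌋₊ := by
    rw [Nat.le_floor_iff' (Int.natAbs_ne_zero.2 ha), Nat.cast_natAbs, Int.cast_abs]
  simp only [Egyptian, Set.mem_ofPred_eq, Set.mem_image, Finset.mem_Icc, Nat.one_le_iff_ne_zero,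
    Int.natAbs_ne_zero]
  constructor
  · rintro ⟨a, ha, haH, rfl⟩
    exact ⟨a, ⟨ha, (bound_iff ha).1 haH⟩, rfl⟩
  · rintro ⟨a, ⟨ha, haH⟩, rfl⟩
    exact ⟨a, ha, (bound_iff ha).2 haH, rfl⟩

theorem egyptian_finite (H : ℝ) : (Egyptian H).Finite :=
  egyptian_eq_image H ▸ (finite_setOf_natAbs_mem _).image _

theorem egyptian_ncard_le {H : ℝ} (hH : 0 ≤ H) : ((Egyptian H).ncard : ℝ) ≤ 2 * H := by
  have : (Egyptian H).ncard ≤ 2 * ⌊H⌋₊ := by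
    rw [egyptian_eq_image]
    refine (Set.ncard_image_le (finite_setOf_natAbs_mem _)).trans ?_
    exact (ncard_setOf_natAbs_mem_le _).trans_eq (by rw [Nat.card_Icc, Nat.add_sub_cancel])
  calc ((Egyptian H).ncard : ℝ) ≤ 2 * ⌊H⌋₊ := by exact_mod_cast this
    _ ≤ 2 * H := by gcongr; exact Nat.floor_le hH

theorem egyptian_nonempty {H : ℝ} (hH : 1 ≤ H) : (Egyptian H).Nonempty :=
  ⟨1, 1, one_ne_zero, by simpa using hH, by norm_num⟩

theorem exists_ncard_egyptian_relations_le (ι : Type*) [Fintype ι] {ε : ℝ} (hε : 0 < ε) :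
    ∃ C : ℝ, 0 ≤ C ∧ ∀ H : ℝ, 0 ≤ H → ∀ a : ι → ℤ, (∀ i, a i ≠ 0) →
      ({y : ι → ℚ | (∀ i, y i ∈ Egyptian H) ∧ ∑ i, a i * y i = 0}.ncard : ℝ) ≤
        C * H ^ ((Fintype.card ι : ℝ) / 2) *
          (H ^ (2 * Fintype.card ι) * ∏ i, |(a i : ℝ)|) ^ ε := by
  obtain ⟨C, hC, sum_le⟩ := exists_sum_divisors_le (Fintype.card ι) hε
  refine ⟨C, hC, fun H hH a ha => ?_⟩
  set k := Fintype.card ι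
  set N := ⌊H⌋₊
  have hN : (N : ℝ) ≤ H := Nat.floor_le hH
  have subset_image : {y : ι → ℚ | (∀ i, y i ∈ Egyptian H) ∧ ∑ i, a i * y i = 0} ⊆
      (fun x i => 1 / (x i : ℚ)) ''
        {x : ι → ℤ | (∀ i, (x i).natAbs ∈ Finset.Icc 1 N) ∧ ∑ i, (a i : ℚ) / x i = 0} := by
    rintro y ⟨hy, hrel⟩
    simp only [egyptian_eq_image, Set.mem_image] at hy
    choose x hxN hxy using hy
    obtain rfl := funext hxy
    simp only [mul_one_div] at hrel
    exact ⟨x, ⟨hxN, hrel⟩, rfl⟩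
  have finite_int : {x : ι → ℤ | (∀ i, (x i).natAbs ∈ Finset.Icc 1 N) ∧
      ∑ i, (a i : ℚ) / x i = 0}.Finite :=
    (finite_setOf_forall_natAbs_mem _).subset fun _ hx => hx.1
  have ncard_le := (Set.ncard_le_ncard subset_image (finite_int.image _)).trans
    ((Set.ncard_image_le finite_int).trans (ncard_int_relations_le a ha N))
  have sqrt_eq : √(H ^ k) = H ^ ((k : ℝ) / 2) := by
    rw [Real.sqrt_eq_rpow, ← Real.rpow_natCast, ← Real.rpow_mul hH, mul_one_div]
  calc _ ≤ C * √(N ^ k : ℕ) * (((N ^ k : ℕ) : ℝ) ^ 2 * (∏ i, (a i).natAbs : ℕ)) ^ ε :=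
        le_trans (by exact_mod_cast ncard_le) (sum_le _ _)
    _ = C * √((N : ℝ) ^ k) * ((N : ℝ) ^ (2 * k) * ∏ i, |(a i : ℝ)|) ^ ε := by
        push_cast [Nat.cast_natAbs]
        rw [← pow_mul, mul_comm k 2]
    _ ≤ C * √(H ^ k) * (H ^ (2 * k) * ∏ i, |(a i : ℝ)|) ^ ε := by gcongr
    _ = _ := by rw [sqrt_eq]

end Relations

/-! ### Cramer's rule with bounded integer coefficients -/

section Cramer

variable {ρ : Type*} [Fintype ρ] [DecidableEq ρ]

theorem det_updateRow_vecMul {R : Type*} [CommRing R] (X : Matrix ρ ρ R) (c : ρ → R) (j : ρ) :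
    (X.updateRow j (c ᵥ* X)).det = c j * X.det := by
  rw [Matrix.vecMul_eq_sum, Matrix.det_updateRow_sum, smul_eq_mul]

theorem abs_det_intCast_le {Z : Matrix ρ ρ ℤ} {x : ℝ} (hZ : ∀ i j, |(Z i j : ℝ)| ≤ x) :
    |(Z.det : ℝ)| ≤ (Fintype.card ρ).factorial * x ^ Fintype.card ρ := by
  rw [Int.cast_det, ← nsmul_eq_mul]
  exact Matrix.det_le (abv := AbsoluteValue.abs) hZ

theorem exists_int_eq_mul_of_egyptian {κ : Type*} [Fintype κ] {H : ℝ} {e : κ → ℚ}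
    (he : ∀ k, e k ∈ Egyptian H) :
    ∃ D : ℤ, D ≠ 0 ∧ ∃ z : κ → ℤ, ∀ k, (z k : ℚ) = D * e k ∧ |(z k : ℝ)| ≤ H ^ Fintype.card κ := by
  classical
  choose d hd hdH hde using he
  refine ⟨∏ k, d k, Finset.prod_ne_zero_iff.2 fun k _ => hd k,
    fun k => ∏ l ∈ Finset.univ.erase k, d l, fun k => ⟨?_, ?_⟩⟩
  · have := Int.cast_ne_zero (α := ℚ).2 (hd k)
    rw [← Finset.mul_prod_erase _ _ (Finset.mem_univ k), hde]
    push_cast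
    field_simp
  · have one_le : 1 ≤ H := le_trans (by exact_mod_cast Int.one_le_abs (hd k)) (hdH k)
    push_cast
    rw [Finset.abs_prod]
    calc ∏ l ∈ Finset.univ.erase k, |(d l : ℝ)|
        ≤ H ^ (Finset.univ.erase k).card :=
          (Finset.prod_le_prod (fun _ _ => abs_nonneg _) fun l _ => hdH l).trans_eq
            (Finset.prod_const H)
      _ ≤ H ^ Fintype.card κ := pow_le_pow_right₀ one_le (Finset.card_le_univ _)

theorem exists_bounded_int_coeffs {H : ℝ} {X : Matrix ρ ρ ℚ} {c : ρ → ℚ} (hX : X.det ≠ 0)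
    (hXH : ∀ i j, X i j ∈ Egyptian H) (hcH : ∀ j, (c ᵥ* X) j ∈ Egyptian H) :
    ∃ (a₀ : ℤ) (a : ρ → ℤ), a₀ ≠ 0 ∧ (∀ j, (a j : ℚ) = a₀ * c j) ∧ ∀ o : Option ρ,
      |((o.elim a₀ a : ℤ) : ℝ)| ≤ (Fintype.card ρ).factorial *
        (H ^ Fintype.card (Option ρ × ρ)) ^ Fintype.card ρ := by
  obtain ⟨D, hD, z, hz⟩ := exists_int_eq_mul_of_egyptian (H := H)
    (e := fun q : Option ρ × ρ => q.1.elim ((c ᵥ* X) q.2) (X · q.2))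
    (by rintro ⟨_ | i, j⟩; exacts [hcH j, hXH i j])
  let Z : Matrix ρ ρ ℤ := Matrix.of fun i j => z (some i, j)
  let w : ρ → ℤ := fun j => z (none, j)
  have cast_Z : Z.map (Int.cast : ℤ → ℚ) = (D : ℚ) • X := Matrix.ext fun i j => (hz (some i, j)).1
  have cast_w : (Int.cast : ℤ → ℚ) ∘ w = c ᵥ* Z.map (Int.cast : ℤ → ℚ) := by
    rw [cast_Z, Matrix.vecMul_smul]
    exact funext fun j => (hz (none, j)).1
  refine ⟨Z.det, fun j => (Z.updateRow j w).det, ?_, fun j => ?_, ?_⟩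
  · have : ((Z.det : ℤ) : ℚ) ≠ 0 := by
      rw [Int.cast_det, cast_Z, Matrix.det_smul]
      exact mul_ne_zero (pow_ne_zero _ (Int.cast_ne_zero.2 hD)) hX
    exact Int.cast_ne_zero.1 this
  · rw [Int.cast_det, Int.cast_det, Matrix.map_updateRow, cast_w, det_updateRow_vecMul, mul_comm]
  · rintro (_ | j)
    · exact abs_det_intCast_le fun i l => (hz (some i, l)).2
    · refine abs_det_intCast_le fun i l => ?_
      rw [Matrix.updateRow_apply]
      split_ifs
      exacts [(hz (none, l)).2, (hz (some i, l)).2]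

theorem exists_bounded_int_relation {H : ℝ} {X : Matrix ρ ρ ℚ} {c : ρ → ℚ} (hX : X.det ≠ 0)
    (hXH : ∀ i j, X i j ∈ Egyptian H) (hcH : ∀ j, (c ᵥ* X) j ∈ Egyptian H) {S : Finset ρ}
    (hcS : ∀ j ∈ S, c j ≠ 0) :
    ∃ b : Option S → ℤ, (∀ o, b o ≠ 0) ∧ (∀ o, |(b o : ℝ)| ≤ (Fintype.card ρ).factorial *
        (H ^ Fintype.card (Option ρ × ρ)) ^ Fintype.card ρ) ∧
      ∀ z : Option S → ℚ, z none = ∑ j : S, c j * z (some j) → ∑ o, b o * z o = 0 := by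
  obtain ⟨a₀, a, ha₀, ha, a_le⟩ := exists_bounded_int_coeffs hX hXH hcH
  refine ⟨fun o => o.elim (-a₀) fun j => a j, ?_, ?_, fun z hz => ?_⟩
  · rintro (_ | j)
    · exact neg_ne_zero.2 ha₀
    · refine Int.cast_ne_zero (α := ℚ).1 ?_
      exact ha j ▸ mul_ne_zero (Int.cast_ne_zero.2 ha₀) (hcS j j.2)
  · rintro (_ | j)
    · simpa only [Option.elim_none, Int.cast_neg, abs_neg] using a_le none
    · exact a_le (some j)
  · simp only [Fintype.sum_option, Option.elim_none, Option.elim_some, ha, hz, mul_assoc,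
      ← Finset.mul_sum, Int.cast_neg, neg_mul, neg_add_cancel]

end Cramer

/-! ### Columns compatible with a given row space -/

section Columns

variable {ρ : Type*} [Fintype ρ]

theorem ncard_dotProduct_mem_le {K : Type*} [Semiring K] {E : Set K} (hE : E.Finite)
    {c : ρ → K} {S : Finset ρ} (hc : ∀ j, j ∉ S → c j = 0) :
    {y : ρ → K | (∀ j, y j ∈ E) ∧ c ⬝ᵥ y ∈ E}.ncard ≤ E.ncard ^ (Fintype.card ρ - S.card) *
      {z : Option S → K | (∀ o, z o ∈ E) ∧ z none = ∑ j : S, c j * z (some j)}.ncard := by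
  classical
  let split (y : ρ → K) : (↥Sᶜ → K) × (Option S → K) :=
    (fun j => y j, fun o => o.elim (c ⬝ᵥ y) fun j => y j)
  have maps_to : ∀ y ∈ {y : ρ → K | (∀ j, y j ∈ E) ∧ c ⬝ᵥ y ∈ E}, split y ∈
      {u : ↥Sᶜ → K | ∀ j, u j ∈ E} ×ˢ
        {z : Option S → K | (∀ o, z o ∈ E) ∧ z none = ∑ j : S, c j * z (some j)} := by
    rintro y ⟨hy, hcy⟩
    refine ⟨fun j => hy j, ?_, ?_⟩
    · rintro (_ | j)
      exacts [hcy, hy j]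
    · refine Eq.trans ?_ (Finset.sum_coe_sort S fun j => c j * y j).symm
      exact (Finset.sum_subset (Finset.subset_univ S) fun j _ hj => by rw [hc j hj, zero_mul]).symm
  have injective : Function.Injective split := by
    intro y y' h
    funext j
    by_cases hj : j ∈ S
    · exact congrFun (congrArg Prod.snd h) (some ⟨j, hj⟩)
    · exact congrFun (congrArg Prod.fst h) ⟨j, Finset.mem_compl.2 hj⟩
  have finite : ({u : ↥Sᶜ → K | ∀ j, u j ∈ E} ×ˢ
      {z : Option S → K | (∀ o, z o ∈ E) ∧ z none = ∑ j : S, c j * z (some j)}).Finite :=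
    (Set.Finite.pi' fun _ => hE).prod ((Set.Finite.pi' fun _ => hE).subset fun z hz => hz.1)
  refine (Set.ncard_le_ncard_of_injOn split maps_to injective.injOn finite).trans_eq ?_
  rw [Set.ncard_prod, ncard_setOf_forall_mem, Fintype.card_coe, Finset.card_compl]

theorem finite_setOf_forall_egyptian {κ : Type*} [Finite κ] (H : ℝ) (P : (κ → ℚ) → Prop) :
    {z : κ → ℚ | (∀ k, z k ∈ Egyptian H) ∧ P z}.Finite :=
  (Set.Finite.pi' fun _ => egyptian_finite H).subset fun _ hz => hz.1

theorem exists_ncard_cramer_relations_le [DecidableEq ρ] (S : Finset ρ) {ε : ℝ} (hε : 0 < ε) :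
    ∃ C : ℝ, 0 ≤ C ∧ ∀ H : ℝ, 0 ≤ H → ∀ (X : Matrix ρ ρ ℚ) (c : ρ → ℚ), X.det ≠ 0 →
      (∀ i j, X i j ∈ Egyptian H) → (∀ j, (c ᵥ* X) j ∈ Egyptian H) → (∀ j ∈ S, c j ≠ 0) →
      ({z : Option S → ℚ | (∀ o, z o ∈ Egyptian H) ∧
          z none = ∑ j : S, c j * z (some j)}.ncard : ℝ) ≤
        C * H ^ (((S.card : ℝ) + 1) / 2) * H ^ ε := by
  set r := Fintype.card ρ
  set k := Fintype.card (Option S) with hk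
  set d := (2 + Fintype.card (Option ρ × ρ) * r) * k with hd
  have hkS : (k : ℝ) = S.card + 1 := by
    rw [hk, Fintype.card_option, Fintype.card_coe, Nat.cast_succ]
  have : 0 < d := by positivity
  obtain ⟨C, hC, relations_le⟩ :=
    exists_ncard_egyptian_relations_le (Option S) (ε := ε / d) (by positivity)
  refine ⟨C * ((r.factorial : ℝ) ^ k) ^ (ε / d), by positivity, fun H hH X c hX hXH hcH hcS => ?_⟩
  obtain ⟨b, b_ne, b_le, relation⟩ := exists_bounded_int_relation hX hXH hcH hcS
  have height_le : H ^ (2 * k) * ∏ o, |(b o : ℝ)| ≤ r.factorial ^ k * H ^ d := calc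
    _ ≤ H ^ (2 * k) * ∏ _ : Option S, r.factorial * (H ^ Fintype.card (Option ρ × ρ)) ^ r := by
        gcongr with o
        exact b_le o
    _ = r.factorial ^ k * H ^ d := by
        rw [Finset.prod_const, Finset.card_univ, hd]; ring
  have subset : {z : Option S → ℚ | (∀ o, z o ∈ Egyptian H) ∧
      z none = ∑ j : S, c j * z (some j)} ⊆
      {z | (∀ o, z o ∈ Egyptian H) ∧ ∑ o, b o * z o = 0} :=
    fun z hz => ⟨hz.1, relation z hz.2⟩
  calc _ ≤ C * H ^ ((k : ℝ) / 2) * (H ^ (2 * k) * ∏ o, |(b o : ℝ)|) ^ (ε / d) :=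
        le_trans (by exact_mod_cast Set.ncard_le_ncard subset (finite_setOf_forall_egyptian H _))
          (relations_le H hH b b_ne)
    _ ≤ C * H ^ ((k : ℝ) / 2) * (r.factorial ^ k * H ^ d) ^ (ε / d) := by gcongr
    _ = C * H ^ ((k : ℝ) / 2) * (((r.factorial : ℝ) ^ k) ^ (ε / d) * H ^ ε) := by
        rw [Real.mul_rpow (by positivity) (by positivity), ← Real.rpow_natCast_mul hH,
          mul_div_cancel₀ ε (by positivity)]
    _ = _ := by rw [hkS]; ring

theorem exists_ncard_dotProduct_mem_le [DecidableEq ρ] (S : Finset ρ) {ε : ℝ} (hε : 0 < ε) :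
    ∃ C : ℝ, 0 ≤ C ∧ ∀ H : ℝ, 0 < H → ∀ (X : Matrix ρ ρ ℚ) (c : ρ → ℚ), X.det ≠ 0 →
      (∀ i j, X i j ∈ Egyptian H) → (∀ j, (c ᵥ* X) j ∈ Egyptian H) → (∀ j, j ∈ S ↔ c j ≠ 0) →
      ({y : ρ → ℚ | (∀ j, y j ∈ Egyptian H) ∧ c ⬝ᵥ y ∈ Egyptian H}.ncard : ℝ) ≤
        C * H ^ (Fintype.card ρ - ((S.card : ℝ) - 1) / 2 + ε) := by
  obtain ⟨C, hC, relations_le⟩ := exists_ncard_cramer_relations_le S hε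
  set r := Fintype.card ρ
  set s := S.card
  have hsr : s ≤ r := Finset.card_le_univ S
  refine ⟨2 ^ (r - s) * C, by positivity, fun H hH X c hX hXH hcH hcS => ?_⟩
  calc _ ≤ ((Egyptian H).ncard : ℝ) ^ (r - s) * ({z : Option S → ℚ |
        (∀ o, z o ∈ Egyptian H) ∧ z none = ∑ j : S, c j * z (some j)}.ncard : ℝ) := by
        exact_mod_cast ncard_dotProduct_mem_le (egyptian_finite H)
          fun j hj => not_not.1 (mt (hcS j).2 hj)
    _ ≤ (2 * H) ^ (r - s) * (C * H ^ (((s : ℝ) + 1) / 2) * H ^ ε) := by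
        gcongr
        · exact egyptian_ncard_le hH.le
        · exact relations_le H hH.le X c hX hXH hcH fun j => (hcS j).1
    _ = 2 ^ (r - s) * C * (H ^ ((r : ℝ) - s) * H ^ (((s : ℝ) + 1) / 2) * H ^ ε) := by
        rw [mul_pow, ← Nat.cast_sub hsr, Real.rpow_natCast]; ring
    _ = _ := by
        rw [← Real.rpow_add hH, ← Real.rpow_add hH]
        congr 2
        ring

end Columns

/-! ### Skeleton decompositions -/

section Skeleton

variable {K : Type*} [Field K] {μ ν : Type*} [Fintype ν]

theorem exists_eq_mul_submatrix_rows [Finite μ] (A : Matrix μ ν K) :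
    ∃ (f : Fin A.rank → μ) (M : Matrix μ (Fin A.rank) K), A = M * A.submatrix f id := by
  obtain ⟨F, mem_range, span_eq, -⟩ :=
    A.rank_eq_finrank_span_row ▸ Submodule.exists_fun_fin_finrank_span_eq K (Set.range A.row)
  choose f hf using mem_range
  have mem_span (i : μ) : ∃ c : Fin A.rank → K, ∑ j, c j • F j = A.row i :=
    Submodule.mem_span_range_iff_exists_fun K |>.1
      (span_eq ▸ Submodule.subset_span (Set.mem_range_self i))
  choose M hM using mem_span
  refine ⟨f, Matrix.of M, ?_⟩
  ext i l
  calc A i l = (∑ j, M i j • F j) l := (congrFun (hM i) l).symm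
    _ = ∑ j, M i j * A (f j) l := by
      simp only [Finset.sum_apply, Pi.smul_apply, smul_eq_mul, ← hf, Matrix.row]

theorem exists_eq_submatrix_mul_cols [Finite μ] (A : Matrix μ ν K) :
    ∃ (g : Fin A.rank → ν) (N : Matrix (Fin A.rank) ν K), A = A.submatrix id g * N := by
  cases nonempty_fintype μ
  obtain ⟨g, M, hM⟩ := A.rank_transpose ▸ exists_eq_mul_submatrix_rows Aᵀ
  refine ⟨g, Mᵀ, ?_⟩
  rw [← Matrix.transpose_inj, Matrix.transpose_mul]
  exact hM

theorem det_ne_zero_of_rank_eq_card {ρ : Type*} [Fintype ρ] [DecidableEq ρ] {X : Matrix ρ ρ K}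
    (hX : X.rank = Fintype.card ρ) : X.det ≠ 0 := by
  rw [Matrix.rank_eq_finrank_span_cols, eq_comm, ← Set.finrank] at hX
  exact ((Matrix.isUnit_iff_isUnit_det X).1 (Matrix.linearIndependent_cols_iff_isUnit.1
    (linearIndependent_iff_card_eq_finrank_span.2 hX))).ne_zero

theorem exists_skeleton [Finite μ] {A : Matrix μ ν K} {r : ℕ} (hA : A.rank = r) :
    ∃ (f : Fin r → μ) (g : Fin r → ν), (A.submatrix f g).det ≠ 0 ∧
      A = A.submatrix id g * (A.submatrix f g)⁻¹ * A.submatrix f id := by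
  subst hA
  obtain ⟨f, M, hM⟩ := exists_eq_mul_submatrix_rows A
  obtain ⟨g, N, hN⟩ := exists_eq_submatrix_mul_cols A
  set X := A.submatrix f g
  have cols_eq : A.submatrix id g = M * X := congrArg (Matrix.submatrix · id g) hM
  have rows_eq : A.submatrix f id = X * N := congrArg (Matrix.submatrix · f id) hN
  have factor : A = M * (X * N) := rows_eq ▸ hM
  have rank_le : A.rank ≤ X.rank := calc
    A.rank = (M * (X * N)).rank := congrArg Matrix.rank factor
    _ ≤ X.rank := (Matrix.rank_mul_le_right _ _).trans (Matrix.rank_mul_le_left _ _)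
  have det_ne : X.det ≠ 0 := det_ne_zero_of_rank_eq_card
    (le_antisymm X.rank_le_card_width ((Fintype.card_fin _).trans_le rank_le))
  refine ⟨f, g, det_ne, ?_⟩
  rw [cols_eq, rows_eq, Matrix.mul_nonsing_inv_cancel_right _ _ (IsUnit.mk0 _ det_ne)]
  exact factor

theorem injective_of_det_submatrix_ne_zero {R : Type*} [CommRing R] {α β ρ : Type*} [Fintype ρ]
    [DecidableEq ρ] {A : Matrix α β R} {f : ρ → α} {g : ρ → β} (hA : (A.submatrix f g).det ≠ 0) :
    Function.Injective f := by
  intro i j hij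
  by_contra hne
  exact hA (Matrix.det_zero_of_row_eq hne (by ext l; simp only [Matrix.submatrix_apply, hij]))

end Skeleton

/-! ### Stratification of the matrices of given rank -/

section Strata

variable {K : Type*} [Field K] {μ ν ρ : Type*} [Fintype ρ] {E : Set K}

theorem finite_setOf_forall_forall_mem [Finite μ] [Finite ν] {δ : Type*} {S : Set δ}
    (hS : S.Finite) :
    {A : Matrix μ ν δ | ∀ i j, A i j ∈ S}.Finite :=
  Set.Finite.pi' (t := fun _ => {v : ν → δ | ∀ j, v j ∈ S}) fun _ => Set.Finite.pi' fun _ => hS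

theorem ncard_rowSpace_le [Fintype μ] [Fintype ν] (hE : E.Finite) (B : Matrix μ ν K) :
    {w : ν → K | (∀ j, w j ∈ E) ∧ ∃ c : μ → K, c ᵥ* B = w}.ncard ≤ E.ncard ^ B.rank := by
  obtain ⟨g, N, hN⟩ := exists_eq_submatrix_mul_cols B
  have injOn : Set.InjOn (fun w : ν → K => w ∘ g)
      {w | (∀ j, w j ∈ E) ∧ ∃ c : μ → K, c ᵥ* B = w} := by
    have recover (c : μ → K) : c ᵥ* B = ((c ᵥ* B) ∘ g) ᵥ* N := calc
      c ᵥ* B = c ᵥ* (B.submatrix id g * N) := congrArg (c ᵥ* ·) hN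
      _ = (c ᵥ* B.submatrix id g) ᵥ* N := (Matrix.vecMul_vecMul _ _ _).symm
    rintro _ ⟨-, c, rfl⟩ _ ⟨-, c', rfl⟩ h
    rw [recover c, recover c']
    exact congrArg (· ᵥ* N) h
  refine (Set.ncard_le_ncard_of_injOn _ (t := {u : Fin B.rank → K | ∀ k, u k ∈ E})
    (fun w hw k => hw.1 (g k)) injOn (Set.Finite.pi' fun _ => hE)).trans_eq ?_
  rw [ncard_setOf_forall_mem, Fintype.card_fin]

theorem vecMul_submatrix_coe (c : ρ → K) (X : Matrix ρ ν K) {S : Finset ρ}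
    (hS : ∀ j ∉ S, c j = 0) :
    (fun j : S => c j) ᵥ* X.submatrix (↑) id = c ᵥ* X := by
  funext l
  exact (Finset.sum_coe_sort S fun j => c j * X j l).trans
    (Finset.sum_subset (Finset.subset_univ S) fun j _ hj => by rw [hS j hj, zero_mul])

theorem ncard_sparse_combinations_le [DecidableEq K] [Finite ν] (hE : E.Finite)
    (hE₀ : E.Nonempty) (X : Matrix ρ ν K) (s : ℕ) :
    {w : ν → K | (∀ j, w j ∈ E) ∧ ∃ c : ρ → K, hammingNorm c ≤ s ∧ c ᵥ* X = w}.ncard ≤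
      2 ^ Fintype.card ρ * E.ncard ^ s := by
  cases nonempty_fintype ν
  let V (S : Finset ρ) : Set (ν → K) :=
    {w | (∀ j, w j ∈ E) ∧ ∃ c : S → K, c ᵥ* X.submatrix (↑) id = w}
  let small : Finset (Finset ρ) := {S | S.card ≤ s}
  have V_finite (S : Finset ρ) : (V S).Finite :=
    (Set.Finite.pi' fun _ => hE).subset fun w hw => hw.1
  have ncard_V_le (S : Finset ρ) (hS : S ∈ small) : (V S).ncard ≤ E.ncard ^ s := by
    refine (ncard_rowSpace_le hE _).trans ?_
    refine Nat.pow_le_pow_right ((Set.ncard_pos hE).2 hE₀) ?_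
    exact (Matrix.rank_le_card_height _).trans
      ((Fintype.card_coe S).trans_le (Finset.mem_filter.1 hS).2)
  have cover : {w : ν → K | (∀ j, w j ∈ E) ∧ ∃ c : ρ → K, hammingNorm c ≤ s ∧ c ᵥ* X = w} ⊆
      ⋃ S ∈ small, V S := by
    rintro w ⟨hw, c, hcs, hcw⟩
    simp only [Set.mem_iUnion]
    refine ⟨({j | c j ≠ 0} : Finset ρ), Finset.mem_filter.2 ⟨Finset.mem_univ _, hcs⟩, hw, _,
      (vecMul_submatrix_coe c X fun j hj => ?_).trans hcw⟩
    simpa using hj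
  calc _ ≤ (⋃ S ∈ small, V S).ncard :=
        Set.ncard_le_ncard cover (Set.Finite.biUnion small.finite_toSet fun S _ => V_finite S)
    _ ≤ ∑ S ∈ small, (V S).ncard := Finset.set_ncard_biUnion_le _ _
    _ ≤ small.card * E.ncard ^ s := Finset.sum_le_card_nsmul _ _ _ ncard_V_le
    _ ≤ 2 ^ Fintype.card ρ * E.ncard ^ s := by
        gcongr
        exact (Finset.card_le_univ small).trans_eq (Fintype.card_finset)

/-- The coefficients expressing the rows of `G` through its rows indexed by `f`, that is, the matrix
`M` with `G = M * G.submatrix f id` when the latter submatrix is invertible. -/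
noncomputable def rowCoeffs [DecidableEq ρ] (f : ρ → μ) (G : Matrix μ ρ K) : Matrix μ ρ K :=
  G * (G.submatrix f id)⁻¹

/-- The largest number of nonzero entries in a row of `M`; it is the parameter by which the matrices
of given rank are stratified. -/
def maxRowWeight [DecidableEq K] [Fintype μ] (M : Matrix μ ρ K) : ℕ :=
  Finset.univ.sup fun i => hammingNorm (M i)

/-- The candidates for the columns of a matrix that are chosen by a skeleton decomposition: the rows
indexed by `f` are independent, and expressing the others through them needs at most `s` nonzero
coefficients in each row, with equality in some row. -/
def leftBlocks [DecidableEq K] [DecidableEq ρ] [Fintype μ] (E : Set K) (f : ρ → μ) (s : ℕ) :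
    Set (Matrix μ ρ K) :=
  {G | (∀ i j, G i j ∈ E) ∧ (G.submatrix f id).det ≠ 0 ∧ maxRowWeight (rowCoeffs f G) = s}

/-- The matrices with entries in `E` whose rank is attained on the rows `f` and the columns `g`, and
whose columns `g` form a block in `leftBlocks E f s`. -/
def skeletonStratum [DecidableEq K] [DecidableEq ρ] [Fintype μ] (E : Set K) (f : ρ → μ)
    (g : ρ → ν) (s : ℕ) : Set (Matrix μ ν K) :=
  {A | (∀ i j, A i j ∈ E) ∧ A.submatrix id g ∈ leftBlocks E f s ∧
    A = rowCoeffs f (A.submatrix id g) * A.submatrix f id}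

theorem rowCoeffs_mul_submatrix [DecidableEq ρ] {f : ρ → μ} {G : Matrix μ ρ K}
    (hG : (G.submatrix f id).det ≠ 0) : rowCoeffs f G * G.submatrix f id = G := by
  rw [rowCoeffs, Matrix.nonsing_inv_mul_cancel_right _ _ (IsUnit.mk0 _ hG)]

variable [DecidableEq K] [Fintype μ]

theorem maxRowWeight_le_card (M : Matrix μ ρ K) : maxRowWeight M ≤ Fintype.card ρ :=
  Finset.sup_le fun _ _ => hammingNorm_le_card_fintype

theorem hammingNorm_le_maxRowWeight (M : Matrix μ ρ K) (i : μ) :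
    hammingNorm (M i) ≤ maxRowWeight M :=
  Finset.le_sup (f := fun i => hammingNorm (M i)) (Finset.mem_univ i)

theorem exists_hammingNorm_eq_maxRowWeight {M : Matrix μ ρ K} (hM : maxRowWeight M ≠ 0) :
    ∃ i, hammingNorm (M i) = maxRowWeight M := by
  have nonempty : (Finset.univ : Finset μ).Nonempty := by
    rw [Finset.nonempty_iff_ne_empty]
    intro hempty
    exact hM (by rw [maxRowWeight, hempty, Finset.sup_empty, bot_eq_zero])
  obtain ⟨i, -, hi⟩ := Finset.exists_mem_eq_sup _ nonempty fun i => hammingNorm (M i)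
  exact ⟨i, hi.symm⟩

theorem exists_mem_skeletonStratum [Fintype ν] {A : Matrix μ ν K} {r : ℕ}
    (hA : ∀ i j, A i j ∈ E) (hr : A.rank = r) :
    ∃ (f : Fin r → μ) (g : Fin r → ν), ∃ s ≤ r, A ∈ skeletonStratum E f g s := by
  obtain ⟨f, g, det_ne, decomposition⟩ := exists_skeleton hr
  exact ⟨f, g, maxRowWeight (rowCoeffs f (A.submatrix id g)),
    (maxRowWeight_le_card _).trans_eq (Fintype.card_fin r),
    hA, ⟨fun i j => hA i (g j), det_ne, rfl⟩, decomposition⟩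

variable [DecidableEq ρ] {f : ρ → μ} {s : ℕ}

theorem ncard_leftBlocks_fibre_le (hE : E.Finite) (hE₀ : E.Nonempty) {G : Matrix μ ρ K}
    (hG : G ∈ leftBlocks E f s) :
    {G' ∈ leftBlocks E f s | G'.submatrix f id = G.submatrix f id}.ncard ≤
      (2 ^ Fintype.card ρ * E.ncard ^ s) ^ (Fintype.card μ - Fintype.card ρ) := by
  let rows : Set (ρ → K) :=
    {w | (∀ j, w j ∈ E) ∧ ∃ c : ρ → K, hammingNorm c ≤ s ∧ c ᵥ* G.submatrix f id = w}
  have rows_finite : rows.Finite := (Set.Finite.pi' fun _ => hE).subset fun w hw => hw.1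
  have fibre_subset : {G' ∈ leftBlocks E f s | G'.submatrix f id = G.submatrix f id} ⊆
      {F : μ → ρ → K | F ∘ f = G.submatrix f id ∧ ∀ i, F i ∈ rows} := by
    rintro G' ⟨⟨hE', hdet, hs⟩, hGG'⟩
    refine ⟨hGG', fun i => ⟨hE' i, rowCoeffs f G' i, hs ▸ hammingNorm_le_maxRowWeight _ i, ?_⟩⟩
    exact hGG' ▸ congrFun (rowCoeffs_mul_submatrix hdet) i
  refine (Set.ncard_le_ncard fibre_subset ?_).trans ((ncard_setOf_comp_eq_le
    (injective_of_det_submatrix_ne_zero hG.2.1) rows_finite _).trans ?_)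
  · exact (Set.Finite.pi' fun _ => rows_finite).subset fun F hF => hF.2
  · gcongr
    exact ncard_sparse_combinations_le hE hE₀ _ s

theorem leftBlocks_finite (hE : E.Finite) : (leftBlocks E f s).Finite :=
  (finite_setOf_forall_forall_mem hE).subset fun _ hG => hG.1

theorem ncard_leftBlocks_le (hE : E.Finite) (hE₀ : E.Nonempty) :
    (leftBlocks E f s).ncard ≤ (2 ^ Fintype.card ρ * E.ncard ^ s) ^
      (Fintype.card μ - Fintype.card ρ) * E.ncard ^ (Fintype.card ρ * Fintype.card ρ) := by
  have ncard_squares : {X : Matrix ρ ρ K | ∀ i j, X i j ∈ E}.ncard =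
      E.ncard ^ (Fintype.card ρ * Fintype.card ρ) := by
    rw [pow_mul, ← ncard_setOf_forall_mem, ← ncard_setOf_forall_mem]
    rfl
  rw [← ncard_squares]
  exact ncard_le_mul_ncard (φ := fun G => G.submatrix f id) (leftBlocks_finite hE)
    (finite_setOf_forall_forall_mem hE) (fun G hG i j => hG.1 _ _)
    fun G hG => ncard_leftBlocks_fibre_le hE hE₀ hG

variable [Fintype ν] {g : ρ → ν} {p : ℕ}

theorem ncard_skeletonStratum_fibre_le (hE : E.Finite) {A : Matrix μ ν K}
    (hA : A ∈ skeletonStratum E f g s) (hp : {y : ρ → K | (∀ j, y j ∈ E) ∧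
      ∀ i, (rowCoeffs f (A.submatrix id g) *ᵥ y) i ∈ E}.ncard ≤ p) :
    {A' ∈ skeletonStratum E f g s | A'.submatrix id g = A.submatrix id g}.ncard ≤
      p ^ (Fintype.card ν - Fintype.card ρ) := by
  set M := rowCoeffs f (A.submatrix id g)
  set short : Set (ρ → K) := {y | (∀ j, y j ∈ E) ∧ ∀ i, (M *ᵥ y) i ∈ E}
  have short_finite : short.Finite := (Set.Finite.pi' fun _ => hE).subset fun y hy => hy.1
  let cols : Set (μ → K) := (M *ᵥ ·) '' short
  have cols_finite : cols.Finite := short_finite.image _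
  have fibre_subset : Matrix.transpose ''
      {A' ∈ skeletonStratum E f g s | A'.submatrix id g = A.submatrix id g} ⊆
        {F : ν → μ → K | F ∘ g = (A.submatrix id g)ᵀ ∧ ∀ j, F j ∈ cols} := by
    rintro _ ⟨A', ⟨⟨hE', -, hA'⟩, hAA'⟩, rfl⟩
    have col_eq (j : ν) : M *ᵥ (fun i => A' (f i) j) = A'ᵀ j :=
      funext fun i => (congrFun (congrFun (hAA' ▸ hA') i) j).symm
    exact ⟨congrArg Matrix.transpose hAA', fun j => ⟨_, ⟨fun i => hE' _ _, fun i => by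
      rw [col_eq]; exact hE' i j⟩, col_eq j⟩⟩
  have g_injective : Function.Injective g := by
    refine injective_of_det_submatrix_ne_zero (A := Aᵀ) (g := f) ?_
    rw [← Matrix.transpose_submatrix, Matrix.det_transpose]
    exact hA.2.1.2.1
  rw [← Set.ncard_image_of_injective _ Matrix.transpose_injective]
  refine (Set.ncard_le_ncard fibre_subset ?_).trans
    ((ncard_setOf_comp_eq_le g_injective cols_finite _).trans ?_)
  · exact (Set.Finite.pi' fun _ => cols_finite).subset fun F hF => hF.2
  · gcongr
    exact (Set.ncard_image_le short_finite).trans hp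

theorem ncard_skeletonStratum_le (hE : E.Finite)
    (hp : ∀ G ∈ leftBlocks E f s, {y : ρ → K | (∀ j, y j ∈ E) ∧
      ∀ i, (rowCoeffs f G *ᵥ y) i ∈ E}.ncard ≤ p) :
    (skeletonStratum E f g s).ncard ≤
      p ^ (Fintype.card ν - Fintype.card ρ) * (leftBlocks E f s).ncard :=
  ncard_le_mul_ncard ((finite_setOf_forall_forall_mem hE).subset fun _ hA => hA.1)
    (leftBlocks_finite hE) (φ := fun A => A.submatrix id g) (fun _ hA => hA.2.1)
    fun _ hA => ncard_skeletonStratum_fibre_le hE hA (hp _ hA.2.1)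

theorem ncard_rank_eq_le_sum (hE : E.Finite) (r : ℕ) :
    {A : Matrix μ ν K | (∀ i j, A i j ∈ E) ∧ A.rank = r}.ncard ≤
      ∑ s ∈ Finset.range (r + 1), ∑ fg : (Fin r → μ) × (Fin r → ν),
        (skeletonStratum E fg.1 fg.2 s).ncard := by
  have cover : {A : Matrix μ ν K | (∀ i j, A i j ∈ E) ∧ A.rank = r} ⊆
      ⋃ s ∈ Finset.range (r + 1), ⋃ fg ∈ (Finset.univ : Finset ((Fin r → μ) × (Fin r → ν))),
        skeletonStratum E fg.1 fg.2 s := by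
    rintro A ⟨hA, hr⟩
    obtain ⟨f, g, s, hs, hmem⟩ := exists_mem_skeletonStratum hA hr
    simp only [Set.mem_iUnion]
    exact ⟨s, Finset.mem_range_succ_iff.2 hs, (f, g), Finset.mem_univ _, hmem⟩
  have cover_finite : (⋃ s ∈ Finset.range (r + 1),
      ⋃ fg ∈ (Finset.univ : Finset ((Fin r → μ) × (Fin r → ν))),
        skeletonStratum E fg.1 fg.2 s).Finite :=
    (finite_setOf_forall_forall_mem hE).subset <|
      Set.iUnion₂_subset fun _ _ => Set.iUnion₂_subset fun _ _ _ hA => hA.1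
  refine (Set.ncard_le_ncard cover cover_finite).trans ((Finset.set_ncard_biUnion_le _ _).trans
    (Finset.sum_le_sum fun s _ => Finset.set_ncard_biUnion_le _ _))

end Strata

/-! ### Exponents -/

section Exponents

/-- The exponent of `H` in the bound for the `y : Fin r → ℚ` with unit fraction entries such that
`M *ᵥ y` has unit fraction entries too, where `s = maxRowWeight M`. A row of weight `s` gives a
relation between `s + 1` unit fractions, which has about `H ^ ((s + 1) / 2)` solutions; this beats
the trivial count `H ^ s` only for `s ≥ 2`. -/
noncomputable def columnExponent (r : ℕ) (ε : ℝ) (s : ℕ) : ℝ :=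
  if s ≤ 1 then r else r - ((s : ℝ) - 1) / 2 + ε

/-- The exponent of `H` in the bound for `skeletonStratum (Egyptian H) f g s` among the matrices of
size `m × n` and rank `r`: the `n - r` remaining columns, the `m - r` remaining rows of the left
block, and the `r × r` minor. The subtractions are truncated, which is harmless because the stratum
is empty when `m < r` or `n < r`. -/
noncomputable def stratumExponent (m n r : ℕ) (ε : ℝ) (s : ℕ) : ℝ :=
  columnExponent r ε s * (n - r : ℕ) + (s * (m - r) + r * r : ℕ)

variable {m n r s : ℕ} {ε : ℝ}

theorem stratumExponent_of_le_one (hm : r ≤ m) (hn : r ≤ n) (hs : s ≤ 1) :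
    stratumExponent m n r ε s = n * r + s * (m - r) := by
  rw [stratumExponent, columnExponent, if_pos hs]
  push_cast [hm, hn]
  ring

theorem stratumExponent_of_one_lt (hm : r ≤ m) (hn : r ≤ n) (hs : 1 < s) :
    stratumExponent m n r ε s =
      n * r + (m - r) + (s - 1) * ((2 * m - n - r) / 2) + ε * (n - r) := by
  rw [stratumExponent, columnExponent, if_neg hs.not_ge]
  push_cast [hm, hn]
  ring

theorem stratumExponent_le_of_add_le_two_mul (hm : r ≤ m) (hn : r ≤ n) (hmn : n + r ≤ 2 * m)
    (hε : 0 ≤ ε) (hs : s ≤ r) : stratumExponent m n r ε s ≤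
      (n - r) * (r + 1) / 2 + m * r + ε * (n - r) := by
  have hn' : 0 ≤ (n : ℝ) - r := sub_nonneg.2 (by exact_mod_cast hn)
  have hs' : (s : ℝ) ≤ r := by exact_mod_cast hs
  have slope_nonneg : (0 : ℝ) ≤ (2 * m - n - r) / 2 := by
    have : (n : ℝ) + r ≤ 2 * m := by exact_mod_cast hmn
    linarith
  have value_at_r : ((n : ℝ) - r) * (r + 1) / 2 + m * r =
      n * r + (m - r) + (r - 1) * ((2 * m - n - r) / 2) := by ring
  rw [value_at_r]
  obtain hs₁ | hs₁ := le_or_gt s 1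
  · rw [stratumExponent_of_le_one hm hn hs₁]
    interval_cases s <;> push_cast at hs' ⊢ <;> nlinarith
  · rw [stratumExponent_of_one_lt hm hn hs₁]
    gcongr

theorem stratumExponent_le_of_two_mul_lt_add (hm : r ≤ m) (hn : r ≤ n) (hmn : 2 * m < n + r)
    (hε : ε * (n - r) ≤ 1 / 2) : stratumExponent m n r ε s ≤ n * r + m - r := by
  obtain hs₁ | hs₁ := le_or_gt s 1
  · rw [stratumExponent_of_le_one hm hn hs₁]
    have hm' : 0 ≤ (m : ℝ) - r := sub_nonneg.2 (by exact_mod_cast hm)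
    have hs' : (s : ℝ) ≤ 1 := by exact_mod_cast hs₁
    linarith [mul_le_of_le_one_left hm' hs']
  · rw [stratumExponent_of_one_lt hm hn hs₁]
    have slope_le : ((2 : ℝ) * m - n - r) / 2 ≤ -(1 / 2) := by
      have : (2 * m + 1 : ℝ) ≤ n + r := by exact_mod_cast hmn
      linarith
    have hs' : (1 : ℝ) ≤ s - 1 := le_sub_iff_add_le.2 (by norm_num; exact_mod_cast hs₁)
    nlinarith

end Exponents

/-! ### Counting matrices of unit fractions -/

section UnitFractionMatrices

variable {ε : ℝ}

theorem ncard_forall_egyptian_le {ρ : Type*} [Fintype ρ] {H : ℝ} (hH : 0 ≤ H) (P : (ρ → ℚ) → Prop) :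
    ({y : ρ → ℚ | (∀ j, y j ∈ Egyptian H) ∧ P y}.ncard : ℝ) ≤
      2 ^ Fintype.card ρ * H ^ (Fintype.card ρ : ℝ) := by
  have subset : {y : ρ → ℚ | (∀ j, y j ∈ Egyptian H) ∧ P y} ⊆ {y | ∀ j, y j ∈ Egyptian H} :=
    fun y hy => hy.1
  have ncard_le := (Set.ncard_le_ncard subset (Set.Finite.pi' fun _ => egyptian_finite H)).trans_eq
    (ncard_setOf_forall_mem _)
  calc _ ≤ ((Egyptian H).ncard : ℝ) ^ Fintype.card ρ := by exact_mod_cast ncard_le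
    _ ≤ (2 * H) ^ Fintype.card ρ := by gcongr; exact egyptian_ncard_le hH
    _ = _ := by rw [mul_pow, Real.rpow_natCast]

theorem exists_ncard_columns_le (μ ρ : Type*) [Fintype μ] [Fintype ρ] [DecidableEq ρ]
    (hε : 0 < ε) :
    ∃ C : ℝ, 0 ≤ C ∧ ∀ H : ℝ, 0 < H → ∀ (X : Matrix ρ ρ ℚ) (M : Matrix μ ρ ℚ), X.det ≠ 0 →
      (∀ i j, X i j ∈ Egyptian H) → (∀ i j, (M * X) i j ∈ Egyptian H) →
      ({y : ρ → ℚ | (∀ j, y j ∈ Egyptian H) ∧ ∀ i, (M *ᵥ y) i ∈ Egyptian H}.ncard : ℝ) ≤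
        C * H ^ columnExponent (Fintype.card ρ) ε (maxRowWeight M) := by
  choose C hC dotProduct_le using
    fun S : Finset ρ => exists_ncard_dotProduct_mem_le S hε
  have sum_nonneg : 0 ≤ ∑ S, C S := Finset.sum_nonneg fun S _ => hC S
  refine ⟨2 ^ Fintype.card ρ + ∑ S, C S, by positivity, fun H hH X M hX hXH hMX => ?_⟩
  obtain hs | hs := le_or_gt (maxRowWeight M) 1
  · rw [columnExponent, if_pos hs]
    refine (ncard_forall_egyptian_le hH.le _).trans ?_
    gcongr
    exact le_add_of_nonneg_right sum_nonneg
  · rw [columnExponent, if_neg hs.not_ge]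
    obtain ⟨i, hi⟩ := exists_hammingNorm_eq_maxRowWeight (M := M) (by lia)
    let S : Finset ρ := {j | M i j ≠ 0}
    have hMs : maxRowWeight M = S.card := hi.symm
    have subset : {y : ρ → ℚ | (∀ j, y j ∈ Egyptian H) ∧ ∀ i, (M *ᵥ y) i ∈ Egyptian H} ⊆
        {y | (∀ j, y j ∈ Egyptian H) ∧ M i ⬝ᵥ y ∈ Egyptian H} := fun y hy => ⟨hy.1, hy.2 i⟩
    calc _ ≤ C S * H ^ (Fintype.card ρ - ((S.card : ℝ) - 1) / 2 + ε) :=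
          le_trans (by exact_mod_cast Set.ncard_le_ncard subset (finite_setOf_forall_egyptian H _))
            (dotProduct_le S H hH X (M i) hX hXH (hMX i) fun j => by simp [S])
      _ ≤ _ := by
        rw [hMs]
        gcongr
        exact (Finset.single_le_sum (fun S _ => hC S) (Finset.mem_univ S)).trans
          (le_add_of_nonneg_left (by positivity))

theorem exists_ncard_skeletonStratum_le (μ ν ρ : Type*) [Fintype μ] [Fintype ν] [Fintype ρ]
    [DecidableEq ρ] (hε : 0 < ε) (s : ℕ) :
    ∃ C : ℝ, 0 ≤ C ∧ ∀ H : ℝ, 1 ≤ H → ∀ (f : ρ → μ) (g : ρ → ν),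
      ((skeletonStratum (Egyptian H) f g s).ncard : ℝ) ≤
        C * H ^ stratumExponent (Fintype.card μ) (Fintype.card ν) (Fintype.card ρ) ε s := by
  obtain ⟨C, hC, columns_le⟩ := exists_ncard_columns_le μ ρ hε
  set m := Fintype.card μ
  set n := Fintype.card ν
  set r := Fintype.card ρ
  refine ⟨C ^ (n - r) * (2 ^ (r * (m - r)) * 2 ^ (s * (m - r) + r * r)), by positivity,
    fun H hH f g => ?_⟩
  have hH₀ : 0 < H := one_pos.trans_le hH
  set x := columnExponent r ε s
  set q := (Egyptian H).ncard
  have hp : ∀ G ∈ leftBlocks (Egyptian H) f s, {y : ρ → ℚ | (∀ j, y j ∈ Egyptian H) ∧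
      ∀ i, (rowCoeffs f G *ᵥ y) i ∈ Egyptian H}.ncard ≤ ⌊C * H ^ x⌋₊ := by
    rintro G ⟨hGH, hdet, rfl⟩
    exact Nat.le_floor (columns_le H hH₀ _ _ hdet (fun i j => hGH _ _)
      ((rowCoeffs_mul_submatrix hdet).symm ▸ hGH))
  have ncard_le : (skeletonStratum (Egyptian H) f g s).ncard ≤
      ⌊C * H ^ x⌋₊ ^ (n - r) * ((2 ^ r * q ^ s) ^ (m - r) * q ^ (r * r)) :=
    (ncard_skeletonStratum_le (egyptian_finite H) hp).trans
      (Nat.mul_le_mul_left _ (ncard_leftBlocks_le (egyptian_finite H) (egyptian_nonempty hH)))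
  calc _ ≤ (⌊C * H ^ x⌋₊ : ℝ) ^ (n - r) * ((2 ^ r * (q : ℝ) ^ s) ^ (m - r) * q ^ (r * r)) := by
        exact_mod_cast ncard_le
    _ ≤ (C * H ^ x) ^ (n - r) * ((2 ^ r * (2 * H) ^ s) ^ (m - r) * (2 * H) ^ (r * r)) := by
        gcongr
        exacts [Nat.floor_le (by positivity), egyptian_ncard_le hH₀.le, egyptian_ncard_le hH₀.le]
    _ = C ^ (n - r) * (2 ^ (r * (m - r)) * 2 ^ (s * (m - r) + r * r)) *
          ((H ^ x) ^ (n - r) * H ^ (s * (m - r) + r * r)) := by ring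
    _ = _ := by
        rw [stratumExponent, Real.rpow_add hH₀, Real.rpow_mul_natCast hH₀.le, Real.rpow_natCast]

theorem exists_ncard_rank_eq_le (μ ν : Type*) [Fintype μ] [Fintype ν] (r : ℕ) (hε : 0 < ε) :
    ∃ C : ℝ, 0 ≤ C ∧ ∀ H : ℝ, 1 ≤ H → ∀ e : ℝ, (r ≤ Fintype.card μ → r ≤ Fintype.card ν →
      ∀ s ≤ r, stratumExponent (Fintype.card μ) (Fintype.card ν) r ε s ≤ e) →
      ({A : Matrix μ ν ℚ | (∀ i j, A i j ∈ Egyptian H) ∧ A.rank = r}.ncard : ℝ) ≤ C * H ^ e := by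
  choose C hC stratum_le using exists_ncard_skeletonStratum_le μ ν (Fin r) hε
  simp only [Fintype.card_fin] at stratum_le
  refine ⟨∑ s ∈ Finset.range (r + 1), ∑ _ : (Fin r → μ) × (Fin r → ν), C s,
    Finset.sum_nonneg fun s _ => Finset.sum_nonneg fun _ _ => hC s, fun H hH e he => ?_⟩
  obtain hempty | ⟨A, -, hA⟩ :=
    {A : Matrix μ ν ℚ | (∀ i j, A i j ∈ Egyptian H) ∧ A.rank = r}.eq_empty_or_nonempty
  · rw [hempty, Set.ncard_empty, Nat.cast_zero]
    exact mul_nonneg (Finset.sum_nonneg fun s _ => Finset.sum_nonneg fun _ _ => hC s)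
      (Real.rpow_nonneg (zero_le_one.trans hH) e)
  replace he := he (hA ▸ A.rank_le_card_height) (hA ▸ A.rank_le_card_width)
  calc _ ≤ ∑ s ∈ Finset.range (r + 1), ∑ fg : (Fin r → μ) × (Fin r → ν),
        ((skeletonStratum (Egyptian H) fg.1 fg.2 s).ncard : ℝ) := by
        exact_mod_cast ncard_rank_eq_le_sum (egyptian_finite H) r
    _ ≤ ∑ s ∈ Finset.range (r + 1), ∑ _ : (Fin r → μ) × (Fin r → ν), C s * H ^ e := by
        gcongr with s hs fg
        refine (stratum_le s H hH fg.1 fg.2).trans ?_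
        gcongr
        exacts [hC s, he s (Finset.mem_range_succ_iff.1 hs)]
    _ = _ := by simp only [Finset.sum_mul]

end UnitFractionMatrices

theorem stmt10_general (m n r : ℕ) {ε : ℝ} (hε : 0 < ε) : ∃ C : ℝ, ∀ H : ℝ, 1 ≤ H →
    (n + r ≤ 2 * m →
      ({A : Matrix (Fin m) (Fin n) ℚ | (∀ i j, A i j ∈ Egyptian H) ∧ A.rank = r}.ncard : ℝ) ≤
        C * H ^ (((n : ℝ) - r) * ((r : ℝ) + 1) / 2 + m * r + ε)) ∧
    (2 * m < n + r →
      ({A : Matrix (Fin m) (Fin n) ℚ | (∀ i j, A i j ∈ Egyptian H) ∧ A.rank = r}.ncard : ℝ) ≤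
        C * H ^ ((n * r + m : ℝ) - r)) := by
  set δ := min ε (1 / 2) / (n + 1)
  have hδ₀ : 0 < δ := by positivity
  have δ_mul_le : δ * (n - r) ≤ min ε (1 / 2) := calc
    δ * (n - r) ≤ δ * (n + 1) := by gcongr; linarith [Nat.cast_nonneg (α := ℝ) r]
    _ = min ε (1 / 2) := div_mul_cancel₀ _ (by positivity)
  obtain ⟨C, -, rank_le⟩ := exists_ncard_rank_eq_le (Fin m) (Fin n) r hδ₀
  simp only [Fintype.card_fin] at rank_le
  refine ⟨C, fun H hH => ⟨fun hmn => rank_le H hH _ fun hm hn s hs => ?_,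
    fun hmn => rank_le H hH _ fun hm hn s _ => ?_⟩⟩
  · exact (stratumExponent_le_of_add_le_two_mul hm hn hmn hδ₀.le hs).trans
      (by gcongr; exact δ_mul_le.trans (min_le_left _ _))
  · exact stratumExponent_le_of_two_mul_lt_add hm hn hmn (δ_mul_le.trans (min_le_right _ _))

theorem stmt10 (m n r : ℕ) (hnm : n ≥ m) (hmr : m > r) (hr : r ≥ 3) :
    ∀ ε > (0 : ℝ), ∃ C : ℝ, ∀ H : ℝ, H ≥ 2 →
      (2 * m ≥ n + r →
        (Set.ncard {A : Matrix (Fin m) (Fin n) ℚ |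
            (∀ i j, A i j ∈ Egyptian H) ∧ A.rank = r} : ℝ) ≤
          C * H ^ (((n : ℝ) - r) * ((r : ℝ) + 1) / 2 + m * r + ε)) ∧
      (2 * m < n + r →
        (Set.ncard {A : Matrix (Fin m) (Fin n) ℚ |
            (∀ i j, A i j ∈ Egyptian H) ∧ A.rank = r} : ℝ) ≤
          C * H ^ ((n * r + m : ℝ) - r)) := by
  intro ε hε
  obtain ⟨C, hC⟩ := stmt10_general m n r hε
  exact ⟨C, fun H hH => hC H (one_le_two.trans hH)⟩
end

section
/- Let n ≥ 2 be an integer. For every ε > 0 there exists a constant C = C(n, ε) such that for all real H ≥ 2 and all nonzero δ ∈ ℚ, the number of n×n matrices with all entries in E(H) and with determinant equal to δ is at most C·H^{ε} if n = 2, at most C·H^{7+ε} if n = 3, and at most C·H^{n²−n/2−1/(2n−2)+ε} if n ≥ 4. -/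
/-!
Expanding the determinant along a row turns `A.det = δ` into a linear equation `v ⬝ᵥ x = δ` in unit
fractions `x`, whose coefficients `v` are cofactors of polynomial height. A prime that divides the
denominator of some `x i` but occurs in none of the data `v`, `δ` must divide a second denominator,
so the product `P` of these primes satisfies `P ^ 2 ≤ N ^ k`, where `k` is the number of unknowns.
By Rankin's trick there are only `N ^ ε` solutions for each `P`, hence `N ^ (k / 2 + ε)` in all.

If `δ ≠ 0`, a power of `N` is saved. Either many primes of `P` occur three times, and `P` is
smaller, or two denominators share a large factor. In the latter case this factor is determined by
the other primes, unless the partial sum over these two unknowns vanishes, and then the remaining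
unknowns solve an equation of the same kind with two unknowns fewer.

Vanishing cofactors leave some entries of the row free. This loss is recovered in the other rows:
they satisfy the homogeneous equation with the same coefficients, and few of them suffice to
imply it for all the others.
-/

namespace Egyptian

section Rankin
open Finset

lemma card_le_card_mul_of_card_fiber_le {α β : Type*} [DecidableEq β] {s : Finset α} {t : Finset β}
    {f : α → β} (hf : ∀ a ∈ s, f a ∈ t) {M : ℝ} (hM : ∀ b ∈ t, (#{a ∈ s | f a = b} : ℝ) ≤ M) :
    (#s : ℝ) ≤ #t * M := by
  rw [card_eq_sum_card_fiberwise hf, Nat.cast_sum, ← nsmul_eq_mul]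
  exact sum_le_card_nsmul t _ M hM

lemma prod_primes_pow_dvd {s : Finset ℕ} {e n : ℕ} (hs : ∀ p ∈ s, p.Prime)
    (h : ∀ p ∈ s, p ^ e ∣ n) : (∏ p ∈ s, p) ^ e ∣ n := by
  rw [← prod_pow]
  refine prod_dvd_of_isRelPrime (fun p hp q hq hpq ↦ ?_) h
  exact Nat.coprime_iff_isRelPrime.1 <|
    Nat.Coprime.pow e e ((Nat.coprime_primes (hs p hp) (hs q hq)).2 hpq)

lemma inv_one_sub_inv_le_self {y : ℝ} (hy : 2 ≤ y) : (1 - y⁻¹)⁻¹ ≤ y := by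
  have hinv : y⁻¹ ≤ 2⁻¹ := inv_anti₀ two_pos hy
  exact inv_le_of_inv_le₀ (by linarith) (by linarith)

lemma one_le_inv_one_sub_rpow_neg {ε : ℝ} (hε : 0 < ε) {p : ℕ} (hp : p.Prime) :
    1 ≤ (1 - (p : ℝ) ^ (-ε))⁻¹ := by
  have hlt : (p : ℝ) ^ (-ε) < 1 :=
    Real.rpow_lt_one_of_one_lt_of_neg (mod_cast hp.one_lt) (neg_neg_iff_pos.2 hε)
  have hpos : 0 ≤ (p : ℝ) ^ (-ε) := by positivity
  exact (one_le_inv₀ (by linarith)).2 (by linarith)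

/- Only the primes with `p ^ ε < 2` can have an Euler factor exceeding `p ^ ε`, and there are
finitely many of them. -/
lemma exists_prod_primeFactors_inv_one_sub_rpow_neg_le {ε : ℝ} (hε : 0 < ε) :
    ∃ C > 0, ∀ Q : ℕ, Q ≠ 0 →
      ∏ p ∈ Q.primeFactors, (1 - (p : ℝ) ^ (-ε))⁻¹ ≤ C * (Q : ℝ) ^ ε := by
  obtain ⟨B, hB⟩ := exists_nat_ge ((2 : ℝ) ^ (1 / ε))
  have one_le : ∀ p ∈ {p ∈ range B | p.Prime}, 1 ≤ (1 - (p : ℝ) ^ (-ε))⁻¹ := fun p hp ↦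
    one_le_inv_one_sub_rpow_neg hε (mem_filter.1 hp).2
  refine ⟨∏ p ∈ range B with p.Prime, (1 - (p : ℝ) ^ (-ε))⁻¹,
    prod_pos fun p hp ↦ one_pos.trans_le (one_le p hp), fun Q hQ ↦ ?_⟩
  have pos : ∀ p ∈ Q.primeFactors, 0 ≤ (1 - (p : ℝ) ^ (-ε))⁻¹ := fun p hp ↦
    zero_le_one.trans (one_le_inv_one_sub_rpow_neg hε (Nat.prime_of_mem_primeFactors hp))
  have small : ∏ p ∈ Q.primeFactors with p < B, (1 - (p : ℝ) ^ (-ε))⁻¹ ≤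
      ∏ p ∈ range B with p.Prime, (1 - (p : ℝ) ^ (-ε))⁻¹ := by
    refine prod_le_prod_of_subset_of_one_le (fun p hp ↦ ?_) (fun p hp ↦ ?_)
      fun p hp _ ↦ one_le p hp
    · rw [mem_filter] at hp ⊢
      exact ⟨mem_range.2 hp.2, Nat.prime_of_mem_primeFactors hp.1⟩
    · exact pos p (mem_filter.1 hp).1
  have large : ∏ p ∈ Q.primeFactors with ¬ p < B, (1 - (p : ℝ) ^ (-ε))⁻¹ ≤ (Q : ℝ) ^ ε := by
    calc ∏ p ∈ Q.primeFactors with ¬ p < B, (1 - (p : ℝ) ^ (-ε))⁻¹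
        ≤ ∏ p ∈ Q.primeFactors with ¬ p < B, (p : ℝ) ^ ε := by
          refine prod_le_prod (fun p hp ↦ pos p (mem_filter.1 hp).1) fun p hp ↦ ?_
          rw [Real.rpow_neg p.cast_nonneg]
          refine inv_one_sub_inv_le_self ?_
          have hBp : (2 : ℝ) ^ (1 / ε) ≤ p := hB.trans (mod_cast not_lt.1 (mem_filter.1 hp).2)
          calc (2 : ℝ) = ((2 : ℝ) ^ (1 / ε)) ^ ε := by
                rw [← Real.rpow_mul zero_le_two, one_div_mul_cancel hε.ne', Real.rpow_one]
            _ ≤ (p : ℝ) ^ ε := by gcongr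
      _ = ((∏ p ∈ Q.primeFactors with ¬ p < B, p : ℕ) : ℝ) ^ ε := by
          rw [Real.finsetProd_rpow _ _ fun p _ ↦ p.cast_nonneg, Nat.cast_prod]
      _ ≤ (Q : ℝ) ^ ε := by
          gcongr
          refine Nat.le_of_dvd (Nat.pos_of_ne_zero hQ) (dvd_trans ?_ Q.prod_primeFactors_dvd)
          exact prod_dvd_prod_of_subset _ _ _ (filter_subset _ _)
  rw [← prod_filter_mul_prod_filter_not Q.primeFactors (· < B)]
  exact mul_le_mul small large (prod_nonneg fun p hp ↦ pos p (mem_filter.1 hp).1)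
    (prod_nonneg fun p hp ↦ zero_le_one.trans (one_le p hp))

lemma sum_rpow_neg_le_prod_primeFactors {ε : ℝ} (hε : 0 < ε) (Q : ℕ) {s : Finset ℕ}
    (hs : ∀ m ∈ s, m ≠ 0 ∧ m.primeFactors ⊆ Q.primeFactors) :
    ∑ m ∈ s, (m : ℝ) ^ (-ε) ≤ ∏ p ∈ Q.primeFactors, (1 - (p : ℝ) ^ (-ε))⁻¹ := by
  let f : ℕ →* ℝ :=
    { toFun m := (m : ℝ) ^ (-ε)
      map_one' := by simp only [Nat.cast_one, Real.one_rpow]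
      map_mul' a b := by
        rw [Nat.cast_mul, Real.mul_rpow a.cast_nonneg b.cast_nonneg] }
  have f_nonneg (m : ℕ) : 0 ≤ f m := Real.rpow_nonneg m.cast_nonneg _
  have norm_lt_one {p : ℕ} (hp : p.Prime) : ‖f p‖ < 1 := by
    rw [Real.norm_of_nonneg (f_nonneg p)]
    exact Real.rpow_lt_one_of_one_lt_of_neg (mod_cast hp.one_lt) (neg_neg_iff_pos.2 hε)
  have euler := (EulerProduct.summable_and_hasSum_factoredNumbers_prod_filter_prime_geometric
    norm_lt_one Q.primeFactors).2
  rw [filter_true_of_mem fun p hp ↦ Nat.prime_of_mem_primeFactors hp] at euler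
  let g : s ↪ Nat.factoredNumbers Q.primeFactors :=
    ⟨fun m ↦ ⟨m, Nat.mem_factoredNumbers_iff_primeFactors_subset.2 (hs m m.2)⟩,
      fun _ _ h ↦ Subtype.ext (Subtype.mk.inj h)⟩
  have partial_sum := sum_le_hasSum (univ.map g) (fun m _ ↦ f_nonneg m) euler
  rw [sum_map] at partial_sum
  exact (sum_coe_sort s fun m ↦ (m : ℝ) ^ (-ε)).symm.trans_le partial_sum

/- Rankin's trick: each `m ≤ N` contributes at least `N ^ (-ε)` to the Dirichlet series of the
integers composed of primes dividing `Q`, whose value is a finite Euler product. -/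
lemma exists_card_primeFactors_subset_le {ε : ℝ} (hε : 0 < ε) :
    ∃ C > 0, ∀ Q : ℕ, Q ≠ 0 → ∀ N : ℕ,
      (#{m ∈ Icc 1 N | m.primeFactors ⊆ Q.primeFactors} : ℝ) ≤ C * ((Q : ℝ) * N) ^ ε := by
  obtain ⟨C, hC, hprod⟩ := exists_prod_primeFactors_inv_one_sub_rpow_neg_le hε
  refine ⟨C, hC, fun Q hQ N ↦ ?_⟩
  rcases N.eq_zero_or_pos with rfl | hN
  · simp only [Icc_eq_empty_of_lt Nat.zero_lt_one, filter_empty, card_empty, Nat.cast_zero]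
    positivity
  set s : Finset ℕ := {m ∈ Icc 1 N | m.primeFactors ⊆ Q.primeFactors} with hs
  have mem_s {m : ℕ} (hm : m ∈ s) : (1 ≤ m ∧ m ≤ N) ∧ m.primeFactors ⊆ Q.primeFactors := by
    rwa [hs, mem_filter, mem_Icc] at hm
  have lower : #s * (N : ℝ) ^ (-ε) ≤ ∑ m ∈ s, (m : ℝ) ^ (-ε) := by
    rw [← nsmul_eq_mul]
    refine card_nsmul_le_sum s _ _ fun m hm ↦ ?_
    obtain ⟨⟨hm1, hmN⟩, -⟩ := mem_s hm
    exact Real.rpow_le_rpow_of_nonpos (mod_cast hm1) (mod_cast hmN) (neg_nonpos.2 hε.le)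
  have upper := (sum_rpow_neg_le_prod_primeFactors hε Q fun m hm ↦
    ⟨Nat.one_le_iff_ne_zero.1 (mem_s hm).1.1, (mem_s hm).2⟩).trans (hprod Q hQ)
  have hNε : 0 < (N : ℝ) ^ ε := by positivity
  rw [Real.mul_rpow Q.cast_nonneg N.cast_nonneg, ← mul_assoc, ← div_le_iff₀ hNε, div_eq_mul_inv,
    ← Real.rpow_neg N.cast_nonneg]
  exact lower.trans upper

lemma exists_card_divisors_le {ε : ℝ} (hε : 0 < ε) :
    ∃ C > 0, ∀ D : ℕ, (#D.divisors : ℝ) ≤ C * (D : ℝ) ^ ε := by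
  obtain ⟨C, hC, hcard⟩ := exists_card_primeFactors_subset_le (half_pos hε)
  refine ⟨C, hC, fun D ↦ ?_⟩
  rcases eq_or_ne D 0 with rfl | hD
  · simp only [Nat.divisors_zero, card_empty, Nat.cast_zero]
    positivity
  have hsub : D.divisors ⊆ {m ∈ Icc 1 D | m.primeFactors ⊆ D.primeFactors} := fun m hm ↦ by
    have hdvd := Nat.dvd_of_mem_divisors hm
    exact mem_filter.2 ⟨mem_Icc.2 ⟨Nat.pos_of_mem_divisors hm, Nat.divisor_le hm⟩,
      Nat.primeFactors_mono hdvd hD⟩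
  calc (#D.divisors : ℝ) ≤ #{m ∈ Icc 1 D | m.primeFactors ⊆ D.primeFactors} := by
        exact_mod_cast card_le_card hsub
    _ ≤ C * ((D : ℝ) * D) ^ (ε / 2) := hcard D hD D
    _ = C * (D : ℝ) ^ ε := by
        rw [← sq, ← Real.rpow_natCast_mul D.cast_nonneg, Nat.cast_two,
          mul_div_cancel₀ _ two_ne_zero]

end Rankin

section UnitFractions
open Finset Height

/-- The set `Egyptian N` as a finset, for a natural number `N`. -/
noncomputable def unitFractions (N : ℕ) : Finset ℚ :=
  ((Icc (-N : ℤ) N).erase 0).image fun a : ℤ ↦ (a : ℚ)⁻¹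

variable {N d m : ℕ} {q : ℚ}

lemma mem_unitFractions : q ∈ unitFractions N ↔ q.num.natAbs = 1 ∧ q.den ≤ N := by
  simp only [unitFractions, mem_image, mem_erase, mem_Icc]
  constructor
  · rintro ⟨a, ⟨ha, hlo, hhi⟩, rfl⟩
    rw [Rat.inv_intCast_num, Rat.inv_intCast_den, if_neg ha]
    exact ⟨Int.natAbs_sign_of_ne_zero ha, by lia⟩
  · rintro ⟨hnum, hden⟩
    have hden_pos := q.den_pos
    refine ⟨q.num * q.den, ?_, ?_⟩
    · rcases Int.natAbs_eq_iff.1 hnum with h | h <;> rw [h] <;> lia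
    · nth_rw 3 [← Rat.num_div_den q]
      rcases Int.natAbs_eq_iff.1 hnum with h | h <;> · rw [h]; simp [neg_div]

lemma mem_unitFractions_floor {H : ℝ} (hH : 0 ≤ H) : q ∈ unitFractions ⌊H⌋₊ ↔ q ∈ Egyptian H := by
  simp only [unitFractions, mem_image, mem_erase, mem_Icc, Egyptian, Set.mem_ofPred_eq, one_div,
    and_assoc, eq_comm (a := q)]
  refine exists_congr fun a ↦ and_congr_right fun _ ↦ ?_
  rw [← and_assoc, ← abs_le, ← Int.cast_abs, Int.natCast_floor_eq_floor hH, Int.le_floor]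

lemma ne_zero_of_mem_unitFractions (hq : q ∈ unitFractions N) : q ≠ 0 := by
  rintro rfl
  simp [mem_unitFractions] at hq

lemma exists_eq_inv_of_mem_unitFractions (hq : q ∈ unitFractions N) :
    ∃ a : ℤ, a ≠ 0 ∧ q = (a : ℚ)⁻¹ := by
  obtain ⟨a, ha, rfl⟩ := mem_image.1 hq
  exact ⟨a, ne_of_mem_erase ha, rfl⟩

lemma num_den_le_of_mulHeight₁_le (hq : mulHeight₁ q ≤ (N : ℝ) ^ m) :
    q.num.natAbs ≤ N ^ m ∧ q.den ≤ N ^ m := by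
  rw [Rat.mulHeight₁_eq_max] at hq
  exact max_le_iff.1 (mod_cast hq)

lemma mulHeight₁_le_of_mem_unitFractions (hq : q ∈ unitFractions N) : mulHeight₁ q ≤ N := by
  rw [mem_unitFractions] at hq
  rw [Rat.mulHeight₁_eq_max, hq.1, max_eq_right q.den_pos]
  exact_mod_cast hq.2

lemma card_filter_unitFractions_le (P : ℕ → Prop) [DecidablePred P] :
    #{q ∈ unitFractions N | P q.den} ≤ 2 * #{m ∈ Icc 1 N | P m} := by
  refine card_le_mul_card_image_of_maps_to (f := Rat.den) (fun q hq ↦ ?_) 2 fun m _ ↦ ?_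
  · rw [mem_filter, mem_unitFractions] at hq
    exact mem_filter.2 ⟨mem_Icc.2 ⟨q.den_pos, hq.1.2⟩, hq.2⟩
  · refine (card_le_card fun q hq ↦ ?_).trans (card_le_two (a := (1 / m : ℚ)) (b := (-1 / m : ℚ)))
    simp only [mem_filter, mem_unitFractions] at hq
    obtain ⟨⟨⟨hnum, -⟩, -⟩, rfl⟩ := hq
    rw [mem_insert, mem_singleton]
    refine (Int.natAbs_eq_iff.1 hnum).imp (fun h ↦ ?_) fun h ↦ ?_ <;>
      · nth_rw 1 [← Rat.num_div_den q, h]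
        norm_num

lemma card_unitFractions_le : #(unitFractions N) ≤ 2 * N := by
  simpa using card_filter_unitFractions_le (N := N) fun _ ↦ True

lemma card_piFinset_unitFractions_le {ι : Type*} [Fintype ι] [DecidableEq ι] :
    #(Fintype.piFinset fun _ : ι ↦ unitFractions N) ≤ (2 * N) ^ Fintype.card ι := by
  rw [Fintype.card_piFinset, prod_const, card_univ]
  exact Nat.pow_le_pow_left card_unitFractions_le _

/-- The unit fractions of height at most `N` whose denominators are composed of primes dividing `Q`;
for `Q` bounded by a power of `N` there are only `N ^ ε` of them. -/
noncomputable def smoothUnitFractions (N Q : ℕ) : Finset ℚ :=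
  {q ∈ unitFractions N | q.den.primeFactors ⊆ Q.primeFactors}

lemma exists_card_smoothUnitFractions_le {ε : ℝ} (hε : 0 < ε) :
    ∃ C > 0, ∀ Q : ℕ, Q ≠ 0 → ∀ N : ℕ,
      (#(smoothUnitFractions N Q) : ℝ) ≤ C * ((Q : ℝ) * N) ^ ε := by
  obtain ⟨C, hC, hcard⟩ := exists_card_primeFactors_subset_le hε
  refine ⟨2 * C, by positivity, fun Q hQ N ↦ ?_⟩
  calc (#(smoothUnitFractions N Q) : ℝ)
      ≤ 2 * #{m ∈ Icc 1 N | m.primeFactors ⊆ Q.primeFactors} := by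
        exact_mod_cast card_filter_unitFractions_le fun m ↦ m.primeFactors ⊆ Q.primeFactors
    _ ≤ 2 * C * ((Q : ℝ) * N) ^ ε := by
        rw [mul_assoc]
        gcongr
        exact hcard Q hQ N

lemma exists_card_piFinset_smoothUnitFractions_le (ι : Type*) [Fintype ι] [DecidableEq ι]
    {ε : ℝ} (hε : 0 < ε) (m : ℕ) :
    ∃ C > 0, ∀ N : ℕ, 1 ≤ N → ∀ Q : ℕ, Q ≠ 0 → Q ≤ N ^ m →
      (#(Fintype.piFinset fun _ : ι ↦ smoothUnitFractions N Q) : ℝ) ≤ C * (N : ℝ) ^ ε := by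
  set k := Fintype.card ι with hk
  set ε' := ε / ((m + 1) * (k + 1)) with hε'
  obtain ⟨C, hC, hsmooth⟩ := exists_card_smoothUnitFractions_le (show 0 < ε' by positivity)
  refine ⟨C ^ k, by positivity, fun N hN Q hQ hQN ↦ ?_⟩
  have hN1 : (1 : ℝ) ≤ N := mod_cast hN
  have hexp : (m + 1 : ℕ) * ε' * k ≤ ε := by
    rw [hε', Nat.cast_add_one, mul_div_assoc', mul_div_mul_left _ _ (by positivity),
      div_mul_eq_mul_div, div_le_iff₀ (by positivity)]
    linarith
  rw [Fintype.card_piFinset, prod_const, card_univ, ← hk, Nat.cast_pow]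
  calc (#(smoothUnitFractions N Q) : ℝ) ^ k ≤ (C * ((Q : ℝ) * N) ^ ε') ^ k := by
        gcongr
        exact hsmooth Q hQ N
    _ ≤ (C * ((N : ℝ) ^ (m + 1)) ^ ε') ^ k := by
        rw [pow_succ]
        gcongr
        exact_mod_cast hQN
    _ = C ^ k * (N : ℝ) ^ ((m + 1 : ℕ) * ε' * k) := by
        rw [mul_pow, ← Real.rpow_natCast_mul N.cast_nonneg, ← Real.rpow_mul_natCast N.cast_nonneg]
    _ ≤ C ^ k * (N : ℝ) ^ ε := by gcongr

/- Once the factor `R x` of the denominators is known, only primes dividing `Q * R x` remain. -/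
lemma exists_card_le_of_code {α : Type*} (ι : Type*) [Fintype ι] [DecidableEq ι]
    {ε : ℝ} (hε : 0 < ε) (m : ℕ) :
    ∃ C > 0, ∀ N : ℕ, 1 ≤ N → ∀ (Q : ℕ) (Y : ℝ) (s : Finset α) (R : α → ℕ)
      (code : α → ι → ℚ), 0 ≤ Y →
      (∀ x ∈ s, Q * R x ≠ 0 ∧ Q * R x ≤ N ^ m ∧ (R x : ℝ) ≤ Y) →
      (∀ x ∈ s, code x ∈ Fintype.piFinset fun _ ↦ smoothUnitFractions N (Q * R x)) →
      (∀ x ∈ s, ∀ y ∈ s, R x = R y → code x = code y → x = y) →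
      (#s : ℝ) ≤ C * Y * (N : ℝ) ^ ε := by
  obtain ⟨C, hC, hsmooth⟩ := exists_card_piFinset_smoothUnitFractions_le ι hε m
  refine ⟨C, hC, fun N hN Q Y s R code hY hR hcode hinj ↦ ?_⟩
  have card_image : (#(s.image R) : ℝ) ≤ Y := by
    refine (Nat.cast_le.2 (card_le_card (t := Icc 1 ⌊Y⌋₊) fun r hr ↦ ?_)).trans ?_
    · obtain ⟨x, hx, rfl⟩ := mem_image.1 hr
      obtain ⟨hne, -, hle⟩ := hR x hx
      exact mem_Icc.2 ⟨Nat.pos_of_ne_zero (right_ne_zero_of_mul hne), Nat.le_floor hle⟩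
    · rw [Nat.card_Icc, Nat.add_sub_cancel]
      exact Nat.floor_le hY
  have card_fiber : ∀ r ∈ s.image R, (#{x ∈ s | R x = r} : ℝ) ≤ C * (N : ℝ) ^ ε := by
    intro r hr
    obtain ⟨x₀, hx₀, rfl⟩ := mem_image.1 hr
    obtain ⟨hne, hle, -⟩ := hR x₀ hx₀
    refine (Nat.cast_le.2 (card_le_card_of_injOn code (fun x hx ↦ ?_) fun x hx y hy hxy ↦ ?_)).trans
      (hsmooth N hN _ hne hle)
    · obtain ⟨hxs, hxR⟩ := mem_filter.1 hx
      exact hxR ▸ hcode x hxs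
    · obtain ⟨hxs, hxR⟩ := mem_filter.1 hx
      obtain ⟨hys, hyR⟩ := mem_filter.1 hy
      exact hinj x hxs y hys (hxR.trans hyR.symm) hxy
  calc (#s : ℝ) ≤ #(s.image R) * (C * (N : ℝ) ^ ε) :=
        card_le_card_mul_of_card_fiber_le (fun x hx ↦ mem_image_of_mem R hx) card_fiber
    _ ≤ Y * (C * (N : ℝ) ^ ε) := by gcongr
    _ = C * Y * (N : ℝ) ^ ε := by ring

lemma num_and_den_natCast_mul (h : q.den = d * m) :
    (d * q : ℚ).num = q.num ∧ (d * q : ℚ).den = m := by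
  have hdm : d * m ≠ 0 := h ▸ q.den_ne_zero
  have hd : (d : ℚ) ≠ 0 := mod_cast left_ne_zero_of_mul hdm
  have heq : (d * q : ℚ) = (q.num : ℚ) / ((m : ℤ) : ℚ) := by
    nth_rw 1 [← Rat.num_div_den q, h]
    push_cast
    rw [← mul_div_assoc, mul_div_mul_left _ _ hd]
  have hm : (0 : ℤ) < m := mod_cast Nat.pos_of_ne_zero (right_ne_zero_of_mul hdm)
  have hcop : q.num.natAbs.Coprime (m : ℤ).natAbs :=
    q.reduced.coprime_dvd_right (h ▸ dvd_mul_left m d)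
  rw [heq]
  exact ⟨Rat.num_div_eq_of_coprime hm hcop, mod_cast Rat.den_div_eq_of_coprime hm hcop⟩

lemma natCast_mul_mem_unitFractions (hq : q ∈ unitFractions N) (h : q.den = d * m) :
    (d * q : ℚ) ∈ unitFractions N := by
  rw [mem_unitFractions] at hq ⊢
  obtain ⟨hnum, hden⟩ := num_and_den_natCast_mul h
  rw [hnum, hden]
  exact ⟨hq.1, (Nat.le_of_dvd q.den_pos (h ▸ dvd_mul_left m d)).trans hq.2⟩

end UnitFractions

section Solutions
open Finset Height

variable {ι : Type*}

lemma den_sum_dvd (s : Finset ι) (f : ι → ℚ) : (∑ i ∈ s, f i).den ∣ ∏ i ∈ s, (f i).den := by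
  classical
  induction s using Finset.induction_on with
  | empty => simp only [sum_empty, prod_empty, Rat.den_zero, dvd_refl]
  | insert i s hi ih =>
    rw [sum_insert hi, prod_insert hi]
    exact (Rat.add_den_dvd _ _).trans (mul_dvd_mul_left _ ih)

lemma natCast_le_rpow_of_pow_le {N a n : ℕ} {t : ℝ} (ha : a ≠ 0)
    (h : (n : ℝ) ^ a ≤ (N : ℝ) ^ (a * t)) :
    (n : ℝ) ≤ (N : ℝ) ^ t := by
  rw [mul_comm, Real.rpow_mul_natCast N.cast_nonneg] at h
  exact le_of_pow_le_pow_left₀ ha (by positivity) h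

/-- The heights of the data of the linear equation `v ⬝ᵥ x = c` are at most `B`. -/
def HeightLE (v : ι → ℚ) (c : ℚ) (B : ℝ) : Prop := (∀ i, mulHeight₁ (v i) ≤ B) ∧ mulHeight₁ c ≤ B

lemma HeightLE.restrict {v : ι → ℚ} {c : ℚ} {B : ℝ} (h : HeightLE v c B) (K : Finset ι) :
    HeightLE (K.restrict v) c B :=
  ⟨fun i ↦ h.1 i, h.2⟩

variable [Fintype ι]

/-- A product of the bad primes of the equation `v ⬝ᵥ x = c` with nonzero coefficients: at any
prime not dividing it the coefficients are units and `c` is integral. -/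
def modulus (v : ι → ℚ) (c : ℚ) : ℕ := c.den * ∏ i, (v i).num.natAbs * (v i).den

variable {v x : ι → ℚ} {c : ℚ} {N m p : ℕ}

lemma modulus_ne_zero (hv : ∀ i, v i ≠ 0) : modulus v c ≠ 0 :=
  mul_ne_zero c.den_ne_zero <| prod_ne_zero_iff.2 fun i _ ↦
    mul_ne_zero (Int.natAbs_ne_zero.2 (Rat.num_ne_zero.2 (hv i))) (v i).den_ne_zero

lemma modulus_le (h : HeightLE v c ((N : ℝ) ^ m)) :
    modulus v c ≤ (N ^ m) ^ (2 * Fintype.card ι + 1) := by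
  calc modulus v c ≤ N ^ m * ∏ _i : ι, N ^ m * N ^ m :=
        Nat.mul_le_mul (num_den_le_of_mulHeight₁_le h.2).2 <| prod_le_prod' fun i _ ↦
          Nat.mul_le_mul (num_den_le_of_mulHeight₁_le (h.1 i)).1
            (num_den_le_of_mulHeight₁_le (h.1 i)).2
    _ = (N ^ m) ^ (2 * Fintype.card ι + 1) := by
        rw [prod_const, card_univ, ← sq, ← pow_mul, pow_succ']

/-- The primes in the denominators of `x` that are forced to repeat when `v ⬝ᵥ x = c`. -/
def newPrimes (v : ι → ℚ) (c : ℚ) (x : ι → ℚ) : Finset ℕ :=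
  (∏ i, (x i).den).primeFactors \ (modulus v c).primeFactors

/-- The product of the `newPrimes`. Together with `modulus v c` it contains every prime dividing a
denominator of `x`, and so determines `x` up to `N ^ ε` possibilities. -/
def newPart (v : ι → ℚ) (c : ℚ) (x : ι → ℚ) : ℕ := ∏ p ∈ newPrimes v c x, p

lemma mem_newPrimes (hv : ∀ i, v i ≠ 0) :
    p ∈ newPrimes v c x ↔ p.Prime ∧ (∃ i, p ∣ (x i).den) ∧ ¬ p ∣ modulus v c := by
  have hprod : ∏ i, (x i).den ≠ 0 := prod_ne_zero_iff.2 fun i _ ↦ (x i).den_ne_zero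
  rw [newPrimes, mem_sdiff, Nat.mem_primeFactors_of_ne_zero hprod,
    Nat.mem_primeFactors_of_ne_zero (modulus_ne_zero hv), and_assoc]
  refine and_congr_right fun hp ↦ ?_
  simp only [hp.prime.dvd_finsetProd_iff, mem_univ, true_and, hp]

lemma prime_of_mem_newPrimes (hp : p ∈ newPrimes v c x) : p.Prime :=
  Nat.prime_of_mem_primeFactors (mem_sdiff.1 hp).1

lemma newPart_ne_zero : newPart v c x ≠ 0 :=
  prod_ne_zero_iff.2 fun _ hp ↦ (prime_of_mem_newPrimes hp).ne_zero

lemma primeFactors_den_subset (hv : ∀ i, v i ≠ 0) (i : ι) :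
    (x i).den.primeFactors ⊆ (modulus v c * newPart v c x).primeFactors := by
  intro p hp
  have hpp := Nat.prime_of_mem_primeFactors hp
  refine Nat.mem_primeFactors.2 ⟨hpp, ?_, mul_ne_zero (modulus_ne_zero hv) newPart_ne_zero⟩
  by_cases hmod : p ∣ modulus v c
  · exact dvd_mul_of_dvd_left hmod _
  · exact dvd_mul_of_dvd_right (dvd_prod_of_mem id <| (mem_newPrimes hv).2
      ⟨hpp, ⟨i, Nat.dvd_of_mem_primeFactors hp⟩, hmod⟩) _

lemma den_dvd_of_dotProduct_eq [DecidableEq ι] {i : ι} (hvi : v i ≠ 0) (h : v ⬝ᵥ x = c) :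
    (x i).den ∣ modulus v c * ∏ j ∈ univ.erase i, (x j).den := by
  have hxi : x i = (v i)⁻¹ * (c - ∑ j ∈ univ.erase i, v j * x j) := by
    rw [eq_inv_mul_iff_mul_eq₀ hvi, ← h, dotProduct, ← add_sum_erase _ _ (mem_univ i),
      add_sub_cancel_right]
  have hsum : (∑ j ∈ univ.erase i, v j * x j).den ∣
      (∏ j ∈ univ.erase i, (v j).num.natAbs * (v j).den) * ∏ j ∈ univ.erase i, (x j).den := by
    refine (den_sum_dvd _ _).trans ?_
    rw [← prod_mul_distrib]
    exact prod_dvd_prod_of_dvd _ _ fun j _ ↦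
      (Rat.mul_den_dvd _ _).trans (mul_dvd_mul_right (dvd_mul_left _ _) _)
  have hinv : (v i)⁻¹.den ∣ (v i).num.natAbs * (v i).den := by
    rw [Rat.den_inv_of_ne_zero hvi]
    exact dvd_mul_right _ _
  rw [hxi, modulus, ← mul_prod_erase univ _ (mem_univ i)]
  refine (Rat.mul_den_dvd _ _).trans <| (mul_dvd_mul hinv <|
    (Rat.sub_den_dvd _ _).trans (mul_dvd_mul_left _ hsum)).trans (dvd_of_eq ?_)
  ring

lemma exists_ne_dvd_den (hv : ∀ i, v i ≠ 0) (h : v ⬝ᵥ x = c) (hp : p ∈ newPrimes v c x) :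
    ∃ i j, i ≠ j ∧ p ∣ (x i).den ∧ p ∣ (x j).den := by
  classical
  obtain ⟨hpp, ⟨i, hi⟩, hmod⟩ := (mem_newPrimes hv).1 hp
  have hdvd := ((hpp.dvd_mul).1 (hi.trans (den_dvd_of_dotProduct_eq (hv i) h))).resolve_left hmod
  obtain ⟨j, hj, hpj⟩ := (hpp.prime.dvd_finsetProd_iff _).1 hdvd
  exact ⟨i, j, (ne_of_mem_erase hj).symm, hi, hpj⟩

lemma newPart_sq_dvd (hv : ∀ i, v i ≠ 0) (h : v ⬝ᵥ x = c) :
    newPart v c x ^ 2 ∣ ∏ i, (x i).den := by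
  classical
  refine prod_primes_pow_dvd (fun p hp ↦ prime_of_mem_newPrimes hp) fun p hp ↦ ?_
  obtain ⟨i, j, hij, hi, hj⟩ := exists_ne_dvd_den hv h hp
  rw [sq, ← mul_prod_erase univ _ (mem_univ i),
    ← mul_prod_erase (univ.erase i) _ (mem_erase.2 ⟨hij.symm, mem_univ j⟩), ← mul_assoc]
  exact dvd_mul_of_dvd_left (mul_dvd_mul hi hj) _

variable [DecidableEq ι]

/-- The solutions of `v ⬝ᵥ x = c` in unit fractions of height at most `N`. -/
noncomputable def solutions (N : ℕ) (v : ι → ℚ) (c : ℚ) : Finset (ι → ℚ) :=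
  {x ∈ Fintype.piFinset fun _ ↦ unitFractions N | v ⬝ᵥ x = c}

lemma mem_solutions : x ∈ solutions N v c ↔ (∀ i, x i ∈ unitFractions N) ∧ v ⬝ᵥ x = c := by
  rw [solutions, mem_filter, Fintype.mem_piFinset]

lemma card_solutions_le : #(solutions N v c) ≤ (2 * N) ^ Fintype.card ι :=
  (card_filter_le _ _).trans card_piFinset_unitFractions_le

lemma prod_den_le (hx : x ∈ solutions N v c) : ∏ i, (x i).den ≤ N ^ Fintype.card ι :=
  (prod_le_prod' fun i _ ↦ (mem_unitFractions.1 ((mem_solutions.1 hx).1 i)).2).trans_eq <| by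
    rw [prod_const, card_univ]

lemma newPart_le (hv : ∀ i, v i ≠ 0) (hx : x ∈ solutions N v c) :
    newPart v c x ≤ N ^ Fintype.card ι := by
  have hprod : 0 < ∏ i, (x i).den := prod_pos fun i _ ↦ (x i).den_pos
  calc newPart v c x ≤ newPart v c x ^ 2 := Nat.le_self_pow two_ne_zero _
    _ ≤ ∏ i, (x i).den := Nat.le_of_dvd hprod (newPart_sq_dvd hv (mem_solutions.1 hx).2)
    _ ≤ N ^ Fintype.card ι := prod_den_le hx

lemma newPart_le_rpow (hv : ∀ i, v i ≠ 0) (hx : x ∈ solutions N v c) :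
    (newPart v c x : ℝ) ≤ (N : ℝ) ^ (Fintype.card ι / 2 : ℝ) := by
  have hprod : 0 < ∏ i, (x i).den := prod_pos fun i _ ↦ (x i).den_pos
  refine natCast_le_rpow_of_pow_le two_ne_zero ?_
  rw [Nat.cast_two, mul_div_cancel₀ _ two_ne_zero, Real.rpow_natCast]
  exact_mod_cast (Nat.le_of_dvd hprod (newPart_sq_dvd hv (mem_solutions.1 hx).2)).trans
    (prod_den_le hx)

variable (ι)

/- The codes have modulus `modulus v c`, a fixed power of `N`, so only the size of `R` matters. -/
lemma exists_card_solutions_le_of_code {ε : ℝ} (hε : 0 < ε) (m : ℕ) :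
    ∃ C > 0, ∀ N : ℕ, 1 ≤ N → ∀ (v : ι → ℚ) (c : ℚ) (Y : ℝ) (s : Finset (ι → ℚ)) (R : (ι → ℚ) → ℕ)
      (code : (ι → ℚ) → ι → ℚ), (∀ i, v i ≠ 0) → HeightLE v c ((N : ℝ) ^ m) → 0 ≤ Y →
      (∀ x ∈ s, x ∈ solutions N v c ∧ R x ∣ newPart v c x ∧ (R x : ℝ) ≤ Y) →
      (∀ x ∈ s, code x ∈ Fintype.piFinset fun _ ↦ smoothUnitFractions N (modulus v c * R x)) →
      (∀ x ∈ s, ∀ y ∈ s, R x = R y → code x = code y → x = y) →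
      (#s : ℝ) ≤ C * Y * (N : ℝ) ^ ε := by
  set k := Fintype.card ι
  obtain ⟨C, hC, hcard⟩ := exists_card_le_of_code (α := ι → ℚ) ι hε (m * (2 * k + 1) + k)
  refine ⟨C, hC, fun N hN v c Y s R code hv hh hY hR ↦
    hcard N hN (modulus v c) Y s R code hY fun x hx ↦ ?_⟩
  obtain ⟨hxs, hdvd, hle⟩ := hR x hx
  refine ⟨mul_ne_zero (modulus_ne_zero hv) (ne_zero_of_dvd_ne_zero newPart_ne_zero hdvd), ?_, hle⟩
  rw [pow_add, pow_mul]
  exact Nat.mul_le_mul (modulus_le hh) <|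
    (Nat.le_of_dvd (Nat.pos_of_ne_zero newPart_ne_zero) hdvd).trans (newPart_le hv hxs)

lemma exists_card_le_of_newPart_le {ε : ℝ} (hε : 0 < ε) (m : ℕ) :
    ∃ C > 0, ∀ N : ℕ, 1 ≤ N → ∀ (v : ι → ℚ) (c : ℚ) (Y : ℝ) (s : Finset (ι → ℚ)), (∀ i, v i ≠ 0) →
      HeightLE v c ((N : ℝ) ^ m) → 0 ≤ Y →
      (∀ x ∈ s, x ∈ solutions N v c ∧ (newPart v c x : ℝ) ≤ Y) →
      (#s : ℝ) ≤ C * Y * (N : ℝ) ^ ε := by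
  obtain ⟨C, hC, hcard⟩ := exists_card_solutions_le_of_code ι hε m
  refine ⟨C, hC, fun N hN v c Y s hv hh hY hs ↦ hcard N hN v c Y s (newPart v c) id hv hh hY
    (fun x hx ↦ ⟨(hs x hx).1, dvd_rfl, (hs x hx).2⟩) (fun x hx ↦ ?_) fun x _ y _ _ hxy ↦ hxy⟩
  exact Fintype.mem_piFinset.2 fun i ↦ mem_filter.2
    ⟨(mem_solutions.1 (hs x hx).1).1 i, primeFactors_den_subset hv i⟩

theorem exists_card_solutions_le {ε : ℝ} (hε : 0 < ε) (m : ℕ) :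
    ∃ C > 0, ∀ N : ℕ, 1 ≤ N → ∀ (v : ι → ℚ) (c : ℚ), (∀ i, v i ≠ 0) → HeightLE v c ((N : ℝ) ^ m) →
      (#(solutions N v c) : ℝ) ≤ C * (N : ℝ) ^ (Fintype.card ι / 2 + ε : ℝ) := by
  obtain ⟨C, hC, hcard⟩ := exists_card_le_of_newPart_le ι hε m
  refine ⟨C, hC, fun N hN v c hv hh ↦ ?_⟩
  rw [Real.rpow_add (mod_cast hN), ← mul_assoc]
  exact hcard N hN v c _ _ hv hh (by positivity) fun x hx ↦ ⟨hx, newPart_le_rpow hv hx⟩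

variable {ι}

lemma dotProduct_eq_restrict_add_restrict_compl (K : Finset ι) (v x : ι → ℚ) :
    v ⬝ᵥ x = K.restrict v ⬝ᵥ K.restrict x + Kᶜ.restrict v ⬝ᵥ Kᶜ.restrict x := by
  simp only [dotProduct, restrict, sum_coe_sort K fun i ↦ v i * x i,
    sum_coe_sort Kᶜ fun i ↦ v i * x i, sum_add_sum_compl]

lemma restrict_mem_solutions (hx : x ∈ solutions N v c) (K : Finset ι) :
    K.restrict x ∈ solutions N (K.restrict v) (K.restrict v ⬝ᵥ K.restrict x) :=
  mem_solutions.2 ⟨fun i ↦ (mem_solutions.1 hx).1 i, rfl⟩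

lemma card_filter_restrict_dotProduct_eq_le (K : Finset ι) (t : ℚ) :
    #{x ∈ solutions N v c | K.restrict v ⬝ᵥ K.restrict x = t} ≤
      #(solutions N (K.restrict v) t) * #(solutions N (Kᶜ.restrict v) (c - t)) := by
  rw [← card_product]
  refine card_le_card_of_injOn (fun x ↦ (K.restrict x, Kᶜ.restrict x)) (fun x hx ↦ ?_)
    fun x _ y _ hxy ↦ funext fun i ↦ ?_
  · obtain ⟨hx, ht⟩ := mem_filter.1 (mem_coe.1 hx)
    have hsplit := dotProduct_eq_restrict_add_restrict_compl K v x
    rw [(mem_solutions.1 hx).2, ht, ← sub_eq_iff_eq_add'] at hsplit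
    have hK := restrict_mem_solutions hx K
    have hKc := restrict_mem_solutions hx Kᶜ
    rw [ht] at hK
    rw [← hsplit] at hKc
    exact mem_coe.2 (mk_mem_product hK hKc)
  · obtain ⟨hK, hKc⟩ := Prod.mk.inj hxy
    by_cases hi : i ∈ K
    · exact congrFun hK ⟨i, hi⟩
    · exact congrFun hKc ⟨i, mem_compl.2 hi⟩

variable (ι)

lemma exists_card_solutions_restrict_le (ι : Type*) [Finite ι] [DecidableEq ι] {ε : ℝ}
    (hε : 0 < ε) (m : ℕ) :
    ∃ C > 0, ∀ N : ℕ, 1 ≤ N → ∀ (K : Finset ι) (v : ι → ℚ) (c : ℚ), (∀ i ∈ K, v i ≠ 0) →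
      HeightLE v c ((N : ℝ) ^ m) →
      (#(solutions N (K.restrict v) c) : ℝ) ≤ C * (N : ℝ) ^ (#K / 2 + ε : ℝ) := by
  choose C hC hcard using fun K : Finset ι ↦ exists_card_solutions_le K hε m
  obtain ⟨C', hC'⟩ := Finite.exists_le C
  refine ⟨C', (hC ∅).trans_le (hC' ∅), fun N hN K v c hv hh ↦ ?_⟩
  have hK := hcard K N hN (K.restrict v) c (fun i ↦ hv i i.2) (hh.restrict K)
  rw [Fintype.card_coe] at hK
  exact hK.trans (by gcongr; exact hC' K)

theorem exists_card_solutions_le_of_support {ε : ℝ} (hε : 0 < ε) (m : ℕ) :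
    ∃ C > 0, ∀ N : ℕ, 1 ≤ N → ∀ (v : ι → ℚ) (c : ℚ), HeightLE v c ((N : ℝ) ^ m) →
      (#(solutions N v c) : ℝ) ≤
        C * (N : ℝ) ^ (Fintype.card ι - #{i | v i ≠ 0} / 2 + ε : ℝ) := by
  obtain ⟨C, hC, hcard⟩ := exists_card_solutions_restrict_le ι hε m
  refine ⟨2 ^ Fintype.card ι * C, by positivity, fun N hN v c hh ↦ ?_⟩
  have hN0 : (0 : ℝ) < N := mod_cast hN
  set K : Finset ι := {i | v i = 0} with hK
  have hKc : ({i | v i ≠ 0} : Finset ι) = Kᶜ := by rw [hK, compl_filter]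
  have hzero (x : ι → ℚ) : K.restrict v ⬝ᵥ K.restrict x = 0 :=
    sum_eq_zero fun i _ ↦ mul_eq_zero_of_left (mem_filter.1 i.2).2 _
  have hsplit := card_filter_restrict_dotProduct_eq_le (N := N) (v := v) (c := c) K 0
  rw [filter_true_of_mem fun x _ ↦ hzero x, sub_zero] at hsplit
  have hcardK : (#K : ℝ) = Fintype.card ι - #Kᶜ := by
    rw [eq_sub_iff_add_eq, ← Nat.cast_add, card_add_card_compl]
  have hfree : (#(solutions N (K.restrict v) 0) : ℝ) ≤ 2 ^ Fintype.card ι * (N : ℝ) ^ (#K : ℝ) := by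
    have hle := card_solutions_le (N := N) (v := K.restrict v) (c := 0)
    rw [Fintype.card_coe] at hle
    calc (#(solutions N (K.restrict v) 0) : ℝ) ≤ 2 ^ #K * (N : ℝ) ^ #K := by
          rw [← mul_pow]
          exact_mod_cast hle
      _ ≤ 2 ^ Fintype.card ι * (N : ℝ) ^ (#K : ℝ) := by
          rw [Real.rpow_natCast]
          gcongr
          · exact one_le_two
          · exact card_le_univ K
  calc (#(solutions N v c) : ℝ)
      ≤ #(solutions N (K.restrict v) 0) * #(solutions N (Kᶜ.restrict v) c) := mod_cast hsplit
    _ ≤ (2 ^ Fintype.card ι * (N : ℝ) ^ (#K : ℝ)) * (C * (N : ℝ) ^ (#Kᶜ / 2 + ε : ℝ)) := by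
        gcongr
        exact hcard N hN Kᶜ v c (fun i hi ↦ by simpa [hK] using hi) hh
    _ = 2 ^ Fintype.card ι * C * (N : ℝ) ^ (Fintype.card ι - #{i | v i ≠ 0} / 2 + ε : ℝ) := by
        rw [hKc, mul_mul_mul_comm, ← Real.rpow_add hN0, hcardK]
        ring_nf

end Solutions

section Pairs
open Finset Height

variable {ι : Type*} [Fintype ι] {v x : ι → ℚ} {c : ℚ} {N p : ℕ} {i j : ι} {σ : ℝ}

/-- The new primes occurring only in `x i` and `x j`, and only once in each of them. -/
def pairPrimes (v : ι → ℚ) (c : ℚ) (x : ι → ℚ) (i j : ι) : Finset ℕ :=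
  {p ∈ newPrimes v c x | p ∣ (x i).den ∧ p ∣ (x j).den ∧ ¬ p ^ 3 ∣ ∏ l, (x l).den}

/-- The product of the `pairPrimes`, a common factor of the denominators of `x i` and `x j`. -/
def pairPart (v : ι → ℚ) (c : ℚ) (x : ι → ℚ) (i j : ι) : ℕ := ∏ p ∈ pairPrimes v c x i j, p

/-- The cofactor of `pairPart` in `newPart`: the new primes left in the denominators once
`pairPart` is divided out. -/
def pairCopart (v : ι → ℚ) (c : ℚ) (x : ι → ℚ) (i j : ι) : ℕ :=
  ∏ p ∈ newPrimes v c x \ pairPrimes v c x i j, p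

lemma pairCopart_mul_pairPart :
    pairCopart v c x i j * pairPart v c x i j = newPart v c x :=
  prod_sdiff (filter_subset _ _)

lemma pairCopart_ne_zero : pairCopart v c x i j ≠ 0 :=
  left_ne_zero_of_mul (pairCopart_mul_pairPart.trans_ne newPart_ne_zero)

lemma pairPart_ne_zero : pairPart v c x i j ≠ 0 :=
  right_ne_zero_of_mul (pairCopart_mul_pairPart.trans_ne newPart_ne_zero)

/- If `p ^ 3` divides the product of the denominators, `p ^ 6` divides its square; otherwise `p`
lies in the `pairPrimes` of both `(i, j)` and `(j, i)`, which make up for the missing `p ^ 2`. -/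
lemma newPart_pow_six_dvd (hv : ∀ i, v i ≠ 0) (h : v ⬝ᵥ x = c) :
    newPart v c x ^ 6 ∣
      (∏ i, (x i).den) ^ 2 * ∏ ij ∈ univ.offDiag, pairPart v c x ij.1 ij.2 := by
  classical
  refine prod_primes_pow_dvd (fun p hp ↦ prime_of_mem_newPrimes hp) fun p hp ↦ ?_
  by_cases hcube : p ^ 3 ∣ ∏ i, (x i).den
  · exact dvd_mul_of_dvd_left (by simpa only [← pow_mul] using pow_dvd_pow_of_dvd hcube 2) _
  obtain ⟨i, j, hij, hi, hj⟩ := exists_ne_dvd_den hv h hp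
  have hsq : p ^ 2 ∣ ∏ i, (x i).den :=
    (pow_dvd_pow_of_dvd (dvd_prod_of_mem id hp) 2).trans (newPart_sq_dvd hv h)
  have hpair : p ∣ pairPart v c x i j := dvd_prod_of_mem id (mem_filter.2 ⟨hp, hi, hj, hcube⟩)
  have hpair' : p ∣ pairPart v c x j i := dvd_prod_of_mem id (mem_filter.2 ⟨hp, hj, hi, hcube⟩)
  have hmem : (j, i) ∈ univ.offDiag.erase (i, j) := by
    simp [hij, hij.symm]
  rw [← mul_prod_erase _ _ (a := (i, j)) (mem_offDiag.2 ⟨mem_univ i, mem_univ j, hij⟩),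
    ← mul_prod_erase _ _ hmem, ← mul_assoc (pairPart v c x i j)]
  calc p ^ 6 = (p ^ 2) ^ 2 * (p * p) := by ring
    _ ∣ _ := mul_dvd_mul (pow_dvd_pow_of_dvd hsq 2)
      (dvd_mul_of_dvd_left (mul_dvd_mul hpair hpair') _)

variable [DecidableEq ι]

lemma pairPart_dvd_den {l : ι} (hl : l ∈ ({i, j} : Finset ι)) :
    pairPart v c x i j ∣ (x l).den := by
  refine prod_primes_dvd _ (fun p hp ↦ (prime_of_mem_newPrimes (mem_filter.1 hp).1).prime)
    fun p hp ↦ ?_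
  obtain ⟨-, hi, hj, -⟩ := mem_filter.1 hp
  rcases mem_insert.1 hl with rfl | hl
  · exact hi
  · rwa [mem_singleton.1 hl]

lemma newPart_le_or_exists_lt_pairPart (hN : 1 ≤ N) (hv : ∀ i, v i ≠ 0)
    (hσ : σ * (Fintype.card ι ^ 2 - Fintype.card ι + 6) ≤ Fintype.card ι)
    (hx : x ∈ solutions N v c) :
    (newPart v c x : ℝ) ≤ (N : ℝ) ^ (Fintype.card ι / 2 - σ) ∨
      ∃ i j, i ≠ j ∧ (N : ℝ) ^ σ < pairPart v c x i j := by
  set k := Fintype.card ι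
  by_contra! ⟨hnew, hpair⟩
  refine hnew.not_ge (natCast_le_rpow_of_pow_le (a := 6) (by norm_num) ?_)
  have hoff : ∏ ij ∈ univ.offDiag, (pairPart v c x ij.1 ij.2 : ℝ) ≤
      (N : ℝ) ^ (σ * (k ^ 2 - k)) := by
    calc ∏ ij ∈ univ.offDiag, (pairPart v c x ij.1 ij.2 : ℝ)
        ≤ ∏ _ij ∈ (univ : Finset ι).offDiag, (N : ℝ) ^ σ :=
          prod_le_prod (fun _ _ ↦ Nat.cast_nonneg _) fun ij hij ↦
            hpair _ _ (mem_offDiag.1 hij).2.2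
      _ = (N : ℝ) ^ (σ * (k ^ 2 - k)) := by
          rw [prod_const, offDiag_card, card_univ, ← Real.rpow_mul_natCast N.cast_nonneg,
            Nat.cast_sub (Nat.le_mul_self _), Nat.cast_mul, ← sq]
  have hdvd := newPart_pow_six_dvd hv (mem_solutions.1 hx).2
  have hpos : 0 < (∏ i, (x i).den) ^ 2 * ∏ ij ∈ univ.offDiag, pairPart v c x ij.1 ij.2 :=
    Nat.pos_of_ne_zero <| mul_ne_zero (pow_ne_zero 2 <| prod_ne_zero_iff.2 fun i _ ↦
      (x i).den_ne_zero) (prod_ne_zero_iff.2 fun _ _ ↦ pairPart_ne_zero)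
  calc (newPart v c x : ℝ) ^ 6
      ≤ (∏ i, (x i).den : ℕ) ^ 2 * ∏ ij ∈ univ.offDiag, (pairPart v c x ij.1 ij.2 : ℝ) :=
        mod_cast Nat.le_of_dvd hpos hdvd
    _ ≤ ((N : ℝ) ^ k) ^ 2 * (N : ℝ) ^ (σ * (k ^ 2 - k)) := by
        gcongr
        exact_mod_cast prod_den_le hx
    _ = (N : ℝ) ^ (2 * k + σ * (k ^ 2 - k)) := by
        rw [Real.rpow_add (mod_cast hN), ← pow_mul, mul_comm k, ← Real.rpow_natCast]
        push_cast
        rfl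
    _ ≤ (N : ℝ) ^ ((6 : ℕ) * (k / 2 - σ)) := by
        refine Real.rpow_le_rpow_of_exponent_le (mod_cast hN) ?_
        push_cast
        linarith

/-- The vector `x` after the denominators of `x i` and `x j` are divided by `pairPart`. -/
def pairCode (v : ι → ℚ) (c : ℚ) (i j : ι) (x : ι → ℚ) (l : ι) : ℚ :=
  if l ∈ ({i, j} : Finset ι) then pairPart v c x i j * x l else x l

lemma den_eq_mul_den_pairCode (l : ι) :
    (x l).den = (if l ∈ ({i, j} : Finset ι) then pairPart v c x i j else 1) *
      (pairCode v c i j x l).den := by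
  rw [pairCode]
  split_ifs with hl
  · obtain ⟨a, ha⟩ := pairPart_dvd_den (v := v) (c := c) hl
    rw [(num_and_den_natCast_mul ha).2, ha]
  · rw [one_mul]

lemma not_dvd_den_pairCode (hij : i ≠ j) (hp : p ∈ pairPrimes v c x i j) (l : ι) :
    ¬ p ∣ (pairCode v c i j x l).den := by
  intro hdvd
  refine (mem_filter.1 hp).2.2.2 ?_
  rw [prod_congr rfl fun l _ ↦ den_eq_mul_den_pairCode (v := v) (c := c) (i := i) (j := j) l,
    prod_mul_distrib, prod_ite_mem, univ_inter, prod_const, card_pair hij, pow_succ]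
  exact mul_dvd_mul (pow_dvd_pow_of_dvd (dvd_prod_of_mem id hp) 2)
    (hdvd.trans (dvd_prod_of_mem _ (mem_univ l)))

lemma pairCode_mem_smoothUnitFractions (hv : ∀ i, v i ≠ 0) (hij : i ≠ j)
    (hx : x ∈ solutions N v c) (l : ι) :
    pairCode v c i j x l ∈ smoothUnitFractions N (modulus v c * pairCopart v c x i j) := by
  have hden := den_eq_mul_den_pairCode (x := x) (v := v) (c := c) (i := i) (j := j) l
  refine mem_filter.2 ⟨?_, fun p hp ↦ ?_⟩
  · have hxl := (mem_solutions.1 hx).1 l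
    rw [pairCode] at hden ⊢
    split_ifs at hden ⊢ with hl
    · exact natCast_mul_mem_unitFractions hxl hden
    · exact hxl
  · have hpp := Nat.prime_of_mem_primeFactors hp
    have hpl := Nat.dvd_of_mem_primeFactors hp
    refine Nat.mem_primeFactors.2 ⟨hpp, ?_, mul_ne_zero (modulus_ne_zero hv) <|
      pairCopart_ne_zero⟩
    by_cases hmod : p ∣ modulus v c
    · exact dvd_mul_of_dvd_left hmod _
    · have hnew : p ∈ newPrimes v c x :=
        (mem_newPrimes hv).2 ⟨hpp, ⟨l, hden ▸ dvd_mul_of_dvd_right hpl _⟩, hmod⟩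
      exact dvd_mul_of_dvd_right (dvd_prod_of_mem id <| mem_sdiff.2
        ⟨hnew, fun hpair ↦ not_dvd_den_pairCode hij hpair l hpl⟩) _

/- The remaining unknowns determine the partial sum over `i` and `j`, and if it does not vanish,
its ratio to the partial sum of the code gives `pairPart`. -/
lemma eq_of_pairCode_eq {y : ι → ℚ} (hx : x ∈ solutions N v c) (hy : y ∈ solutions N v c)
    (hne : restrict {i, j} v ⬝ᵥ restrict {i, j} x ≠ 0)
    (hxy : pairCode v c i j x = pairCode v c i j y) : x = y := by
  set K : Finset ι := {i, j}
  have hmem {l : ι} (hl : l ∈ K) : pairPart v c x i j * x l = pairPart v c y i j * y l := by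
    simpa only [pairCode, if_pos (show l ∈ ({i, j} : Finset ι) from hl)] using congrFun hxy l
  have hnotMem {l : ι} (hl : l ∉ K) : x l = y l := by
    simpa only [pairCode, if_neg (show l ∉ ({i, j} : Finset ι) from hl)] using congrFun hxy l
  have hcompl : Kᶜ.restrict x = Kᶜ.restrict y := funext fun l ↦ hnotMem (mem_compl.1 l.2)
  have hsum : K.restrict v ⬝ᵥ K.restrict x = K.restrict v ⬝ᵥ K.restrict y := by
    have := (mem_solutions.1 hx).2.trans (mem_solutions.1 hy).2.symm
    rwa [dotProduct_eq_restrict_add_restrict_compl K v x,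
      dotProduct_eq_restrict_add_restrict_compl K v y, hcompl, add_left_inj] at this
  have hpart : (pairPart v c x i j : ℚ) = pairPart v c y i j := by
    refine mul_right_cancel₀ hne ?_
    nth_rw 2 [hsum]
    rw [← smul_eq_mul, ← smul_eq_mul, ← dotProduct_smul, ← dotProduct_smul]
    exact congrArg _ (funext fun l ↦ hmem l.2)
  funext l
  by_cases hl : l ∈ K
  · have hne' : (pairPart v c x i j : ℚ) ≠ 0 := mod_cast pairPart_ne_zero
    exact mul_left_cancel₀ hne' ((hmem hl).trans (by rw [hpart]))
  · exact hnotMem hl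

variable (ι)

lemma exists_card_filter_lt_pairPart_le {ε : ℝ} (hε : 0 < ε) (m : ℕ) :
    ∃ C > 0, ∀ N : ℕ, 1 ≤ N → ∀ (v : ι → ℚ) (c : ℚ) (σ : ℝ) (i j : ι), (∀ i, v i ≠ 0) →
      HeightLE v c ((N : ℝ) ^ m) → i ≠ j →
      (#{x ∈ solutions N v c | (N : ℝ) ^ σ < pairPart v c x i j ∧
        restrict {i, j} v ⬝ᵥ restrict {i, j} x ≠ 0} : ℝ) ≤
        C * (N : ℝ) ^ (Fintype.card ι / 2 - σ + ε : ℝ) := by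
  obtain ⟨C, hC, hcard⟩ := exists_card_solutions_le_of_code ι hε m
  refine ⟨C, hC, fun N hN v c σ i j hv hh hij ↦ ?_⟩
  have hN0 : (0 : ℝ) < N := mod_cast hN
  rw [Real.rpow_add hN0, ← mul_assoc]
  refine hcard N hN v c _ _ (fun x ↦ pairCopart v c x i j) (pairCode v c i j) hv hh
    (by positivity) (fun x hx ↦ ?_) (fun x hx ↦ ?_) fun x hx y hy _ hxy ↦ ?_
  · obtain ⟨hxs, hlt, -⟩ := mem_filter.1 hx
    refine ⟨hxs, Dvd.intro _ pairCopart_mul_pairPart, ?_⟩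
    rw [Real.rpow_sub hN0, le_div_iff₀ (by positivity)]
    calc (pairCopart v c x i j : ℝ) * (N : ℝ) ^ σ
        ≤ pairCopart v c x i j * pairPart v c x i j := by gcongr
      _ = newPart v c x := mod_cast pairCopart_mul_pairPart
      _ ≤ (N : ℝ) ^ (Fintype.card ι / 2 : ℝ) := newPart_le_rpow hv hxs
  · exact Fintype.mem_piFinset.2
      (pairCode_mem_smoothUnitFractions hv hij (mem_filter.1 hx).1)
  · obtain ⟨hxs, -, hne⟩ := mem_filter.1 hx
    exact eq_of_pairCode_eq hxs (mem_filter.1 hy).1 hne hxy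

lemma exists_card_filter_restrict_pair_le {ε : ℝ} (hε : 0 < ε) (m : ℕ) :
    ∃ C > 0, ∀ N : ℕ, 1 ≤ N → ∀ (v : ι → ℚ) (c : ℚ) (i j : ι), (∀ i, v i ≠ 0) →
      HeightLE v c ((N : ℝ) ^ m) → i ≠ j →
      (#{x ∈ solutions N v c | restrict {i, j} v ⬝ᵥ restrict {i, j} x = 0} : ℝ) ≤
        C * (N : ℝ) ^ (1 + ε) * #(solutions N (restrict {i, j}ᶜ v) c) := by
  obtain ⟨C, hC, hcard⟩ := exists_card_solutions_restrict_le ι hε m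
  refine ⟨C, hC, fun N hN v c i j hv hh hij ↦ ?_⟩
  have hsplit := card_filter_restrict_dotProduct_eq_le (N := N) (v := v) (c := c) {i, j} 0
  have hpair := hcard N hN {i, j} v 0 (fun i _ ↦ hv i)
    ⟨hh.1, mulHeight₁_zero.trans_le (one_le_pow₀ (mod_cast hN))⟩
  rw [card_pair hij, Nat.cast_two, div_self two_ne_zero] at hpair
  rw [sub_zero] at hsplit
  calc (#{x ∈ solutions N v c | restrict {i, j} v ⬝ᵥ restrict {i, j} x = 0} : ℝ)
      ≤ #(solutions N (restrict {i, j} v) 0) * #(solutions N (restrict {i, j}ᶜ v) c) :=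
        mod_cast hsplit
    _ ≤ C * (N : ℝ) ^ (1 + ε) * #(solutions N (restrict {i, j}ᶜ v) c) := by gcongr

variable {ι}

lemma card_solutions_le_add_sum_offDiag (hN : 1 ≤ N) (hv : ∀ i, v i ≠ 0)
    (hσ : σ * (Fintype.card ι ^ 2 - Fintype.card ι + 6) ≤ Fintype.card ι) :
    #(solutions N v c) ≤
      #{x ∈ solutions N v c | (newPart v c x : ℝ) ≤ (N : ℝ) ^ (Fintype.card ι / 2 - σ)} +
      ∑ ij ∈ univ.offDiag,
        (#{x ∈ solutions N v c | (N : ℝ) ^ σ < pairPart v c x ij.1 ij.2 ∧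
            restrict {ij.1, ij.2} v ⬝ᵥ restrict {ij.1, ij.2} x ≠ 0} +
          #{x ∈ solutions N v c | restrict {ij.1, ij.2} v ⬝ᵥ restrict {ij.1, ij.2} x = 0}) := by
  refine (card_le_card (t := _ ∪ univ.offDiag.biUnion fun ij ↦ _ ∪ _) fun x hx ↦ ?_).trans <|
    (card_union_le _ _).trans <| Nat.add_le_add_left (card_biUnion_le.trans <|
      sum_le_sum fun ij _ ↦ card_union_le _ _) _
  simp only [mem_union, mem_biUnion, mem_filter, mem_offDiag, mem_univ, true_and, hx]
  refine (newPart_le_or_exists_lt_pairPart hN hv hσ hx).imp_right fun ⟨i, j, hij, hlt⟩ ↦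
    ⟨(i, j), hij, ?_⟩
  exact (ne_or_eq _ _).imp_left fun hne ↦ ⟨hlt, hne⟩

lemma exists_card_solutions_le_of_pair_compl {C₀ ε : ℝ} (hε : 0 < ε) (m : ℕ)
    (hσ : σ * (Fintype.card ι ^ 2 - Fintype.card ι + 6) ≤ Fintype.card ι)
    (hrec : ∀ i j : ι, i ≠ j → ∀ N : ℕ, 1 ≤ N → ∀ (v : ι → ℚ) (c : ℚ), (∀ i, v i ≠ 0) → c ≠ 0 →
      HeightLE v c ((N : ℝ) ^ m) → (#(solutions N (restrict {i, j}ᶜ v) c) : ℝ) ≤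
        C₀ * (N : ℝ) ^ (Fintype.card ι / 2 - σ - 1 + ε / 2)) :
    ∃ C > 0, ∀ N : ℕ, 1 ≤ N → ∀ (v : ι → ℚ) (c : ℚ), (∀ i, v i ≠ 0) → c ≠ 0 →
      HeightLE v c ((N : ℝ) ^ m) →
      (#(solutions N v c) : ℝ) ≤ C * (N : ℝ) ^ (Fintype.card ι / 2 - σ + ε) := by
  obtain ⟨C₁, hC₁, hsmall⟩ := exists_card_le_of_newPart_le ι hε m
  obtain ⟨C₂, hC₂, hbig⟩ := exists_card_filter_lt_pairPart_le ι hε m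
  obtain ⟨C₃, hC₃, hpair⟩ := exists_card_filter_restrict_pair_le ι (half_pos hε) m
  refine ⟨C₁ + #(univ : Finset ι).offDiag * (C₂ + C₃ * |C₀|), by positivity,
    fun N hN v c hv hc hh ↦ ?_⟩
  have hN0 : (0 : ℝ) < N := mod_cast hN
  set B := (N : ℝ) ^ (Fintype.card ι / 2 - σ + ε) with hB
  have hzero {i j : ι} (hij : i ≠ j) :
      (#{x ∈ solutions N v c | restrict {i, j} v ⬝ᵥ restrict {i, j} x = 0} : ℝ) ≤
        C₃ * |C₀| * B := by
    calc (#{x ∈ solutions N v c | restrict {i, j} v ⬝ᵥ restrict {i, j} x = 0} : ℝ)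
        ≤ C₃ * (N : ℝ) ^ (1 + ε / 2) *
            (|C₀| * (N : ℝ) ^ (Fintype.card ι / 2 - σ - 1 + ε / 2)) := by
          refine (hpair N hN v c i j hv hh hij).trans ?_
          gcongr
          refine (hrec i j hij N hN v c hv hc hh).trans ?_
          gcongr
          exact le_abs_self C₀
      _ = C₃ * |C₀| * B := by
          rw [mul_mul_mul_comm, ← Real.rpow_add hN0, hB]
          ring_nf
  have hsmall' := hsmall N hN v c _
    {x ∈ solutions N v c | (newPart v c x : ℝ) ≤ (N : ℝ) ^ (Fintype.card ι / 2 - σ)}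
    hv hh (by positivity) fun x hx ↦ mem_filter.1 hx
  rw [mul_assoc, ← Real.rpow_add hN0, ← hB] at hsmall'
  refine (Nat.cast_le.2 (card_solutions_le_add_sum_offDiag hN hv hσ)).trans ?_
  push_cast
  rw [add_mul, mul_assoc, ← nsmul_eq_mul]
  refine add_le_add hsmall' (sum_le_card_nsmul _ _ _ fun ij hij ↦ ?_)
  have hne := (mem_offDiag.1 hij).2.2
  rw [add_mul]
  exact add_le_add (hbig N hN v c σ _ _ hv hh hne) (hzero hne)

theorem exists_card_solutions_le_of_ne_zero {ι : Type*} [Fintype ι] [DecidableEq ι] {σ ε : ℝ}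
    (hσ : ∀ k ∈ Icc 1 (Fintype.card ι), σ * (k ^ 2 - k + 6) ≤ k) (hε : 0 < ε) (m : ℕ) :
    ∃ C > 0, ∀ N : ℕ, 1 ≤ N → ∀ (v : ι → ℚ) (c : ℚ), (∀ i, v i ≠ 0) → c ≠ 0 →
      HeightLE v c ((N : ℝ) ^ m) →
      (#(solutions N v c) : ℝ) ≤ C * (N : ℝ) ^ (Fintype.card ι / 2 - σ + ε) := by
  induction hk : Fintype.card ι using Nat.strong_induction_on generalizing ι ε with | _ k ih
  subst hk
  rcases isEmpty_or_nonempty ι with hι | hι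
  · refine ⟨1, one_pos, fun N hN v c _ hc _ ↦ ?_⟩
    rw [card_eq_zero.2 (eq_empty_of_forall_notMem fun x hx ↦ hc ?_), Nat.cast_zero]
    · positivity
    · rw [← (mem_solutions.1 hx).2, dotProduct, univ_eq_empty, sum_empty]
  have hcard {ij : ι × ι} (hij : ij.1 ≠ ij.2) :
      Fintype.card ({ij.1, ij.2}ᶜ : Finset ι) + 2 = Fintype.card ι := by
    rw [Fintype.card_coe, ← card_pair hij, card_compl_add_card]
  have hrec (ij : ι × ι) : ∃ C, ij.1 ≠ ij.2 → ∀ N : ℕ, 1 ≤ N → ∀ (v : ι → ℚ) (c : ℚ),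
      (∀ i, v i ≠ 0) → c ≠ 0 → HeightLE v c ((N : ℝ) ^ m) →
      (#(solutions N (restrict {ij.1, ij.2}ᶜ v) c) : ℝ) ≤
        C * (N : ℝ) ^ (Fintype.card ι / 2 - σ - 1 + ε / 2) := by
    by_cases hij : ij.1 = ij.2
    · exact ⟨0, fun h ↦ absurd hij h⟩
    have hlt := hcard hij
    obtain ⟨C, -, hle⟩ := ih (Fintype.card ({ij.1, ij.2}ᶜ : Finset ι)) (by lia)
      (fun l hl ↦ hσ l (Icc_subset_Icc_right (by lia) hl)) (half_pos hε) rfl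
    refine ⟨C, fun _ N hN v c hv hc hh ↦ ?_⟩
    convert hle N hN (restrict {ij.1, ij.2}ᶜ v) c (fun i ↦ hv i) hc (hh.restrict _) using 3
    rw [← hlt]
    push_cast
    ring
  choose C hC using hrec
  obtain ⟨C₀, hC₀⟩ := Finite.exists_le C
  refine exists_card_solutions_le_of_pair_compl hε m
    (hσ _ (mem_Icc.2 ⟨Fintype.card_pos, le_rfl⟩)) (C₀ := C₀) fun i j hij N hN v c hv hc hh ↦
    (hC (i, j) hij N hN v c hv hc hh).trans ?_
  gcongr
  exact hC₀ (i, j)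

end Pairs

section FewUnknowns
open Finset Height

variable {ι : Type*} {v x y : ι → ℚ} {c : ℚ} {N : ℕ}

lemma card_intDivisors (z : ℤ) : #z.divisors = 2 * #z.natAbs.divisors := by
  rw [Int.divisors, card_disjUnion, card_map, card_map, two_mul]

lemma HeightLE.restrict_sub_mul {m : ℕ} {q : ℚ} (h : HeightLE v c ((N : ℝ) ^ m)) (hN : 2 ≤ N)
    (l : ι) (hq : q ∈ unitFractions N) (K : Finset ι) :
    HeightLE (K.restrict v) (c - v l * q) ((N : ℝ) ^ (2 * m + 2)) := by
  have hN2 : (2 : ℝ) ≤ N := mod_cast hN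
  refine ⟨fun i ↦ (h.1 i).trans (pow_le_pow_right₀ (by linarith) (by lia)), ?_⟩
  calc mulHeight₁ (c - v l * q)
      ≤ 2 ^ totalWeight ℚ * mulHeight₁ c * mulHeight₁ (v l * q) := mulHeight₁_sub_le _ _
    _ ≤ N * N ^ m * (N ^ m * N) := by
        rw [NumberField.totalWeight_eq_finrank, Module.finrank_self, pow_one]
        gcongr
        · exact h.2
        · exact (mulHeight₁_mul_le _ _).trans (mul_le_mul (h.1 l)
            (mulHeight₁_le_of_mem_unitFractions hq) (by positivity) (by positivity))
    _ = N ^ (2 * m + 2) := by ring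

lemma card_filter_sub_mul_eq_zero_le_one (hc : c ≠ 0) (w : ℚ) (s : Finset ℚ) :
    #{q ∈ s | c - w * q = 0} ≤ 1 := by
  refine card_le_one.2 fun q hq r hr ↦ ?_
  rw [mem_filter, sub_eq_zero] at hq hr
  exact mul_left_cancel₀ (left_ne_zero_of_mul (hq.2 ▸ hc)) (hq.2.symm.trans hr.2)

variable [Fintype ι]

lemma eq_of_dotProduct_eq {j : ι} (hvj : v j ≠ 0) (hx : v ⬝ᵥ x = c) (hy : v ⬝ᵥ y = c)
    (h : ∀ i ≠ j, x i = y i) : x = y := by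
  classical
  funext i
  rcases eq_or_ne i j with rfl | hij
  · have hsum : ∑ l ∈ univ.erase i, v l * x l = ∑ l ∈ univ.erase i, v l * y l :=
      sum_congr rfl fun l hl ↦ by rw [h l (ne_of_mem_erase hl)]
    rw [← hy, dotProduct, dotProduct, ← add_sum_erase _ _ (mem_univ i),
      ← add_sum_erase _ _ (mem_univ i), hsum, add_left_inj] at hx
    exact mul_left_cancel₀ hvj hx
  · exact h i hij

variable [DecidableEq ι]

/- With `x i = 1 / X` and `x j = 1 / Y` the equation `v i / X + v j / Y = c`, cleared of
denominators, has the form `(e * X - a) * (e * Y - b) = a * b`. -/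
lemma card_solutions_le_card_intDivisors {i j : ι} (huniv : (univ : Finset ι) = {i, j})
    (hij : i ≠ j) (hv : ∀ i, v i ≠ 0) (hc : c ≠ 0) :
    #(solutions N v c) ≤
      #(((v i).num * (v j).den * c.den) * ((v j).num * (v i).den * c.den) : ℤ).divisors := by
  set a : ℤ := (v i).num * (v j).den * c.den with ha
  set b : ℤ := (v j).num * (v i).den * c.den with hb
  set e : ℤ := c.num * (v i).den * (v j).den with he
  have hvi : (v i).num ≠ 0 := Rat.num_ne_zero.2 (hv i)
  have hvj : (v j).num ≠ 0 := Rat.num_ne_zero.2 (hv j)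
  have hab : a * b ≠ 0 := by simp [ha, hb, hvi, hvj]
  have he0 : (e : ℚ) ≠ 0 := by simp [he, hc]
  refine (card_le_card_of_injOn (t := (a * b).divisors.image ((↑) : ℤ → ℚ))
    (fun x ↦ e * (x i)⁻¹ - a) (fun x hx ↦ ?_) fun x hx y hy hxy ↦ ?_).trans card_image_le
  · obtain ⟨hxN, hsum⟩ := mem_solutions.1 hx
    obtain ⟨X, hX, hxi⟩ := exists_eq_inv_of_mem_unitFractions (hxN i)
    obtain ⟨Y, hY, hxj⟩ := exists_eq_inv_of_mem_unitFractions (hxN j)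
    have heq : a * Y + b * X = e * X * Y := by
      rw [dotProduct, huniv, sum_pair hij, hxi, hxj, ← Rat.num_div_den (v i),
        ← Rat.num_div_den (v j), ← Rat.num_div_den c] at hsum
      field_simp at hsum
      norm_cast at hsum
      rw [ha, hb, he]
      linear_combination hsum
    refine mem_coe.2 (mem_image.2 ⟨e * X - a, Int.mem_divisors.2 ⟨⟨e * Y - b, ?_⟩, hab⟩, ?_⟩)
    · linear_combination e * heq
    · simp only [hxi, inv_inv, Int.cast_sub, Int.cast_mul]
  · refine eq_of_dotProduct_eq (hv j) (mem_solutions.1 hx).2 (mem_solutions.1 hy).2 fun l hl ↦ ?_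
    have hli : l = i := by simpa [huniv, hl] using mem_univ l
    rw [hli]
    exact inv_injective (mul_left_cancel₀ he0 (sub_left_injective hxy))

variable (ι)

theorem exists_card_solutions_le_of_card_eq_two (hι : Fintype.card ι = 2) {ε : ℝ} (hε : 0 < ε)
    (m : ℕ) :
    ∃ C > 0, ∀ N : ℕ, 1 ≤ N → ∀ (v : ι → ℚ) (c : ℚ), (∀ i, v i ≠ 0) → c ≠ 0 →
      HeightLE v c ((N : ℝ) ^ m) → (#(solutions N v c) : ℝ) ≤ C * (N : ℝ) ^ ε := by
  obtain ⟨i, j, hij, huniv⟩ := card_eq_two.1 (card_univ.trans hι)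
  obtain ⟨C, hC, hdiv⟩ := exists_card_divisors_le (show 0 < ε / (m * 6 + 1) by positivity)
  refine ⟨2 * C, by positivity, fun N hN v c hv hc hh ↦ ?_⟩
  set D : ℤ := ((v i).num * (v j).den * c.den) * ((v j).num * (v i).den * c.den) with hD
  have hDle : D.natAbs ≤ N ^ (m * 6) := by
    have hi := num_den_le_of_mulHeight₁_le (hh.1 i)
    have hj := num_den_le_of_mulHeight₁_le (hh.1 j)
    have hc := num_den_le_of_mulHeight₁_le hh.2
    rw [hD]
    simp only [Int.natAbs_mul, Int.natAbs_natCast]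
    calc _ ≤ (N ^ m * N ^ m * N ^ m) * (N ^ m * N ^ m * N ^ m) := by
          gcongr <;> simp only [hi, hj, hc]
      _ = N ^ (m * 6) := by ring
  calc (#(solutions N v c) : ℝ) ≤ 2 * #D.natAbs.divisors := by
        rw [← Nat.cast_ofNat, ← Nat.cast_mul, ← card_intDivisors]
        exact_mod_cast card_solutions_le_card_intDivisors huniv hij hv hc
    _ ≤ 2 * (C * ((N : ℝ) ^ (m * 6)) ^ (ε / (m * 6 + 1))) := by
        gcongr
        refine (hdiv _).trans ?_
        gcongr
        exact_mod_cast hDle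
    _ ≤ 2 * C * (N : ℝ) ^ ε := by
        rw [← Real.rpow_natCast_mul N.cast_nonneg, mul_assoc]
        gcongr
        · exact_mod_cast hN
        · push_cast
          rw [mul_div_assoc', div_le_iff₀ (by positivity)]
          linarith

variable {ι}

lemma card_filter_apply_eq_le (l : ι) (q : ℚ) :
    #{x ∈ solutions N v c | x l = q} ≤
      #(solutions N (({l}ᶜ : Finset ι).restrict v) (c - v l * q)) := by
  refine card_le_card_of_injOn ({l}ᶜ : Finset ι).restrict (fun x hx ↦ ?_) fun x hx y hy hxy ↦ ?_
  · obtain ⟨hxs, rfl⟩ := mem_filter.1 hx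
    obtain ⟨hxN, hsum⟩ := mem_solutions.1 hxs
    refine mem_coe.2 (mem_solutions.2 ⟨fun i ↦ hxN i, ?_⟩)
    rw [← hsum, dotProduct_eq_restrict_add_restrict_compl {l} v x,
      eq_sub_iff_add_eq', add_left_inj]
    simp [dotProduct]
  · funext i
    by_cases hi : i = l
    · rw [hi, (mem_filter.1 hx).2, (mem_filter.1 hy).2]
    · exact congrFun hxy ⟨i, by simpa using hi⟩

lemma exists_compl_singleton_eq_pair (hι : Fintype.card ι = 3) {i j : ι} (hij : i ≠ j) :
    ∃ l, ({l}ᶜ : Finset ι) = {i, j} := by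
  have hone : #({i, j}ᶜ : Finset ι) = 1 := by rw [card_compl, hι, card_pair hij]
  obtain ⟨l, hl⟩ := card_eq_one.1 hone
  exact ⟨l, by rw [← hl, compl_compl]⟩

variable (ι)

lemma exists_card_solutions_compl_singleton_le (hι : Fintype.card ι = 3) {ε : ℝ} (hε : 0 < ε)
    (m : ℕ) :
    ∃ C > 0, ∀ l : ι, ∀ N : ℕ, 1 ≤ N → ∀ (v : ({l}ᶜ : Finset ι) → ℚ) (c : ℚ), (∀ i, v i ≠ 0) →
      HeightLE v c ((N : ℝ) ^ m) →
      (#(solutions N v c) : ℝ) ≤ C * (N : ℝ) ^ ε + if c = 0 then C * (N : ℝ) ^ (1 + ε) else 0 := by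
  have hcompl (l : ι) : Fintype.card ({l}ᶜ : Finset ι) = 2 := by
    rw [Fintype.card_coe, card_compl, hι, card_singleton]
  choose C₁ hC₁ hne using fun l : ι ↦
    exists_card_solutions_le_of_card_eq_two ({l}ᶜ : Finset ι) (hcompl l) hε m
  choose C₂ _ hany using fun l : ι ↦ exists_card_solutions_le ({l}ᶜ : Finset ι) hε m
  obtain ⟨C, hC⟩ := Finite.exists_le fun l ↦ max (C₁ l) (C₂ l)
  have : Nonempty ι := Fintype.card_pos_iff.1 (by lia)
  have hC0 : 0 < C :=
    (hC₁ (Classical.arbitrary ι)).trans_le ((le_max_left _ _).trans (hC (Classical.arbitrary ι)))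
  refine ⟨C, hC0, fun l N hN v c hv hh ↦ ?_⟩
  obtain ⟨hCl₁, hCl₂⟩ := max_le_iff.1 (hC l)
  split_ifs with hc
  · have hle := hany l N hN v c hv hh
    rw [hcompl, Nat.cast_ofNat, div_self two_ne_zero] at hle
    exact hle.trans (le_add_of_nonneg_of_le (by positivity) (by gcongr))
  · rw [add_zero]
    exact (hne l N hN v c hv hc hh).trans (by gcongr)

theorem exists_card_solutions_le_of_card_eq_three (hι : Fintype.card ι = 3) {ε : ℝ} (hε : 0 < ε)
    (m : ℕ) :
    ∃ C > 0, ∀ N : ℕ, 2 ≤ N → ∀ (v : ι → ℚ) (c : ℚ), (∃ i j, i ≠ j ∧ v i ≠ 0 ∧ v j ≠ 0) →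
      c ≠ 0 → HeightLE v c ((N : ℝ) ^ m) →
      (#(solutions N v c) : ℝ) ≤ C * (N : ℝ) ^ (1 + ε) := by
  obtain ⟨C, hC, hfiber⟩ := exists_card_solutions_compl_singleton_le ι hι hε (2 * m + 2)
  refine ⟨3 * C, by positivity, fun N hN v c ⟨i, j, hij, hvi, hvj⟩ hc hh ↦ ?_⟩
  have hN0 : (0 : ℝ) < N := by positivity
  obtain ⟨l, hl⟩ := exists_compl_singleton_eq_pair hι hij
  have hv (k : ({l}ᶜ : Finset ι)) : v k ≠ 0 := by
    have hk := k.2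
    simp only [hl, mem_insert, mem_singleton] at hk
    rcases hk with hk | hk <;> rwa [hk]
  calc (#(solutions N v c) : ℝ)
      = ∑ q ∈ unitFractions N, (#{x ∈ solutions N v c | x l = q} : ℝ) := by
        rw [card_eq_sum_card_fiberwise fun x hx ↦ (mem_solutions.1 hx).1 l, Nat.cast_sum]
    _ ≤ ∑ q ∈ unitFractions N,
          (C * (N : ℝ) ^ ε + if c - v l * q = 0 then C * (N : ℝ) ^ (1 + ε) else 0) :=
        sum_le_sum fun q hq ↦ (Nat.cast_le.2 (card_filter_apply_eq_le l q)).trans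
          (hfiber l N (by lia) _ _ hv (hh.restrict_sub_mul hN l hq {l}ᶜ))
    _ = #(unitFractions N) * (C * (N : ℝ) ^ ε) +
          #{q ∈ unitFractions N | c - v l * q = 0} * (C * (N : ℝ) ^ (1 + ε)) := by
        rw [sum_add_distrib, sum_const, ← sum_filter, sum_const, nsmul_eq_mul, nsmul_eq_mul]
    _ ≤ 2 * N * (C * (N : ℝ) ^ ε) + 1 * (C * (N : ℝ) ^ (1 + ε)) := by
        gcongr
        · exact_mod_cast card_unitFractions_le
        · exact_mod_cast card_filter_sub_mul_eq_zero_le_one hc (v l) _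
    _ = 3 * C * (N : ℝ) ^ (1 + ε) := by
        rw [Real.rpow_one_add' hN0.le (by positivity)]
        ring

end FewUnknowns

section Cofactors
open Finset Height Matrix

/-- The cofactors of `A` along its row `i`: the coefficients of `A.det` as a linear form in that
row. -/
def cofactorRow {ι R : Type*} [Fintype ι] [DecidableEq ι] [CommRing R] (A : Matrix ι ι R) (i : ι) :
    ι → R :=
  fun j ↦ A.adjugate j i

variable {ι R : Type*} [Fintype ι] [DecidableEq ι] [CommRing R]

lemma cofactorRow_updateRow_self (A : Matrix ι ι R) (i : ι) (b : ι → R) :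
    cofactorRow (A.updateRow i b) i = cofactorRow A i :=
  funext fun j ↦ by simp only [cofactorRow, adjugate_apply, updateRow_idem]

lemma cofactorRow_dotProduct (A : Matrix ι ι R) (i : ι) (b : ι → R) :
    cofactorRow A i ⬝ᵥ b = (A.updateRow i b).det := by
  rw [← cramer_transpose_apply, cramer_eq_adjugate_mulVec, ← adjugate_transpose]
  rfl

lemma cofactorRow_dotProduct_self (A : Matrix ι ι R) (i : ι) : cofactorRow A i ⬝ᵥ A i = A.det := by
  rw [cofactorRow_dotProduct, updateRow_eq_self]

lemma cofactorRow_dotProduct_of_ne (A : Matrix ι ι R) {i l : ι} (hl : l ≠ i) :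
    cofactorRow A i ⬝ᵥ A l = 0 := by
  rw [cofactorRow_dotProduct]
  exact det_zero_of_row_eq hl.symm (by rw [updateRow_self, updateRow_ne hl])

lemma exists_ne_cofactorRow_ne_zero [NoZeroDivisors R] [Nontrivial ι] {A : Matrix ι ι R}
    (hA : ∀ i j, A i j ≠ 0) (hdet : A.det ≠ 0) (i : ι) :
    ∃ j k, j ≠ k ∧ cofactorRow A i j ≠ 0 ∧ cofactorRow A i k ≠ 0 := by
  rw [← cofactorRow_dotProduct_self A i] at hdet
  obtain ⟨j, -, hj⟩ := exists_ne_zero_of_sum_ne_zero hdet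
  have hj := left_ne_zero_of_mul hj
  obtain ⟨l, hl⟩ := exists_ne i
  by_contra! h
  have hsum := cofactorRow_dotProduct_of_ne A hl
  rw [dotProduct, Fintype.sum_eq_single j fun k hk ↦ by rw [h j k hk.symm hj, zero_mul]] at hsum
  exact mul_ne_zero hj (hA l j) hsum

lemma mulHeight₁_intCast_units (u : ℤˣ) : mulHeight₁ (((u : ℤ)) : ℚ) = 1 := by
  rcases Int.units_eq_one_or u with rfl | rfl <;> simp [mulHeight₁_neg]

lemma mulHeight₁_det_le {A : Matrix ι ι ℚ} {N : ℕ} (hN : 2 ≤ N)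
    (hA : ∀ i j, mulHeight₁ (A i j) ≤ N) :
    mulHeight₁ A.det ≤ (N : ℝ) ^ ((Fintype.card ι + 1) * (Fintype.card ι).factorial) := by
  set n := Fintype.card ι with hn
  have hcard : #(univ : Finset (Equiv.Perm ι)) = n.factorial := Fintype.card_perm
  have hfac : (n.factorial : ℝ) ≤ (N : ℝ) ^ n.factorial := by
    exact_mod_cast (Nat.lt_pow_self hN).le
  have hterm (g : Equiv.Perm ι) : mulHeight₁ ((g.sign : ℤ) * ∏ i, A (g i) i) ≤ (N : ℝ) ^ n := by
    calc _ ≤ 1 * ∏ i, mulHeight₁ (A (g i) i) := by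
          rw [← mulHeight₁_intCast_units g.sign]
          grw [mulHeight₁_mul_le, mulHeight₁_prod_le]
      _ ≤ (N : ℝ) ^ n := by
          rw [one_mul, hn, ← card_univ, ← prod_const]
          exact prod_le_prod (fun _ _ ↦ by positivity) fun i _ ↦ hA _ _
  calc mulHeight₁ A.det
      ≤ n.factorial * ∏ g : Equiv.Perm ι, mulHeight₁ ((g.sign : ℤ) * ∏ i, A (g i) i) := by
        have hle := mulHeight₁_sum_le (s := (univ : Finset (Equiv.Perm ι))) univ_nonempty
          fun g ↦ ((g.sign : ℤ) : ℚ) * ∏ i, A (g i) i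
        rwa [NumberField.totalWeight_eq_finrank, Module.finrank_self, pow_one, hcard,
          ← det_apply'] at hle
    _ ≤ (N : ℝ) ^ n.factorial * ∏ _g : Equiv.Perm ι, (N : ℝ) ^ n := by
        gcongr with g
        exact hterm g
    _ = (N : ℝ) ^ ((n + 1) * n.factorial) := by
        rw [prod_const, hcard]
        ring

variable (ι)

lemma exists_heightLE_cofactorRow :
    ∃ m : ℕ, ∀ N : ℕ, 2 ≤ N → ∀ A : Matrix ι ι ℚ, (∀ i j, A i j ∈ unitFractions N) → ∀ i,
      HeightLE (cofactorRow A i) A.det ((N : ℝ) ^ m) := by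
  refine ⟨_, fun N hN A hA i ↦ ⟨fun j ↦ ?_, mulHeight₁_det_le hN fun k l ↦
    mulHeight₁_le_of_mem_unitFractions (hA k l)⟩⟩
  rw [cofactorRow, adjugate_apply]
  refine mulHeight₁_det_le hN fun k l ↦ ?_
  have hN1 : (1 : ℝ) ≤ N := by exact_mod_cast (by lia : 1 ≤ N)
  rw [updateRow_apply, Pi.single_apply]
  split_ifs
  · simpa using hN1
  · simpa using hN1
  · exact mulHeight₁_le_of_mem_unitFractions (hA k l)

end Cofactors

section Rows
open Finset Matrix Module

lemma exists_subset_card_lt_finrank_mem_span {α k V : Type*} [Field k] [AddCommGroup V] [Module k V]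
    [FiniteDimensional k V] {φ : V →ₗ[k] k} (hφ : φ ≠ 0) {t : Finset α} {f : α → V}
    (hf : ∀ l ∈ t, φ (f l) = 0) :
    ∃ J ⊆ t, #J < finrank k V ∧ ∀ l ∈ t, f l ∈ Submodule.span k (f '' J) := by
  classical
  obtain ⟨b, hbt, -, hspan, hind⟩ :=
    exists_linearIndepOn_extension (linearIndepOn_empty k f) (Set.empty_subset (t : Set α))
  lift b to Finset α using t.finite_toSet.subset hbt
  refine ⟨b, coe_subset.1 hbt, ?_, fun l hl ↦ hspan (Set.mem_image_of_mem f hl)⟩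
  have hker : Submodule.span k (f '' b) ≤ φ.ker := by
    rw [Submodule.span_le, Set.image_subset_iff]
    exact fun l hl ↦ hf l (hbt hl)
  calc #b = finrank k (Submodule.span k (f '' b)) := by
        rw [Set.image_eq_range, finrank_span_eq_card hind]
        simp
    _ ≤ finrank k φ.ker := Submodule.finrank_mono hker
    _ < finrank k V := Submodule.finrank_lt (LinearMap.ker_eq_top.not.2 hφ)

variable {ι : Type*} [Fintype ι]

lemma dotProduct_eq_restrict_of_support_subset {K : Finset ι} {w : ι → ℚ} (hw : ∀ j ∉ K, w j = 0)
    (x : ι → ℚ) : w ⬝ᵥ x = K.restrict w ⬝ᵥ K.restrict x := by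
  classical
  rw [dotProduct_eq_restrict_add_restrict_compl K w x, add_eq_left]
  exact sum_eq_zero fun j _ ↦ mul_eq_zero_of_left (hw j (mem_compl.1 j.2)) _

variable [DecidableEq ι]

/-- The positions of the nonzero cofactors of `A` along row `i`. -/
def cofactorSupport (A : Matrix ι ι ℚ) (i : ι) : Finset ι := {j | cofactorRow A i j ≠ 0}

/-- The cofactors of `A` along row `i` are nonzero exactly at `K`, and, for vectors supported in
`K`, orthogonality to all rows other than `i` is already forced by the rows in `J`. -/
structure CofactorPattern (A : Matrix ι ι ℚ) (i : ι) (K J : Finset ι) : Prop where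
  support : cofactorSupport A i = K
  orthogonal : ∀ w : ι → ℚ, (∀ j ∉ K, w j = 0) → (∀ l ∈ J, w ⬝ᵥ A l = 0) →
    ∀ l ≠ i, w ⬝ᵥ A l = 0

variable {A B : Matrix ι ι ℚ} {i : ι} {K J : Finset ι}

lemma CofactorPattern.dotProduct_eq_zero (hA : CofactorPattern A i K J)
    (hB : CofactorPattern B i K J) (hi : i ∉ J) (hAB : ∀ l ∈ J, A l = B l) {l : ι} (hl : l ≠ i) :
    cofactorRow A i ⬝ᵥ B l = 0 := by
  refine hB.orthogonal _ (fun j hj ↦ ?_) (fun k hk ↦ ?_) l hl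
  · simpa [← hA.support, cofactorSupport] using hj
  · rw [← hAB k hk, cofactorRow_dotProduct_of_ne A (ne_of_mem_of_not_mem hk hi)]

lemma exists_cofactorPattern (hdet : A.det ≠ 0) (i : ι) :
    ∃ J, i ∉ J ∧ #J < #(cofactorSupport A i) ∧ CofactorPattern A i (cofactorSupport A i) J := by
  set v := cofactorRow A i with hv
  set K := cofactorSupport A i with hK
  have hvK : ∀ j ∉ K, v j = 0 := fun j hj ↦ by simpa [hK, cofactorSupport] using hj
  set φ := dotProductBilin ℚ ℚ (K.restrict v) with hφ
  have hφ0 : φ ≠ 0 := by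
    intro h
    apply hdet
    rw [← cofactorRow_dotProduct_self A i, ← hv, dotProduct_eq_restrict_of_support_subset hvK]
    exact LinearMap.congr_fun h (K.restrict (A i))
  obtain ⟨J, hJ, hcard, hspan⟩ := exists_subset_card_lt_finrank_mem_span hφ0
    (t := univ.erase i) (f := fun l ↦ K.restrict (A l)) fun l hl ↦ by
      rw [hφ, dotProductBilin_apply_apply, ← dotProduct_eq_restrict_of_support_subset hvK]
      exact cofactorRow_dotProduct_of_ne A (ne_of_mem_erase hl)
  rw [finrank_fintype_fun_eq_card, Fintype.card_coe] at hcard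
  refine ⟨J, fun hi ↦ ne_of_mem_erase (hJ hi) rfl, hcard, rfl, fun w hw hwJ l hl ↦ ?_⟩
  have hker : Submodule.span ℚ ((fun l ↦ K.restrict (A l)) '' J) ≤
      (dotProductBilin ℚ ℚ (K.restrict w)).ker := by
    rw [Submodule.span_le, Set.image_subset_iff]
    intro k hk
    exact (dotProduct_eq_restrict_of_support_subset hw (A k)).symm.trans (hwJ k hk)
  rw [dotProduct_eq_restrict_of_support_subset hw]
  exact hker (hspan l (mem_erase.2 ⟨hl, mem_univ l⟩))

end Rows

section Counting
open Finset Matrix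

variable {ι : Type*} [Fintype ι] [DecidableEq ι]

/-- The matrices of determinant `δ` whose entries are unit fractions of height at most `N`. -/
noncomputable def unitFractionMatrices (ι : Type*) [Fintype ι] [DecidableEq ι] (N : ℕ) (δ : ℚ) :
    Finset (Matrix ι ι ℚ) :=
  {A ∈ (Fintype.piFinset fun _ ↦ Fintype.piFinset fun _ ↦ unitFractions N).map of.toEmbedding |
    A.det = δ}

variable {N : ℕ} {δ : ℚ} {A : Matrix ι ι ℚ} {s : Finset (Matrix ι ι ℚ)} {i : ι}

lemma mem_unitFractionMatrices :
    A ∈ unitFractionMatrices ι N δ ↔ (∀ i j, A i j ∈ unitFractions N) ∧ A.det = δ := by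
  simp only [unitFractionMatrices, mem_filter, mem_map_equiv, Fintype.mem_piFinset, of_symm_apply]

lemma row_mem_solutions (hA : A ∈ unitFractionMatrices ι N δ) :
    A i ∈ solutions N (cofactorRow A i) δ := by
  rw [mem_unitFractionMatrices] at hA
  exact mem_solutions.2 ⟨hA.1 i, (cofactorRow_dotProduct_self A i).trans hA.2⟩

lemma card_filter_updateRow_eq_le (hs : s ⊆ unitFractionMatrices ι N δ) (B : Matrix ι ι ℚ) :
    #{A ∈ s | A.updateRow i 0 = B} ≤ #(solutions N (cofactorRow B i) δ) := by
  refine card_le_card_of_injOn (fun A ↦ A i) (fun A hA ↦ ?_) fun A hA A' hA' h ↦ ?_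
  · obtain ⟨hAs, rfl⟩ := mem_filter.1 hA
    rw [cofactorRow_updateRow_self]
    exact row_mem_solutions (hs hAs)
  · rw [← A.updateRow_eq_self i, ← A'.updateRow_eq_self i, ← A.updateRow_idem i 0,
      ← A'.updateRow_idem i 0, (mem_filter.1 hA).2, (mem_filter.1 hA').2]
    exact congrArg _ h

lemma card_le_prod_card_mul (hs : s ⊆ unitFractionMatrices ι N δ) {T : ι → Finset (ι → ℚ)}
    (hT : ∀ A ∈ s, ∀ l ≠ i, A l ∈ T l) {M : ℝ} (hM0 : 0 ≤ M)
    (hM : ∀ A ∈ s, (#(solutions N (cofactorRow A i) δ) : ℝ) ≤ M) :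
    (#s : ℝ) ≤ (∏ l ∈ univ.erase i, (#(T l) : ℝ)) * M := by
  have himage : #(s.image (updateRow · i 0)) ≤ ∏ l ∈ univ.erase i, #(T l) := by
    refine (card_le_card_of_injOn (t := Fintype.piFinset (Function.update T i {0})) of.symm
      (fun B hB ↦ ?_) of.symm.injective.injOn).trans_eq ?_
    · obtain ⟨A, hA, rfl⟩ := mem_image.1 hB
      refine Fintype.mem_piFinset.2 fun l ↦ ?_
      rcases eq_or_ne l i with rfl | hl
      · rw [Function.update_self, mem_singleton]
        exact A.updateRow_self
      · rw [Function.update_of_ne hl]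
        exact Set.mem_of_eq_of_mem (A.updateRow_ne hl) (hT A hA l hl)
    · rw [Fintype.card_piFinset, ← mul_prod_erase _ _ (mem_univ i), Function.update_self,
        card_singleton, one_mul]
      exact prod_congr rfl fun l hl ↦ by rw [Function.update_of_ne (ne_of_mem_erase hl)]
  refine (card_le_card_mul_of_card_fiber_le (M := M) (fun A hA ↦ mem_image_of_mem _ hA)
    fun B hB ↦ (Nat.cast_le.2 (card_filter_updateRow_eq_le (i := i) hs B)).trans ?_).trans ?_
  · obtain ⟨A, hA, rfl⟩ := mem_image.1 hB
    rw [cofactorRow_updateRow_self]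
    exact hM A hA
  · gcongr
    exact_mod_cast himage

lemma card_le_pow_mul (hs : s ⊆ unitFractionMatrices ι N δ) {M : ℝ} (hM0 : 0 ≤ M)
    (hM : ∀ A ∈ s, (#(solutions N (cofactorRow A i) δ) : ℝ) ≤ M) :
    (#s : ℝ) ≤ (2 * N) ^ (Fintype.card ι * (Fintype.card ι - 1)) * M := by
  refine (card_le_prod_card_mul hs (T := fun _ ↦ Fintype.piFinset fun _ ↦ unitFractions N)
    (fun A hA l _ ↦ Fintype.mem_piFinset.2 ((mem_unitFractionMatrices.1 (hs hA)).1 l))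
    hM0 hM).trans ?_
  rw [prod_const, card_erase_of_mem (mem_univ i), card_univ, pow_mul]
  gcongr
  exact_mod_cast card_piFinset_unitFractions_le

variable {J K : Finset ι}

lemma card_le_pow_of_cofactorPattern_of_row_eq (hs : s ⊆ unitFractionMatrices ι N δ) (hi : i ∉ J)
    (hpat : ∀ A ∈ s, CofactorPattern A i K J) (hrow : ∀ A ∈ s, ∀ B ∈ s, ∀ l ∈ J, A l = B l)
    {M : ℝ} (hM0 : 0 ≤ M)
    (hM : ∀ A ∈ s, ∀ c, c = 0 ∨ c = δ → (#(solutions N (cofactorRow A i) c) : ℝ) ≤ M) :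
    (#s : ℝ) ≤ M ^ (Fintype.card ι - #J) := by
  rcases s.eq_empty_or_nonempty with rfl | ⟨A₀, hA₀⟩
  · rw [card_empty, Nat.cast_zero]
    positivity
  set T : ι → Finset (ι → ℚ) := fun l ↦
    if l ∈ J then {A₀ l} else solutions N (cofactorRow A₀ i) 0 with hT
  have mem_T : ∀ A ∈ s, ∀ l ≠ i, A l ∈ T l := by
    intro A hA l hl
    rw [hT]
    dsimp only
    split_ifs with hlJ
    · exact mem_singleton.2 (hrow A hA A₀ hA₀ l hlJ)
    · exact mem_solutions.2 ⟨(mem_unitFractionMatrices.1 (hs hA)).1 l,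
        (hpat A₀ hA₀).dotProduct_eq_zero (hpat A hA) hi (hrow A₀ hA₀ A hA) hl⟩
  have card_T : ∀ l, (#(T l) : ℝ) ≤ if l ∈ J then 1 else M := by
    intro l
    rw [hT]
    dsimp only
    split_ifs with hlJ
    · rw [card_singleton, Nat.cast_one]
    · exact hM A₀ hA₀ 0 (.inl rfl)
  calc (#s : ℝ) ≤ (∏ l ∈ univ.erase i, (#(T l) : ℝ)) * M :=
        card_le_prod_card_mul hs mem_T hM0 fun A hA ↦ hM A hA δ (.inr rfl)
    _ ≤ (∏ l ∈ univ.erase i, if l ∈ J then 1 else M) * if i ∈ J then 1 else M := by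
        rw [if_neg hi]
        gcongr with l
        exact card_T l
    _ = M ^ (Fintype.card ι - #J) := by
        rw [prod_erase_mul _ _ (mem_univ i), prod_ite, prod_const_one, one_mul, prod_const,
          filter_notMem_eq_sdiff, ← compl_eq_univ_sdiff, card_compl]

lemma card_le_mul_pow_of_cofactorPattern (hs : s ⊆ unitFractionMatrices ι N δ) (hi : i ∉ J)
    (hpat : ∀ A ∈ s, CofactorPattern A i K J) {M : ℝ} (hM0 : 0 ≤ M)
    (hM : ∀ A ∈ s, ∀ c, c = 0 ∨ c = δ → (#(solutions N (cofactorRow A i) c) : ℝ) ≤ M) :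
    (#s : ℝ) ≤ (2 * N) ^ (Fintype.card ι * #J) * M ^ (Fintype.card ι - #J) := by
  have card_rows : #(Fintype.piFinset fun _ : J ↦ Fintype.piFinset fun _ : ι ↦ unitFractions N) ≤
      (2 * N) ^ (Fintype.card ι * #J) := by
    rw [Fintype.card_piFinset, prod_const, card_univ, Fintype.card_coe, pow_mul]
    exact Nat.pow_le_pow_left card_piFinset_unitFractions_le _
  refine (card_le_card_mul_of_card_fiber_le (f := fun A (l : J) ↦ A l)
    (M := M ^ (Fintype.card ι - #J)) (fun A hA ↦ ?_) fun b _ ↦ ?_).trans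
    (mul_le_mul_of_nonneg_right (mod_cast card_rows) (by positivity))
  · simp only [Fintype.mem_piFinset]
    exact fun l ↦ (mem_unitFractionMatrices.1 (hs hA)).1 l
  · refine card_le_pow_of_cofactorPattern_of_row_eq ((filter_subset _ s).trans hs) hi
      (fun A hA ↦ hpat A (mem_of_mem_filter A hA)) (fun A hA B hB l hl ↦ ?_) hM0
      fun A hA ↦ hM A (mem_of_mem_filter A hA)
    exact congrFun ((mem_filter.1 hA).2.trans (mem_filter.1 hB).2.symm) ⟨l, hl⟩

variable (K) in
lemma exists_card_le_of_cofactorPattern (hi : i ∉ J) {ε : ℝ} (hε : 0 < ε) :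
    ∃ C > 0, ∀ N : ℕ, 2 ≤ N → ∀ δ, ∀ s ⊆ unitFractionMatrices ι N δ,
      (∀ A ∈ s, CofactorPattern A i K J) →
      (#s : ℝ) ≤ C * (N : ℝ) ^
        (Fintype.card ι * #J + (Fintype.card ι - #J) * (Fintype.card ι - #K / 2) + ε : ℝ) := by
  set n := Fintype.card ι with hn
  have hn0 : (0 : ℝ) < n := mod_cast Fintype.card_pos_iff.2 ⟨i⟩
  obtain ⟨m, hm⟩ := exists_heightLE_cofactorRow ι
  obtain ⟨C, hC, hsol⟩ := exists_card_solutions_le_of_support ι (div_pos hε hn0) m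
  refine ⟨2 ^ (n * #J) * C ^ (n - #J), by positivity, fun N hN δ s hs hpat ↦ ?_⟩
  have hN1 : (1 : ℝ) ≤ N := by exact_mod_cast one_le_two.trans hN
  have card_row : ∀ A ∈ s, ∀ c, c = 0 ∨ c = δ → (#(solutions N (cofactorRow A i) c) : ℝ) ≤
      C * (N : ℝ) ^ (n - #K / 2 + ε / n : ℝ) := by
    intro A hA c hc
    obtain ⟨hentries, hdet⟩ := mem_unitFractionMatrices.1 (hs hA)
    have hh := hm N hN A hentries i
    rw [← (hpat A hA).support]
    refine hsol N (one_le_two.trans hN) _ c ⟨hh.1, ?_⟩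
    rcases hc with rfl | rfl
    · rw [Height.mulHeight₁_zero]
      exact one_le_pow₀ hN1
    · exact hdet ▸ hh.2
  calc (#s : ℝ) ≤ (2 * N) ^ (n * #J) * (C * (N : ℝ) ^ (n - #K / 2 + ε / n : ℝ)) ^ (n - #J) :=
        card_le_mul_pow_of_cofactorPattern hs hi hpat (by positivity) card_row
    _ = 2 ^ (n * #J) * C ^ (n - #J) * (N : ℝ) ^
          (n * #J + (n - #J) * (n - #K / 2) + (n - #J) * (ε / n) : ℝ) := by
        have hJ : #J ≤ n := card_le_univ J
        have hN0 : (0 : ℝ) < N := by positivity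
        rw [mul_pow, mul_pow, ← Real.rpow_mul_natCast hN0.le, mul_mul_mul_comm,
          ← Real.rpow_natCast (N : ℝ), ← Real.rpow_add hN0]
        congr 2
        push_cast [hJ]
        ring
    _ ≤ _ := by
        gcongr
        rw [mul_div_assoc', div_le_iff₀ hn0, mul_comm]
        gcongr
        exact sub_le_self _ (by positivity)

variable (ι)

theorem exists_card_unitFractionMatrices_le_of_card_eq_three (hι : Fintype.card ι = 3) {ε : ℝ}
    (hε : 0 < ε) :
    ∃ C ≥ 0, ∀ N : ℕ, 2 ≤ N → ∀ δ ≠ 0,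
      (#(unitFractionMatrices ι N δ) : ℝ) ≤ C * (N : ℝ) ^ (7 + ε) := by
  have : Nontrivial ι := Fintype.one_lt_card_iff_nontrivial.1 (by lia)
  obtain ⟨i⟩ := (inferInstance : Nonempty ι)
  obtain ⟨m, hm⟩ := exists_heightLE_cofactorRow ι
  obtain ⟨C, hC, hsol⟩ := exists_card_solutions_le_of_card_eq_three ι hι hε m
  refine ⟨2 ^ 6 * C, by positivity, fun N hN δ hδ ↦ ?_⟩
  calc (#(unitFractionMatrices ι N δ) : ℝ) ≤ (2 * N) ^ 6 * (C * (N : ℝ) ^ (1 + ε)) := by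
        refine (card_le_pow_mul (i := i) (M := C * (N : ℝ) ^ (1 + ε)) subset_rfl (by positivity)
          fun A hA ↦ ?_).trans_eq (by rw [hι])
        obtain ⟨hentries, rfl⟩ := mem_unitFractionMatrices.1 hA
        exact hsol N hN _ _ (exists_ne_cofactorRow_ne_zero
          (fun k l ↦ ne_zero_of_mem_unitFractions (hentries k l)) hδ i) hδ (hm N hN A hentries i)
    _ = 2 ^ 6 * C * (N : ℝ) ^ (7 + ε) := by
        rw [mul_pow, mul_mul_mul_comm, ← Real.rpow_natCast (N : ℝ), ← Real.rpow_add (by positivity)]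
        congr 2
        push_cast
        ring

variable {ι}

lemma exists_card_le_of_cofactorSupport_eq_univ (i : ι) {σ ε : ℝ}
    (hσ : ∀ k ∈ Icc 1 (Fintype.card ι), σ * (k ^ 2 - k + 6) ≤ k) (hε : 0 < ε) :
    ∃ C > 0, ∀ N : ℕ, 2 ≤ N → ∀ δ ≠ 0, ∀ s ⊆ unitFractionMatrices ι N δ,
      (∀ A ∈ s, cofactorSupport A i = univ) →
      (#s : ℝ) ≤ C * (N : ℝ) ^ ((Fintype.card ι : ℝ) ^ 2 - Fintype.card ι / 2 - σ + ε) := by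
  set n := Fintype.card ι
  have hn1 : 1 ≤ n := Fintype.card_pos_iff.2 ⟨i⟩
  obtain ⟨m, hm⟩ := exists_heightLE_cofactorRow ι
  obtain ⟨C, hC, hsol⟩ := exists_card_solutions_le_of_ne_zero hσ hε m
  refine ⟨2 ^ (n * (n - 1)) * C, by positivity, fun N hN δ hδ s hs hsupp ↦ ?_⟩
  calc (#s : ℝ) ≤ (2 * N) ^ (n * (n - 1)) * (C * (N : ℝ) ^ (n / 2 - σ + ε)) := by
        refine card_le_pow_mul (i := i) hs (by positivity) fun A hA ↦ ?_
        obtain ⟨hentries, rfl⟩ := mem_unitFractionMatrices.1 (hs hA)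
        exact hsol N (one_le_two.trans hN) _ _
          (fun j ↦ filter_eq_self.1 (hsupp A hA) j (mem_univ j)) hδ (hm N hN A hentries i)
    _ = 2 ^ (n * (n - 1)) * C * (N : ℝ) ^ ((n : ℝ) ^ 2 - n / 2 - σ + ε) := by
        rw [mul_pow, mul_mul_mul_comm, ← Real.rpow_natCast (N : ℝ), ← Real.rpow_add (by positivity)]
        congr 2
        push_cast [hn1]
        ring

lemma pattern_exponent_le {n k r : ℝ} (hrk : r + 1 ≤ k) (hk : 2 ≤ k) (hkn : k + 1 ≤ n) :
    n * r + (n - r) * (n - k / 2) ≤ n ^ 2 - n / 2 - 1 / 2 := by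
  nlinarith [mul_nonneg (sub_nonneg.2 hk) (sub_nonneg.2 hkn),
    mul_nonneg (sub_nonneg.2 hrk) (sub_nonneg.2 hk)]

lemma exists_card_le_of_cofactorPattern_of_card_lt {σ ε : ℝ}
    (hσ : ∀ k ∈ Icc 1 (Fintype.card ι), σ * (k ^ 2 - k + 6) ≤ k) (hε : 0 < ε) (hi : i ∉ J)
    (hJK : #J < #K) (hK : 1 < #K) :
    ∃ C > 0, ∀ N : ℕ, 2 ≤ N → ∀ δ ≠ 0, ∀ s ⊆ unitFractionMatrices ι N δ,
      (∀ A ∈ s, CofactorPattern A i K J) →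
      (#s : ℝ) ≤ C * (N : ℝ) ^ ((Fintype.card ι : ℝ) ^ 2 - Fintype.card ι / 2 - σ + ε) := by
  rcases eq_or_ne K univ with rfl | hKuniv
  · obtain ⟨C, hC, hcard⟩ := exists_card_le_of_cofactorSupport_eq_univ i hσ hε
    exact ⟨C, hC, fun N hN δ hδ s hs hpat ↦ hcard N hN δ hδ s hs fun A hA ↦ (hpat A hA).support⟩
  · have hKn : #K < Fintype.card ι := (card_lt_iff_ne_univ K).2 hKuniv
    have hσ₁ : σ * ((1 : ℕ) ^ 2 - (1 : ℕ) + 6) ≤ (1 : ℕ) := hσ 1 (mem_Icc.2 ⟨le_rfl, by lia⟩)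
    have hexp := pattern_exponent_le (n := Fintype.card ι) (k := #K) (r := #J)
      (mod_cast hJK) (mod_cast hK) (mod_cast hKn)
    obtain ⟨C, hC, hcard⟩ := exists_card_le_of_cofactorPattern K hi hε
    refine ⟨C, hC, fun N hN δ _ s hs hpat ↦ (hcard N hN δ s hs hpat).trans ?_⟩
    gcongr
    · exact_mod_cast one_le_two.trans hN
    · push_cast at hσ₁
      linarith

theorem exists_card_unitFractionMatrices_le [Nontrivial ι] {σ ε : ℝ}
    (hσ : ∀ k ∈ Icc 1 (Fintype.card ι), σ * (k ^ 2 - k + 6) ≤ k) (hε : 0 < ε) :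
    ∃ C ≥ 0, ∀ N : ℕ, 2 ≤ N → ∀ δ ≠ 0, (#(unitFractionMatrices ι N δ) : ℝ) ≤
      C * (N : ℝ) ^ ((Fintype.card ι : ℝ) ^ 2 - Fintype.card ι / 2 - σ + ε) := by
  classical
  obtain ⟨i⟩ := (inferInstance : Nonempty ι)
  let κ := {p : Finset ι × Finset ι // i ∉ p.2 ∧ #p.2 < #p.1 ∧ 1 < #p.1}
  choose C hC hcard using fun p : κ ↦
    exists_card_le_of_cofactorPattern_of_card_lt hσ hε p.2.1 p.2.2.1 p.2.2.2
  refine ⟨∑ p, C p, sum_nonneg fun p _ ↦ (hC p).le, fun N hN δ hδ ↦ ?_⟩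
  set s := unitFractionMatrices ι N δ with hs
  have hcover : s ⊆ univ.biUnion fun p : κ ↦ {A ∈ s | CofactorPattern A i p.1.1 p.1.2} := by
    intro A hA
    obtain ⟨hentries, rfl⟩ := mem_unitFractionMatrices.1 hA
    obtain ⟨J, hi, hJ, hpat⟩ := exists_cofactorPattern hδ i
    obtain ⟨j, k, hjk, hj, hk⟩ := exists_ne_cofactorRow_ne_zero
      (fun k l ↦ ne_zero_of_mem_unitFractions (hentries k l)) hδ i
    have hK : 1 < #(cofactorSupport A i) :=
      one_lt_card.2 ⟨j, mem_filter_univ _ |>.2 hj, k, mem_filter_univ _ |>.2 hk, hjk⟩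
    exact mem_biUnion.2 ⟨⟨(_, J), hi, hJ, hK⟩, mem_univ _, mem_filter.2 ⟨hA, hpat⟩⟩
  calc (#s : ℝ) ≤ ∑ p : κ, (#{A ∈ s | CofactorPattern A i p.1.1 p.1.2} : ℝ) := by
        exact_mod_cast (card_le_card hcover).trans card_biUnion_le
    _ ≤ _ := by
        rw [sum_mul]
        exact sum_le_sum fun p _ ↦
          hcard p N hN δ hδ _ (filter_subset _ _) fun A hA ↦ (mem_filter.1 hA).2

lemma saving_mul_le {n k : ℝ} (hn : 4 ≤ n) (hk : 1 ≤ k) (hkn : k ≤ n) :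
    1 / (2 * n - 2) * (k ^ 2 - k + 6) ≤ k := by
  rw [one_div_mul_eq_div, div_le_iff₀ (by linarith)]
  nlinarith [mul_nonneg (sub_nonneg.2 hk) (by linarith : 0 ≤ 2 * n - 2 - k)]

variable (ι) in
theorem exists_card_unitFractionMatrices_le_of_four_le_card (hι : 4 ≤ Fintype.card ι) {ε : ℝ}
    (hε : 0 < ε) :
    ∃ C ≥ 0, ∀ N : ℕ, 2 ≤ N → ∀ δ ≠ 0, (#(unitFractionMatrices ι N δ) : ℝ) ≤
      C * (N : ℝ) ^ ((Fintype.card ι : ℝ) ^ 2 - Fintype.card ι / 2 -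
        1 / (2 * Fintype.card ι - 2) + ε) := by
  have : Nontrivial ι := Fintype.one_lt_card_iff_nontrivial.1 (by lia)
  exact exists_card_unitFractionMatrices_le (fun k hk ↦ saving_mul_le (mod_cast hι)
    (mod_cast (mem_Icc.1 hk).1) (mod_cast (mem_Icc.1 hk).2)) hε

section TwoByTwo

variable {M N : ℕ} {q r : ℚ}

lemma num_and_den_mul (hq : q ∈ unitFractions M) (hr : r ∈ unitFractions N) :
    (q * r).num.natAbs = 1 ∧ (q * r).den = q.den * r.den := by
  rw [mem_unitFractions] at hq hr
  have h : (q.num * r.num).natAbs.gcd (q.den * r.den) = 1 := by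
    rw [Int.natAbs_mul, hq.1, hr.1, mul_one, Nat.gcd_one_left]
  rw [Rat.mul_num, Rat.mul_den, h, Nat.cast_one, Int.ediv_one, Nat.div_one, Int.natAbs_mul, hq.1,
    hr.1]
  exact ⟨rfl, rfl⟩

lemma mul_mem_unitFractions (hq : q ∈ unitFractions M) (hr : r ∈ unitFractions N) :
    q * r ∈ unitFractions (M * N) := by
  obtain ⟨hnum, hden⟩ := num_and_den_mul hq hr
  rw [mem_unitFractions] at hq hr
  exact mem_unitFractions.2 ⟨hnum, hden ▸ Nat.mul_le_mul hq.2 hr.2⟩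

lemma exists_card_filter_mul_eq_le {ε : ℝ} (hε : 0 < ε) :
    ∃ C > 0, ∀ N : ℕ, ∀ b : ℚ,
      (#{p ∈ unitFractions N ×ˢ unitFractions N | p.1 * p.2 = b} : ℝ) ≤ C * (N : ℝ) ^ ε := by
  obtain ⟨C, hC, hdiv⟩ := exists_card_divisors_le (half_pos hε)
  refine ⟨2 * C, by positivity, fun N b ↦ ?_⟩
  set s := {p ∈ unitFractions N ×ˢ unitFractions N | p.1 * p.2 = b} with hs
  have mem_s : ∀ p ∈ s, p.1 ∈ unitFractions N ∧ p.2 ∈ unitFractions N ∧ p.1 * p.2 = b := by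
    intro p hp
    simpa only [hs, mem_filter, mem_product, and_assoc] using hp
  rcases s.eq_empty_or_nonempty with hempty | ⟨p₀, hp₀⟩
  · rw [hempty, card_empty, Nat.cast_zero]
    positivity
  have hden : b.den ≤ N ^ 2 := by
    obtain ⟨h₁, h₂, rfl⟩ := mem_s p₀ hp₀
    rw [sq]
    exact (mem_unitFractions.1 (mul_mem_unitFractions h₁ h₂)).2
  have card_s : #s ≤ #{q ∈ unitFractions N | q.den ∣ b.den} := by
    refine card_le_card_of_injOn Prod.fst (fun p hp ↦ ?_) fun p hp p' hp' h ↦ ?_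
    · obtain ⟨h₁, h₂, rfl⟩ := mem_s p hp
      exact mem_filter.2 ⟨h₁, (num_and_den_mul h₁ h₂).2 ▸ dvd_mul_right _ _⟩
    · obtain ⟨h₁, -, hb⟩ := mem_s p hp
      obtain ⟨-, -, hb'⟩ := mem_s p' hp'
      rw [← h] at hb'
      exact Prod.ext h (mul_left_cancel₀ (ne_zero_of_mem_unitFractions h₁) (hb.trans hb'.symm))
  have card_dvd : #{d ∈ Icc 1 N | d ∣ b.den} ≤ #b.den.divisors :=
    card_le_card fun d hd ↦ Nat.mem_divisors.2 ⟨(mem_filter.1 hd).2, b.den_ne_zero⟩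
  calc (#s : ℝ) ≤ 2 * #b.den.divisors := by
        exact_mod_cast card_s.trans ((card_filter_unitFractions_le (· ∣ b.den)).trans
          (Nat.mul_le_mul_left 2 card_dvd))
    _ ≤ 2 * (C * ((N : ℝ) ^ 2) ^ (ε / 2)) := by
        gcongr
        refine (hdiv b.den).trans ?_
        gcongr
        exact_mod_cast hden
    _ = 2 * C * (N : ℝ) ^ ε := by
        rw [← Real.rpow_natCast_mul N.cast_nonneg, mul_assoc, Nat.cast_two,
          mul_div_cancel₀ ε two_ne_zero]

/-- The two products in the Leibniz expansion of a `2 × 2` determinant. -/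
def diagonalProducts (A : Matrix (Fin 2) (Fin 2) ℚ) : Fin 2 → ℚ :=
  ![A 0 0 * A 1 1, A 0 1 * A 1 0]

lemma diagonalProducts_mem_solutions {A : Matrix (Fin 2) (Fin 2) ℚ} {δ : ℚ}
    (hA : A ∈ unitFractionMatrices (Fin 2) N δ) :
    diagonalProducts A ∈ solutions (N * N) ![1, -1] δ := by
  obtain ⟨hentries, rfl⟩ := mem_unitFractionMatrices.1 hA
  refine mem_solutions.2 ⟨fun i ↦ ?_, ?_⟩
  · fin_cases i
    · exact mul_mem_unitFractions (hentries 0 0) (hentries 1 1)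
    · exact mul_mem_unitFractions (hentries 0 1) (hentries 1 0)
  · rw [det_fin_two, diagonalProducts, vec2_dotProduct']
    ring

lemma card_filter_diagonalProducts_le {δ : ℚ} (y : Fin 2 → ℚ) :
    #{A ∈ unitFractionMatrices (Fin 2) N δ | diagonalProducts A = y} ≤
      #{p ∈ unitFractions N ×ˢ unitFractions N | p.1 * p.2 = y 0} *
      #{p ∈ unitFractions N ×ˢ unitFractions N | p.1 * p.2 = y 1} := by
  rw [← card_product]
  refine card_le_card_of_injOn (fun A ↦ ((A 0 0, A 1 1), (A 0 1, A 1 0))) (fun A hA ↦ ?_)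
    fun A _ B _ h ↦ ?_
  · obtain ⟨hA, hy⟩ := mem_filter.1 hA
    have hentries := (mem_unitFractionMatrices.1 hA).1
    have h₀ : A 0 0 * A 1 1 = y 0 := congrFun hy 0
    have h₁ : A 0 1 * A 1 0 = y 1 := congrFun hy 1
    simp only [coe_product, coe_filter, Set.mem_prod, Set.mem_ofPred_eq, mem_product]
    exact ⟨⟨⟨hentries 0 0, hentries 1 1⟩, h₀⟩, ⟨hentries 0 1, hentries 1 0⟩, h₁⟩
  · simp only [Prod.mk.injEq] at h
    ext i j
    fin_cases i <;> fin_cases j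
    exacts [h.1.1, h.2.1, h.2.2, h.1.2]

theorem exists_card_unitFractionMatrices_fin_two_le {ε : ℝ} (hε : 0 < ε) :
    ∃ C ≥ 0, ∀ N : ℕ, 2 ≤ N → ∀ δ ≠ 0,
      (#(unitFractionMatrices (Fin 2) N δ) : ℝ) ≤ C * (N : ℝ) ^ ε := by
  obtain ⟨m, hm⟩ := exists_heightLE_cofactorRow (Fin 2)
  obtain ⟨C₁, hC₁, hsol⟩ := exists_card_solutions_le_of_card_eq_two (Fin 2) (Fintype.card_fin 2)
    (show 0 < ε / 4 by positivity) m
  obtain ⟨C₂, hC₂, hmul⟩ := exists_card_filter_mul_eq_le (show 0 < ε / 4 by positivity)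
  refine ⟨C₁ * (C₂ * C₂), by positivity, fun N hN δ hδ ↦ ?_⟩
  rcases (unitFractionMatrices (Fin 2) N δ).eq_empty_or_nonempty with hempty | ⟨A₀, hA₀⟩
  · rw [hempty, card_empty, Nat.cast_zero]
    positivity
  have hN1 : (1 : ℝ) ≤ N := mod_cast one_le_two.trans hN
  have hNN : (N : ℝ) ^ m ≤ ((N * N : ℕ) : ℝ) ^ m := by
    gcongr
    exact Nat.le_mul_self N
  have hheight : HeightLE ![1, -1] δ (((N * N : ℕ) : ℝ) ^ m) := by
    obtain ⟨hentries, rfl⟩ := mem_unitFractionMatrices.1 hA₀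
    refine ⟨fun i ↦ ?_, (hm N hN A₀ hentries 0).2.trans hNN⟩
    refine le_trans (le_of_eq ?_) ((one_le_pow₀ hN1).trans hNN)
    fin_cases i <;> simp
  calc (#(unitFractionMatrices (Fin 2) N δ) : ℝ)
      ≤ #(solutions (N * N) ![1, -1] δ) *
          ((C₂ * (N : ℝ) ^ (ε / 4)) * (C₂ * (N : ℝ) ^ (ε / 4))) := by
        refine card_le_card_mul_of_card_fiber_le (fun A hA ↦ diagonalProducts_mem_solutions hA)
          fun y _ ↦ (Nat.cast_le.2 (card_filter_diagonalProducts_le y)).trans ?_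
        rw [Nat.cast_mul]
        gcongr <;> exact hmul N _
    _ ≤ (C₁ * ((N * N : ℕ) : ℝ) ^ (ε / 4)) *
          ((C₂ * (N : ℝ) ^ (ε / 4)) * (C₂ * (N : ℝ) ^ (ε / 4))) := by
        gcongr
        exact hsol (N * N) (Nat.mul_pos (by lia) (by lia)) _ δ (by simp [Fin.forall_fin_two]) hδ
          hheight
    _ = C₁ * (C₂ * C₂) * (N : ℝ) ^ (ε / 4 + ε / 4 + (ε / 4 + ε / 4)) := by
        have hN0 : (0 : ℝ) < N := by positivity
        rw [Nat.cast_mul, Real.mul_rpow hN0.le hN0.le]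
        simp only [Real.rpow_add hN0]
        ring
    _ = C₁ * (C₂ * C₂) * (N : ℝ) ^ ε := by
        congr 2
        ring

end TwoByTwo

lemma exists_ncard_le (ι : Type*) [Fintype ι] [DecidableEq ι] {e : ℝ} (he : 0 ≤ e)
    (h : ∃ C ≥ 0, ∀ N : ℕ, 2 ≤ N → ∀ δ ≠ 0,
      (#(unitFractionMatrices ι N δ) : ℝ) ≤ C * (N : ℝ) ^ e) :
    ∃ C : ℝ, ∀ H ≥ 2, ∀ δ : ℚ, δ ≠ 0 →
      (Set.ncard {A : Matrix ι ι ℚ | (∀ i j, A i j ∈ Egyptian H) ∧ A.det = δ} : ℝ) ≤ C * H ^ e := by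
  obtain ⟨C, hC, hcard⟩ := h
  refine ⟨C, fun H hH δ hδ ↦ ?_⟩
  have hH0 : 0 ≤ H := by linarith
  have hset : {A : Matrix ι ι ℚ | (∀ i j, A i j ∈ Egyptian H) ∧ A.det = δ} =
      unitFractionMatrices ι ⌊H⌋₊ δ := by
    ext A
    simp only [mem_coe, mem_unitFractionMatrices, mem_unitFractions_floor hH0, Set.mem_ofPred_eq]
  rw [hset, Set.ncard_coe_finset]
  refine (hcard ⌊H⌋₊ (Nat.le_floor (mod_cast hH)) δ hδ).trans ?_
  gcongr
  exact Nat.floor_le hH0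
end Counting

end Egyptian

theorem stmt12 (n : ℕ) (hn : n ≥ 2) :
    ∀ ε > (0 : ℝ), ∃ C : ℝ, ∀ H : ℝ, H ≥ 2 → ∀ δ : ℚ, δ ≠ 0 →
      (n = 2 →
        (Set.ncard {A : Matrix (Fin n) (Fin n) ℚ |
            (∀ i j, A i j ∈ Egyptian H) ∧ A.det = δ} : ℝ) ≤ C * H ^ ε) ∧
      (n = 3 →
        (Set.ncard {A : Matrix (Fin n) (Fin n) ℚ |
            (∀ i j, A i j ∈ Egyptian H) ∧ A.det = δ} : ℝ) ≤ C * H ^ ((7 : ℝ) + ε)) ∧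
      (n ≥ 4 →
        (Set.ncard {A : Matrix (Fin n) (Fin n) ℚ |
            (∀ i j, A i j ∈ Egyptian H) ∧ A.det = δ} : ℝ) ≤
          C * H ^ ((n ^ 2 : ℝ) - n / 2 - 1 / (2 * n - 2) + ε)) := by
  intro ε hε
  obtain rfl | rfl | hn4 : n = 2 ∨ n = 3 ∨ 4 ≤ n := by lia
  · have hcard := Egyptian.exists_card_unitFractionMatrices_fin_two_le hε
    obtain ⟨C, hC⟩ := Egyptian.exists_ncard_le (Fin 2) hε.le hcard
    exact ⟨C, fun H hH δ hδ ↦ ⟨fun _ ↦ hC H hH δ hδ, by lia, by lia⟩⟩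
  · have hcard := Egyptian.exists_card_unitFractionMatrices_le_of_card_eq_three (Fin 3)
      (Fintype.card_fin 3) hε
    obtain ⟨C, hC⟩ := Egyptian.exists_ncard_le (Fin 3) (by positivity) hcard
    exact ⟨C, fun H hH δ hδ ↦ ⟨by lia, fun _ ↦ hC H hH δ hδ, by lia⟩⟩
  · have hcard := Egyptian.exists_card_unitFractionMatrices_le_of_four_le_card (Fin n)
      (hn4.trans_eq (Fintype.card_fin n).symm) hε
    rw [Fintype.card_fin] at hcard
    have hn4' : (4 : ℝ) ≤ n := mod_cast hn4
    have hle : 1 / (2 * (n : ℝ) - 2) ≤ 1 := (div_le_one (by linarith)).2 (by linarith)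
    obtain ⟨C, hC⟩ := Egyptian.exists_ncard_le (Fin n) (by nlinarith) hcard
    exact ⟨C, fun H hH δ hδ ↦ ⟨by lia, by lia, fun _ ↦ hC H hH δ hδ⟩⟩
end
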